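/- Let d ≥ 3 and θ₀ < θ < 1, where θ₀ = (d²+d−2)/(d²+d). There exist constants C_θ ≥ 1 and c_θ ∈ (0,1], depending only on d and θ, with the following property. Let η, δ, δ₁ ∈ (0,1], let E ⊆ ℝ^d be a measurable set of finite positive measure, and let g be a nonnegative function in L^{q_θ′}_t L^{r_θ′}_y for which there exist A > 0 and measurable T ⊆ ℝ with A/2 ≤ ∫_{ℝ^{d-1}} g(t,y)^{r_θ′} dy ≤ 2A for a.e. t ∈ T and ∫ g(t,y)^{r_θ′} dy = 0 for a.e. t ∉ T. With F_k = {z : 2^k ≤ g(z) < 2^{k+1}} and F_k^l = F_k ∩ {(t,y) : 2^l ≤ |{y′ : (t,y′) ∈ F_k}| < 2^{l+1}}, assume that for every k, l with |F_k^l| > 0: η·‖g‖_{L^{q_θ′}_t L^{r_θ′}_y}^{q_θ′} ≤ 2^{k q_θ′}·‖1_{F_k^l}‖_{L^{q_θ′}_t L^{r_θ′}_y}^{q_θ′} < 2η·‖g‖_{L^{q_θ′}_t L^{r_θ′}_y}^{q_θ′} and δ₁·|E|^{1/p_θ}·‖1_{F_k^l}‖_{L^{q_θ′}_t L^{r_θ′}_y}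 ≤ 𝒳(E, F_k^l) < 2δ₁·|E|^{1/p_θ}·‖1_{F_k^l}‖_{L^{q_θ′}_t L^{r_θ′}_y}. If 𝒳(E,g) ≥ δ·|E|^{1/p_θ}·‖g‖_{L^{q_θ′}_t L^{r_θ′}_y}, then 𝒳(E,g) ≤ C_θ·(ηδ₁)^{c_θ}·log(1+δ^{−C_θ})·|E|^{1/p_θ}·‖g‖_{L^{q_θ′}_t L^{r_θ′}_y}. -/

import Mathlib

open MeasureTheory ENNReal Set Filter
noncomputable section

/-- Points of `ℝ^d` written as `(s, x)` with `s ∈ ℝ`, `x ∈ ℝ^(d-1)` (here `n = d-1`). -/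
abbrev Pt (n : ℕ) := ℝ × (Fin n → ℝ)

/-- The moment curve `γ(t) = (t, t², …, t^n)` in `ℝ^n`. -/
def mom (n : ℕ) (t : ℝ) : Fin n → ℝ := fun i => t ^ (i.1 + 1)

/-- The restricted X-ray transform `Xf(t,y) = ∫ f(s, y + s·γ(t)) ds` of a
nonnegative function `f` on `ℝ^d`. -/
def Xray (n : ℕ) (f : Pt n → ℝ) (z : Pt n) : ℝ≥0∞ :=
  ∫⁻ s : ℝ, ENNReal.ofReal (f (s, z.2 + s • mom n z.1))

/-- Mixed norm `‖g‖_{L^q_t L^r_y}` for an `ℝ≥0∞`-valued function on `ℝ × Y`. -/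
def mixedNormG {Y : Type*} [MeasurableSpace Y] (ν : Measure Y) (q r : ℝ)
    (g : ℝ × Y → ℝ≥0∞) : ℝ≥0∞ :=
  (∫⁻ t : ℝ, (∫⁻ y, g (t, y) ^ r ∂ν) ^ (q / r)) ^ (1 / q)

/-- Mixed norm `‖g‖_{L^q_t L^r_y}` on `ℝ^d = ℝ × ℝ^(d-1)`, `ℝ≥0∞`-valued functions. -/
def mixedNorm (n : ℕ) (q r : ℝ) (g : Pt n → ℝ≥0∞) : ℝ≥0∞ :=
  mixedNormG volume q r g

/-- Mixed norm of a real-valued function. -/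
def mixedNormR (n : ℕ) (q r : ℝ) (g : Pt n → ℝ) : ℝ≥0∞ :=
  mixedNorm n q r fun z => ENNReal.ofReal |g z|

/-- The `L^p` norm of a real-valued function on `ℝ^d`. -/
def LpN (n : ℕ) (p : ℝ) (f : Pt n → ℝ) : ℝ≥0∞ :=
  (∫⁻ z : Pt n, ENNReal.ofReal |f z| ^ p) ^ (1 / p)

/-- The `L^p` norm restricted to a set. -/
def LpNOn (n : ℕ) (p : ℝ) (f : Pt n → ℝ) (S : Set (Pt n)) : ℝ≥0∞ :=
  (∫⁻ z in S, ENNReal.ofReal |f z| ^ p) ^ (1 / p)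

/-- `p_θ`, defined by `1/p_θ = 1 - θ + θd/(d+2)`. -/
def pExp (d : ℕ) (θ : ℝ) : ℝ := (1 - θ + θ * d / (d + 2))⁻¹

/-- `q_θ`, defined by `1/q_θ = θd/(d+2)`. -/
def qExp (d : ℕ) (θ : ℝ) : ℝ := (θ * d / (d + 2))⁻¹

/-- `r_θ`, defined by `1/r_θ = 1 - θ + θ(d²-d-2)/(d²+d-2)`. -/
def rExp (d : ℕ) (θ : ℝ) : ℝ :=
  (1 - θ + θ * ((d:ℝ)^2 - d - 2) / ((d:ℝ)^2 + d - 2))⁻¹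

/-- Dual exponent `p' = p/(p-1)`. -/
def dualExp (p : ℝ) : ℝ := p / (p - 1)

/-- `θ₀ = (d²+d-2)/(d²+d)`, the exponent where `q_θ = r_θ`. -/
def theta0 (d : ℕ) : ℝ := ((d:ℝ)^2 + d - 2) / ((d:ℝ)^2 + d)

/-- The mixed norm `‖Xf‖_{L^{q_θ}_t L^{r_θ}_y}`. -/
def XNorm (d : ℕ) (θ : ℝ) (f : Pt (d-1) → ℝ) : ℝ≥0∞ :=
  mixedNorm (d-1) (qExp d θ) (rExp d θ) (Xray (d-1) f)

/-- The source norm `‖f‖_{L^{p_θ}}`. -/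
def srcNorm (d : ℕ) (θ : ℝ) (f : Pt (d-1) → ℝ) : ℝ≥0∞ := LpN (d-1) (pExp d θ) f

/-- The dual mixed norm `‖g‖_{L^{q_θ'}_t L^{r_θ'}_y}`. -/
def dualNorm (d : ℕ) (θ : ℝ) (g : Pt (d-1) → ℝ) : ℝ≥0∞ :=
  mixedNormR (d-1) (dualExp (qExp d θ)) (dualExp (rExp d θ)) g

/-- The operator norm `A_θ` of `X : L^{p_θ} → L^{q_θ}_t L^{r_θ}_y` (restricted to
nonnegative functions). -/
def Aconst (d : ℕ) (θ : ℝ) : ℝ≥0∞ :=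
  sSup { M | ∃ f : Pt (d-1) → ℝ, Measurable f ∧ 0 ≤ f ∧
    srcNorm d θ f = 1 ∧ M = XNorm d θ f }

/-- The bilinear pairing `𝒳(f,g) = ∫ Xf · g`. -/
def pairing (n : ℕ) (f g : Pt n → ℝ) : ℝ≥0∞ :=
  ∫⁻ z : Pt n, Xray n f z * ENNReal.ofReal (g z)

/-- Indicator function of a set, as a real-valued function. -/
def ind (n : ℕ) (E : Set (Pt n)) : Pt n → ℝ := E.indicator fun _ => (1:ℝ)

/-- `𝒳(E,F) = ∫ X1_E · 1_F`. -/
def pairSet (n : ℕ) (E F : Set (Pt n)) : ℝ≥0∞ := pairing n (ind n E) (ind n F)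

/-- Dyadic level set `E_j = {z : 2^j ≤ f(z) < 2^(j+1)}`. -/
def lev (n : ℕ) (f : Pt n → ℝ) (j : ℤ) : Set (Pt n) :=
  {z | (2:ℝ) ^ j ≤ f z ∧ f z < (2:ℝ) ^ (j + 1)}

/-- The measure of the slice `{y : (t,y) ∈ F}`. -/
def sliceVol (n : ℕ) (F : Set (Pt n)) (t : ℝ) : ℝ≥0∞ :=
  volume {y : Fin n → ℝ | (t, y) ∈ F}

/-- `F_k^l = F_k ∩ π⁻¹{t : 2^l ≤ |{y : (t,y) ∈ F_k}| < 2^(l+1)}` where `F_k` is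
the `k`-th level set of `g`. -/
def Fkl (n : ℕ) (g : Pt n → ℝ) (k l : ℤ) : Set (Pt n) :=
  lev n g k ∩ {z | (2:ℝ≥0∞) ^ l ≤ sliceVol n (lev n g k) z.1 ∧
    sliceVol n (lev n g k) z.1 < (2:ℝ≥0∞) ^ (l + 1)}

/-- `F_{kl}^m`: the `k`-th level set of `g`, restricted to `t` with
`2^l ≤ ∫ g(t,y)^{r'} dy < 2^(l+1)` and `2^m ≤ |{y : (t,y) ∈ F_k}| < 2^(m+1)`. -/
def Fklm (n : ℕ) (r' : ℝ) (g : Pt n → ℝ) (k l m : ℤ) : Set (Pt n) :=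
  lev n g k ∩
  {z | (2:ℝ≥0∞) ^ l ≤ (∫⁻ y, ENNReal.ofReal (g (z.1, y)) ^ r') ∧
    (∫⁻ y, ENNReal.ofReal (g (z.1, y)) ^ r') < (2:ℝ≥0∞) ^ (l + 1)} ∩
  {z | (2:ℝ≥0∞) ^ m ≤ sliceVol n (lev n g k) z.1 ∧
    sliceVol n (lev n g k) z.1 < (2:ℝ≥0∞) ^ (m + 1)}

/-- The lower-triangular matrix `G_{t₀}` with entries `C(m,i)·t₀^(m-i)`, acting on `ℝ^(d-1)`. -/
def Gmat (n : ℕ) (t₀ : ℝ) (x : Fin n → ℝ) : Fin n → ℝ := fun m =>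
  ∑ i ∈ Finset.univ.filter (fun i : Fin n => i ≤ m),
    ((Nat.choose (m.1+1) (i.1+1)) : ℝ) * t₀ ^ (m.1 - i.1) * x i

/-- The symmetry group `G_d` of the restricted X-ray transform, with the (constant)
Jacobian determinant carried along: `IsSymJ n φ J` means `φ ∈ G_d` with Jacobian `J`. -/
inductive IsSymJ (n : ℕ) : (Pt n → Pt n) → ℝ → Prop
  | translation (v : Fin n → ℝ) : IsSymJ n (fun p => (p.1, p.2 + v)) 1
  | scaling (α β : ℝ) (hα : 0 < α) (hβ : 0 < β) :
      IsSymJ n (fun p => (α * p.1, fun i => α * β ^ (i.1 + 1) * p.2 i))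
        (α ^ (n+1) * β ^ (n * (n+1) / 2))
  | shift (s₀ t₀ : ℝ) :
      IsSymJ n (fun p => (p.1 + s₀, Gmat n t₀ p.2 + (p.1 + s₀) • mom n t₀)) 1
  | comp (φ ψ : Pt n → Pt n) (J₁ J₂ : ℝ) :
      IsSymJ n φ J₁ → IsSymJ n ψ J₂ → IsSymJ n (φ ∘ ψ) (J₁ * J₂)

/-- The `L^p`-normalized action `φ*f = J^(1/p) · (f ∘ φ)` of a symmetry on functions. -/
def symAct (n : ℕ) (p : ℝ) (J : ℝ) (φ : Pt n → Pt n) (f : Pt n → ℝ) : Pt n → ℝ :=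
  fun z => J ^ (1/p) * f (φ z)

/-- Lorentz norm `‖h‖_{L^{p,s}}` (up to equivalence), via dyadic level sets. -/
def lorentzNorm {α : Type*} [MeasurableSpace α] (μ : Measure α) (p s : ℝ)
    (h : α → ℝ≥0∞) : ℝ≥0∞ :=
  (∑' j : ℤ, ((2:ℝ≥0∞) ^ j *
      μ {z | (2:ℝ≥0∞) ^ j ≤ h z ∧ h z < (2:ℝ≥0∞) ^ (j+1)} ^ (1/p)) ^ s) ^ (1/s)

/-- Weak `L^{p,∞}` norm. -/
def weakNorm {α : Type*} [MeasurableSpace α] (μ : Measure α) (p : ℝ)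
    (h : α → ℝ≥0∞) : ℝ≥0∞ :=
  ⨆ l : ℝ≥0∞, l * μ {z | l < h z} ^ (1/p)

/-- Mixed Lorentz norm `‖g‖_{L^{q,s}_t L^r_y}` (up to equivalence). -/
def mixedLorentzG {Y : Type*} [MeasurableSpace Y] (ν : Measure Y) (q s r : ℝ)
    (g : ℝ × Y → ℝ≥0∞) : ℝ≥0∞ :=
  (∑' l : ℤ, (mixedNormG ν q r
      (Set.indicator {z : ℝ × Y | (2:ℝ≥0∞) ^ l ≤ (∫⁻ y, g (z.1, y) ^ r ∂ν) ∧
        (∫⁻ y, g (z.1, y) ^ r ∂ν) < (2:ℝ≥0∞) ^ (l+1)} g)) ^ s) ^ (1/s)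

/-- Weak mixed norm `‖g‖_{L^{q,∞}_t L^r_y}`. -/
def weakMixedG {Y : Type*} [MeasurableSpace Y] (ν : Measure Y) (q r : ℝ)
    (g : ℝ × Y → ℝ≥0∞) : ℝ≥0∞ :=
  ⨆ l : ℝ≥0∞, l * (volume {t : ℝ | l < (∫⁻ y, g (t, y) ^ r ∂ν) ^ (1/r)}) ^ (1/q)

/-- The paraball `B(s₀,t₀,ȳ,α,β)`. -/
def paraball (n : ℕ) (s₀ t₀ : ℝ) (ybar : Fin n → ℝ) (α β : ℝ) : Set (Pt n) :=
  {z | |z.1 - s₀| < α ∧ ∀ m : Fin n,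
    |(∑ i ∈ Finset.univ.filter (fun i : Fin n => i ≤ m),
        ((Nat.choose (m.1+1) (i.1+1)) : ℝ) * (-t₀) ^ (m.1 - i.1) *
          (z.2 i - (ybar + s₀ • mom n t₀) i))
      + (-t₀) ^ (m.1+1) * (z.1 + s₀)| ≤ β ^ (m.1+1) * α}

/-- The dual paraball `B*(s₀,t₀,ȳ,α,β)`. -/
def dualParaball (n : ℕ) (s₀ t₀ : ℝ) (ybar : Fin n → ℝ) (α β : ℝ) : Set (Pt n) :=
  {z | |z.1 - t₀| < β ∧ ∀ m : Fin n,
    |(∑ i ∈ Finset.univ.filter (fun i : Fin n => i ≤ m),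
        ((Nat.choose (m.1+1) (i.1+1)) : ℝ) * (-t₀) ^ (m.1 - i.1) * (z.2 i - ybar i))
      + s₀ * (z.1 ^ (m.1+1) + (-t₀) ^ (m.1+1))| ≤ β ^ (m.1+1) * α}

/-- The mock-distance between two paraballs. -/
def mockDist (n : ℕ) (sa ta : ℝ) (ya : Fin n → ℝ) (aa ba : ℝ)
    (sb tb : ℝ) (yb : Fin n → ℝ) (ab bb : ℝ) : ℝ :=
  (max (aa ^ n * ba ^ (n * (n+1) / 2)) (ab ^ n * bb ^ (n * (n+1) / 2)) /
    min (aa ^ n * ba ^ (n * (n+1) / 2)) (ab ^ n * bb ^ (n * (n+1) / 2)))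
  + (aa / ab + ab / aa) + (ba / bb + bb / ba)
  + |sa - sb| * (1/aa + 1/ab) + |ta - tb| * (1/ba + 1/bb)
  + ∑ m : Fin n,
      |(∑ i ∈ Finset.univ.filter (fun i : Fin n => i ≤ m),
          ((Nat.choose (m.1+1) (i.1+1)) : ℝ) * (-ta) ^ (m.1 - i.1) *
            ((yb + sb • mom n tb) i - (ya + sa • mom n ta) i))
        + (-ta) ^ (m.1+1) * (sb + sa)| / (aa * ba ^ (m.1+1))
  + ∑ m : Fin n,
      |(∑ i ∈ Finset.univ.filter (fun i : Fin n => i ≤ m),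
          ((Nat.choose (m.1+1) (i.1+1)) : ℝ) * (-tb) ^ (m.1 - i.1) *
            ((ya + sa • mom n ta) i - (yb + sb • mom n tb) i))
        + (-tb) ^ (m.1+1) * (sa + sb)| / (ab * bb ^ (m.1+1))
  + ∑ m : Fin n,
      |(∑ i ∈ Finset.univ.filter (fun i : Fin n => i ≤ m),
          ((Nat.choose (m.1+1) (i.1+1)) : ℝ) * (-sa) ^ (m.1 - i.1) * (yb i - ya i))
        + sa * (tb ^ (m.1+1) + (-ta) ^ (m.1+1))| / (aa * ba ^ (m.1+1))
  + ∑ m : Fin n,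
      |(∑ i ∈ Finset.univ.filter (fun i : Fin n => i ≤ m),
          ((Nat.choose (m.1+1) (i.1+1)) : ℝ) * (-sb) ^ (m.1 - i.1) * (ya i - yb i))
        + sb * (ta ^ (m.1+1) + (-tb) ^ (m.1+1))| / (ab * bb ^ (m.1+1))


lemma det_functional {n : ℕ} (lam : Fin n → (Polynomial ℝ →ₗ[ℝ] ℝ)) (p : Fin n → Polynomial ℝ)
    (h0 : ∀ i, lam i 1 = 0) (hm : ∀ k, (p k).Monic) (hdeg : ∀ k, (p k).natDegree = k.1 + 1)
    (hz : ∀ i k : Fin n, i < k → lam i (p k) = 0) :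
    (Matrix.of fun (κ i : Fin n) => lam i (Polynomial.X ^ (κ.1 + 1))).det = ∏ i, lam i (p i) := by
  set Lm : Matrix (Fin n) (Fin n) ℝ :=
    Matrix.of fun (κ i : Fin n) => lam i (Polynomial.X ^ (κ.1 + 1)) with hLm
  set P : Matrix (Fin n) (Fin n) ℝ := Matrix.of fun (k κ : Fin n) => (p k).coeff (κ.1 + 1) with hP
  have hexp : ∀ i k, lam i (p k) = ∑ κ : Fin n, (p k).coeff (κ.1+1) * lam i (Polynomial.X ^ (κ.1+1)) := by
    intro i k
    have h1 : p k = ∑ j ∈ Finset.range (n+1), Polynomial.C ((p k).coeff j) * Polynomial.X ^ j :=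
      Polynomial.as_sum_range_C_mul_X_pow' _ (by rw [hdeg]; omega)
    conv_lhs => rw [h1]
    rw [Finset.sum_range_succ']
    rw [map_add, map_sum]
    have : lam i (Polynomial.C ((p k).coeff 0) * Polynomial.X ^ 0) = 0 := by
      rw [pow_zero, ← Polynomial.smul_eq_C_mul, map_smul, h0]; simp
    rw [this, add_zero, Finset.sum_range]
    refine Finset.sum_congr rfl fun κ _ => ?_
    rw [← Polynomial.smul_eq_C_mul, map_smul, smul_eq_mul]
  have hPL : P * Lm = Matrix.of fun k i => lam i (p k) := by
    ext k i
    rw [Matrix.mul_apply]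
    simp only [hP, hLm, Matrix.of_apply]
    rw [hexp]
  have hdetP : P.det = 1 := by
    rw [Matrix.det_of_isLowerTriangular P]
    · refine Finset.prod_eq_one fun k _ => ?_
      have := (hm k).coeff_natDegree
      rw [hdeg] at this
      simpa [hP] using this
    · intro k κ hlt
      simp only [hP, Matrix.of_apply]
      apply Polynomial.coeff_eq_zero_of_natDegree_lt
      rw [hdeg]
      have : k < κ := by simpa using hlt
      have : k.1 < κ.1 := this
      omega
  have h2 : (P * Lm).det = ∏ i, lam i (p i) := by
    rw [hPL, Matrix.det_of_isUpperTriangular]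
    · simp
    · intro k i hlt
      simp only [Matrix.of_apply]
      exact hz i k hlt
  rw [Matrix.det_mul, hdetP, one_mul] at h2
  exact h2

/-- node sequence -/
def nodeV (t : ℝ) (V : ℕ → ℝ) (i : ℕ) : ℝ :=
  if i = 0 then t else if Even i then V (i-1) else V i

def lamV (t : ℝ) (V : ℕ → ℝ) (i : ℕ) : Polynomial ℝ →ₗ[ℝ] ℝ :=
  if Even i then Polynomial.leval (V (i+1)) - Polynomial.leval (nodeV t V i)
  else (Polynomial.leval (V i)).comp Polynomial.derivative

def newtonV (t : ℝ) (V : ℕ → ℝ) (k : ℕ) : Polynomial ℝ :=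
  ∏ l ∈ Finset.range k, (Polynomial.X - Polynomial.C (nodeV t V l))

def jacM (n : ℕ) (t : ℝ) (V : ℕ → ℝ) : Matrix (Fin n) (Fin n) ℝ :=
  Matrix.of fun κ i => if Even i.1 then V (i.1+1) ^ (κ.1+1) - nodeV t V i.1 ^ (κ.1+1)
    else (V (i.1-1) - V (i.1+1)) * ((κ.1+1) * V i.1 ^ κ.1)

lemma newton_eval_zero (t : ℝ) (V : ℕ → ℝ) (k l : ℕ) (h : l < k) :
    (newtonV t V k).eval (nodeV t V l) = 0 := by
  rw [newtonV, Polynomial.eval_prod]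
  exact Finset.prod_eq_zero (Finset.mem_range.2 h) (by simp)

lemma node_odd (t : ℝ) (V : ℕ → ℝ) (i : ℕ) (h : ¬ Even i) : nodeV t V i = V i := by
  have : i ≠ 0 := by rintro rfl; simp at h
  simp [nodeV, this, h]

lemma node_odd_succ (t : ℝ) (V : ℕ → ℝ) (i : ℕ) (h : ¬ Even i) : nodeV t V (i+1) = V i := by
  have : Even (i+1) := by rw [Nat.even_add_one]; exact h
  simp [nodeV, this]

lemma newton_deriv (t : ℝ) (V : ℕ → ℝ) (k : ℕ) :
    (Polynomial.derivative (newtonV t V (k+1))).eval (nodeV t V k)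
      = ∏ l ∈ Finset.range k, (nodeV t V k - nodeV t V l) := by
  rw [newtonV, Finset.prod_range_succ, Polynomial.derivative_mul]
  simp [Polynomial.eval_prod]

/-- diagonal value -/
def diagV (t : ℝ) (V : ℕ → ℝ) (i : ℕ) : ℝ :=
  if Even i then ∏ l ∈ Finset.range (i+1), (V (i+1) - nodeV t V l)
  else ∏ l ∈ Finset.range i, (V i - nodeV t V l)

lemma det_jacM (n : ℕ) (t : ℝ) (V : ℕ → ℝ) :
    (jacM n t V).det = (∏ i : Fin n, if Even i.1 then 1 else (V (i.1-1) - V (i.1+1))) *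
      ∏ i : Fin n, diagV t V i.1 := by
  have h1 := det_functional (n := n) (fun i => lamV t V i.1) (fun k => newtonV t V (k.1+1))
    (by
      intro i; dsimp only [lamV]; split_ifs <;> simp [Polynomial.leval])
    (by intro k; exact Polynomial.monic_prod_of_monic _ _ fun l _ => Polynomial.monic_X_sub_C _)
    (by
      intro k
      rw [newtonV, Polynomial.natDegree_prod_of_monic _ _ fun l _ => Polynomial.monic_X_sub_C _]
      simp)
    (by
      intro i k hik
      have hik : i.1 < k.1 := hik
      dsimp only [lamV]; split_ifs with h
      · have ho : ¬ Even (i.1+1) := by rw [Nat.even_add_one]; simpa using h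
        simp only [LinearMap.sub_apply, Polynomial.leval_apply]
        rw [← node_odd t V _ ho, newton_eval_zero _ _ _ _ (by omega),
          newton_eval_zero _ _ _ _ (by omega)]; simp
      · simp only [LinearMap.comp_apply, Polynomial.leval_apply]
        have : newtonV t V (k.1+1) = (∏ l ∈ Finset.range i.1, (Polynomial.X - Polynomial.C (nodeV t V l)))
            * (Polynomial.X - Polynomial.C (V i.1))^2 *
            (∏ l ∈ Finset.Ico (i.1+2) (k.1+1), (Polynomial.X - Polynomial.C (nodeV t V l))) := by
          rw [newtonV, ← Finset.prod_range_mul_prod_Ico _ (show i.1+2 ≤ k.1+1 by omega),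
            Finset.prod_range_succ, Finset.prod_range_succ, node_odd _ _ _ h, node_odd_succ _ _ _ h]
          ring
        rw [this]
        simp [Polynomial.derivative_mul, Polynomial.derivative_pow])
  have h2 : jacM n t V = Matrix.of fun κ i : Fin n => (if Even i.1 then 1 else (V (i.1-1) - V (i.1+1))) *
      (Matrix.of fun (κ i : Fin n) => lamV t V i.1 (Polynomial.X ^ (κ.1 + 1))) κ i := by
    ext κ i
    simp only [jacM, Matrix.of_apply, lamV]
    split_ifs with h
    · simp
    · simp
  rw [h2, Matrix.det_mul_row, h1]
  congr 1
  refine Finset.prod_congr rfl fun i _ => ?_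
  dsimp only [lamV, diagV]
  split_ifs with h
  · have ho : ¬ Even (i.1+1) := by rw [Nat.even_add_one]; simpa using h
    simp only [LinearMap.sub_apply, Polynomial.leval_apply]
    rw [newton_eval_zero _ _ _ _ (by omega), newtonV, Polynomial.eval_prod]
    simp
  · simp only [LinearMap.comp_apply, Polynomial.leval_apply]
    conv_lhs => rw [← node_odd t V _ h]
    rw [newton_deriv, node_odd _ _ _ h]


lemma prony_core (n : ℕ) (S : Finset ℝ) (w : ℝ → ℝ) (hS : S.card ≤ n + 1)
    (h : ∀ p : Polynomial ℝ, p.natDegree ≤ n → ∑ x ∈ S, w x * p.eval x = 0) :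
    ∀ x ∈ S, w x = 0 := by
  intro x hx
  have h1 := h (∏ y ∈ S.erase x, (Polynomial.X - Polynomial.C y)) (by
    rw [Polynomial.natDegree_prod_of_monic _ _ fun l _ => Polynomial.monic_X_sub_C _]
    simp [Finset.card_erase_of_mem hx]; omega)
  rw [Finset.sum_eq_single x] at h1
  · rcases mul_eq_zero.1 h1 with h | h
    · exact h
    · exfalso
      rw [Polynomial.eval_prod, Finset.prod_eq_zero_iff] at h
      obtain ⟨y, hy, hy2⟩ := h
      simp at hy2 hy
      exact hy.1 (by linarith)
  · intro y hy hyx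
    rw [Polynomial.eval_prod, Finset.prod_eq_zero (i := y)]
    · simp
    · simp [hyx, hy]
    · simp
  · intro h; exact absurd hx h

lemma prony {m n : ℕ} (Q : Finset ℝ) (T T' c c' : Fin m → ℝ) (e e' : ℝ → ℝ)
    (hcard : 2 * m + Q.card ≤ n + 1)
    (h : ∀ p : Polynomial ℝ, p.natDegree ≤ n →
      ∑ j, c j * p.eval (T j) + ∑ q ∈ Q, e q * p.eval q =
      ∑ j, c' j * p.eval (T' j) + ∑ q ∈ Q, e' q * p.eval q) :
    ∀ x, (∑ j, if T j = x then c j else 0) + (if x ∈ Q then e x else 0) =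
      (∑ j, if T' j = x then c' j else 0) + (if x ∈ Q then e' x else 0) := by
  classical
  set S : Finset ℝ := Finset.univ.image T ∪ Finset.univ.image T' ∪ Q with hS
  have hSc : S.card ≤ n + 1 := by
    refine le_trans (Finset.card_union_le _ _) ?_
    have h1 := Finset.card_union_le (Finset.univ.image T) (Finset.univ.image T')
    have h2 : (Finset.univ.image T).card ≤ m := by simpa using Finset.card_image_le (s := Finset.univ) (f := T)
    have h3 : (Finset.univ.image T').card ≤ m := by simpa using Finset.card_image_le (s := Finset.univ) (f := T')
    omega
  have hTS : ∀ j, T j ∈ S := fun j => by simp [hS]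
  have hTS' : ∀ j, T' j ∈ S := fun j => by simp [hS]
  have hQS : Q ⊆ S := by rw [hS]; exact Finset.subset_union_right
  have key : ∀ (T c : Fin m → ℝ) (e : ℝ → ℝ), (∀ j, T j ∈ S) → ∀ p : Polynomial ℝ,
      ∑ x ∈ S, ((∑ j, if T j = x then c j else 0) + (if x ∈ Q then e x else 0)) * p.eval x =
      ∑ j, c j * p.eval (T j) + ∑ q ∈ Q, e q * p.eval q := by
    intro T c e hT p
    simp only [add_mul, Finset.sum_add_distrib]
    congr 1
    · simp only [Finset.sum_mul]
      rw [Finset.sum_comm]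
      refine Finset.sum_congr rfl fun j _ => ?_
      rw [Finset.sum_eq_single (T j)]
      · simp
      · intro b _ hb; simp [Ne.symm hb]
      · intro hh; exact absurd (hT j) hh
    · simp only [ite_mul, zero_mul]
      rw [← Finset.sum_filter]
      congr 1
      ext x; simp; intro hx; exact hQS hx
  have hz := prony_core n S (fun x => ((∑ j, if T j = x then c j else 0) + (if x ∈ Q then e x else 0)) -
     ((∑ j, if T' j = x then c' j else 0) + (if x ∈ Q then e' x else 0))) hSc (by
      intro p hp
      simp only [sub_mul, Finset.sum_sub_distrib]
      rw [key T c e hTS, key T' c' e' hTS', h p hp, sub_self])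
  intro x
  by_cases hx : x ∈ S
  · exact sub_eq_zero.1 (hz x hx)
  · have h1 : ∀ j, T j ≠ x := fun j hj => hx (hj ▸ hTS j)
    have h2 : ∀ j, T' j ≠ x := fun j hj => hx (hj ▸ hTS' j)
    have h3 : x ∉ Q := fun hq => hx (hQS hq)
    simp [h1, h2, h3]

lemma prony_range {m n : ℕ} (Q : Finset ℝ) (T T' c c' : Fin m → ℝ) (e e' : ℝ → ℝ)
    (hcard : 2 * m + Q.card ≤ n + 1)
    (h : ∀ p : Polynomial ℝ, p.natDegree ≤ n →
      ∑ j, c j * p.eval (T j) + ∑ q ∈ Q, e q * p.eval q =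
      ∑ j, c' j * p.eval (T' j) + ∑ q ∈ Q, e' q * p.eval q)
    (hc : ∀ j, c j ≠ 0) (hT : ∀ j, T j ∉ Q) (hinj : Function.Injective T) :
    Set.range T ⊆ Set.range T' := by
  rintro _ ⟨i, rfl⟩
  by_contra hcon
  have h1 := prony Q T T' c c' e e' hcard h (T i)
  have h2 : ∀ j, T' j ≠ T i := fun j hj => hcon ⟨j, hj⟩
  simp [h2, hT, hinj.eq_iff, hc] at h1

lemma prony_sorted {m n : ℕ} (Q : Finset ℝ) (T T' c c' : Fin m → ℝ) (e e' : ℝ → ℝ)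
    (hcard : 2 * m + Q.card ≤ n + 1)
    (h : ∀ p : Polynomial ℝ, p.natDegree ≤ n →
      ∑ j, c j * p.eval (T j) + ∑ q ∈ Q, e q * p.eval q =
      ∑ j, c' j * p.eval (T' j) + ∑ q ∈ Q, e' q * p.eval q)
    (hc : ∀ j, c j ≠ 0) (hc' : ∀ j, c' j ≠ 0) (hT : ∀ j, T j ∉ Q) (hT' : ∀ j, T' j ∉ Q)
    (σ : Equiv.Perm (Fin m)) (hs : StrictMono (T ∘ σ)) (hs' : StrictMono (T' ∘ σ)) :
    T = T' ∧ c = c' ∧ ∀ q ∈ Q, e q = e' q := by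
  have hi : Function.Injective T := by
    have := hs.injective.comp σ.symm.injective
    simpa [Function.comp_assoc] using this
  have hi' : Function.Injective T' := by
    have := hs'.injective.comp σ.symm.injective
    simpa [Function.comp_assoc] using this
  have hr : Set.range T = Set.range T' :=
    Set.Subset.antisymm (prony_range Q T T' c c' e e' hcard h hc hT hi)
      (prony_range Q T' T c' c e' e hcard (fun p hp => (h p hp).symm) hc' hT' hi')
  have hTT : T = T' := by
    have h1 : T ∘ σ = T' ∘ σ := (StrictMono.range_inj hs hs').1 (by
      rw [EquivLike.range_comp, EquivLike.range_comp, hr])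
    funext j
    have := congrFun h1 (σ.symm j)
    simpa using this
  subst hTT
  have hp := prony Q T T c c' e e' hcard h
  refine ⟨rfl, ?_, ?_⟩
  · funext i
    have := hp (T i)
    simpa [hT, hi.eq_iff] using this
  · intro q hq
    have := hp q
    have h2 : ∀ j, T j ≠ q := fun j hj => hT j (hj ▸ hq)
    simpa [h2, hq] using this


/-- extension of the path parameters: even indices are `s`-type, odd are `t`-type -/
def extV (n : ℕ) (s0 t0 : ℝ) (v : Fin n → ℝ) (i : ℕ) : ℝ :=
  if h : i < n then v ⟨i, h⟩ else if Even i then s0 else t0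

def yl (n : ℕ) (y0 : Fin n → ℝ) (V : ℕ → ℝ) (k : ℕ) : Fin n → ℝ :=
  y0 + ∑ j ∈ Finset.Ico k n, if Even j then 0 else V (j+1) • (mom n (V (j+2)) - mom n (V j))

def Yf (n : ℕ) (y0 : Fin n → ℝ) (t : ℝ) (V : ℕ → ℝ) : Fin n → ℝ :=
  yl n y0 V 0 + V 0 • (mom n (V 1) - mom n t)

lemma Yf_apply (n : ℕ) (y0 : Fin n → ℝ) (t : ℝ) (V : ℕ → ℝ) (κ : Fin n) :
    Yf n y0 t V κ = y0 κ + (∑ j ∈ Finset.range n, if Even j then 0 else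
      V (j+1) * (V (j+2) ^ (κ.1+1) - V j ^ (κ.1+1))) + V 0 * (V 1 ^ (κ.1+1) - t ^ (κ.1+1)) := by
  simp only [Yf, yl, Pi.add_apply, Finset.sum_apply, mom, Pi.smul_apply, Pi.sub_apply, smul_eq_mul]
  congr 2
  rw [Nat.Ico_zero_eq_range]
  refine Finset.sum_congr rfl fun j _ => ?_
  split_ifs <;> simp [mom]

lemma abel1 (n : ℕ) (V a b W : ℕ → ℝ) (t' : ℝ) :
    (∑ j ∈ Finset.range n, if Even j then 0 else
      ((a (j+2) - a j) * W (j+1) + V (j+1) * (b (j+2) - b j))) + ((a 1 - t') * W 0 + V 0 * b 1)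
    = (∑ i ∈ Finset.range n, if Even i then (a (i+1) - (if i = 0 then t' else a (i-1))) * W i
        else (V (i-1) - V (i+1)) * b i) +
      (if Even n then (a (n+1) - (if n = 0 then t' else a (n-1))) * W n + V n * b (n+1)
        else V (n-1) * b n) := by
  induction n with
  | zero => simp
  | succ n ih =>
    rw [Finset.sum_range_succ, Finset.sum_range_succ]
    by_cases h : Even n
    · have h' : ¬ Even (n+1) := by rw [Nat.even_add_one]; simpa using h
      simp only [h, h', if_true, if_false] at ih ⊢
      simp only [Nat.add_sub_cancel]
      linarith
    · have h' : Even (n+1) := by rw [Nat.even_add_one]; simpa using h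
      simp only [h, h', if_true, if_false] at ih ⊢
      simp only [Nat.add_sub_cancel, Nat.add_one_ne_zero, if_false]
      linarith

lemma abel2 (n : ℕ) (V f : ℕ → ℝ) (ft : ℝ) :
    (∑ j ∈ Finset.range n, if Even j then 0 else V (j+1) * (f (j+2) - f j)) + V 0 * (f 1 - ft)
    = (∑ r ∈ Finset.range (n/2), (V (2*r) - V (2*r+2)) * f (2*r+1)) - V 0 * ft +
      (if Even n then V n * f (n+1) else V (n-1) * f n) := by
  induction n with
  | zero => simp; ring
  | succ n ih =>
    rw [Finset.sum_range_succ]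
    by_cases h : Even n
    · have h' : ¬ Even (n+1) := by rw [Nat.even_add_one]; simpa using h
      simp only [h, h', if_true, if_false] at ih ⊢
      have : (n+1)/2 = n/2 := by obtain ⟨r, rfl⟩ := h; omega
      rw [this]
      simp only [Nat.add_sub_cancel]
      linarith
    · have h' : Even (n+1) := by rw [Nat.even_add_one]; simpa using h
      simp only [h, h', if_true, if_false] at ih ⊢
      obtain ⟨r, hr⟩ := Nat.not_even_iff_odd.1 h
      have h2 : (n+1)/2 = n/2 + 1 := by omega
      have h3 : n/2 = r := by omega
      rw [h2, Finset.sum_range_succ, h3]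
      rw [h3] at ih
      subst hr
      simp only [Nat.add_sub_cancel] at ih ⊢
      linarith

lemma hasFDerivAt_Yf (n : ℕ) (y0 : Fin n → ℝ) (s0 t0 t : ℝ) (v : Fin n → ℝ) :
    HasFDerivAt (fun v => Yf n y0 t (extV n s0 t0 v))
      (LinearMap.toContinuousLinearMap (Matrix.toLin' (jacM n t (extV n s0 t0 v)))) v := by
  set V := extV n s0 t0 v with hV
  let D : ℕ → ((Fin n → ℝ) →L[ℝ] ℝ) := fun i =>
    if h : i < n then ContinuousLinearMap.proj (R := ℝ) (φ := fun _ : Fin n => ℝ) ⟨i, h⟩ else 0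
  have hD : ∀ i, HasFDerivAt (fun v => extV n s0 t0 v i) (D i) v := by
    intro i
    by_cases h : i < n
    · simp only [extV, D, h, dite_true]
      exact (ContinuousLinearMap.proj (R := ℝ) (φ := fun _ : Fin n => ℝ) ⟨i, h⟩).hasFDerivAt
    · simp only [extV, D, h, dite_false]
      exact hasFDerivAt_const _ _
  rw [hasFDerivAt_pi']
  intro κ
  have hp : ∀ i, HasFDerivAt (fun v => extV n s0 t0 v i ^ (κ.1+1)) ((((κ.1+1 : ℕ):ℝ) * V i ^ κ.1) • D i) v := by
    intro i
    have := (hD i).pow (κ.1+1)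
    simpa [hV] using this
  have hsum : HasFDerivAt (fun v => ∑ j ∈ Finset.range n, if Even j then 0 else
      extV n s0 t0 v (j+1) * (extV n s0 t0 v (j+2) ^ (κ.1+1) - extV n s0 t0 v j ^ (κ.1+1)))
      (∑ j ∈ Finset.range n, if Even j then 0 else
        (V (j+1) • (((((κ.1+1 : ℕ):ℝ) * V (j+2) ^ κ.1) • D (j+2)) - ((((κ.1+1 : ℕ):ℝ) * V j ^ κ.1) • D j))
          + (V (j+2) ^ (κ.1+1) - V j ^ (κ.1+1)) • D (j+1))) v := by
    apply HasFDerivAt.fun_sum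
    intro j _
    split_ifs
    · exact hasFDerivAt_const _ _
    · exact (hD (j+1)).mul ((hp (j+2)).sub (hp j))
  have h0 : HasFDerivAt (fun v => extV n s0 t0 v 0 * (extV n s0 t0 v 1 ^ (κ.1+1) - t ^ (κ.1+1)))
      (V 0 • ((((κ.1+1 : ℕ):ℝ) * V 1 ^ κ.1) • D 1) + (V 1 ^ (κ.1+1) - t ^ (κ.1+1)) • D 0) v :=
    (hD 0).mul ((hp 1).sub_const _)
  have htot := (hsum.const_add (y0 κ)).add h0
  have hfun : (fun v => Yf n y0 t (extV n s0 t0 v) κ) = _ := funext fun v => Yf_apply n y0 t (extV n s0 t0 v) κ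
  rw [hfun]
  refine htot.congr_fderiv ?_
  ext w
  set W : ℕ → ℝ := fun i => D i w with hW
  have hWn : ∀ i, n ≤ i → W i = 0 := by
    intro i hi; simp [hW, D, not_lt.2 hi]
  have hab := abel1 n V (fun i => V i ^ (κ.1+1)) (fun i => ((κ.1+1 : ℕ):ℝ) * V i ^ κ.1 * W i) W (t ^ (κ.1+1))
  have hb : (if Even n then ((fun i => V i ^ (κ.1+1)) (n+1) - (if n = 0 then t ^ (κ.1+1) else (fun i => V i ^ (κ.1+1)) (n-1))) * W n + V n * (fun i => ((κ.1+1 : ℕ):ℝ) * V i ^ κ.1 * W i) (n+1)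
        else V (n-1) * (fun i => ((κ.1+1 : ℕ):ℝ) * V i ^ κ.1 * W i) n) = 0 := by
    simp [hWn n le_rfl, hWn (n+1) (by omega)]
  rw [hb, add_zero] at hab
  have hl : ((∑ j ∈ Finset.range n, if Even j then (0:(Fin n → ℝ) →L[ℝ] ℝ) else
        (V (j+1) • (((((κ.1+1 : ℕ):ℝ) * V (j+2) ^ κ.1) • D (j+2)) - ((((κ.1+1 : ℕ):ℝ) * V j ^ κ.1) • D j))
          + (V (j+2) ^ (κ.1+1) - V j ^ (κ.1+1)) • D (j+1)))
       + (V 0 • ((((κ.1+1 : ℕ):ℝ) * V 1 ^ κ.1) • D 1) + (V 1 ^ (κ.1+1) - t ^ (κ.1+1)) • D 0)) w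
      = (∑ j ∈ Finset.range n, if Even j then 0 else
      ((V (j+2) ^ (κ.1+1) - V j ^ (κ.1+1)) * W (j+1) + V (j+1) * (((κ.1+1 : ℕ):ℝ) * V (j+2) ^ κ.1 * W (j+2) - ((κ.1+1 : ℕ):ℝ) * V j ^ κ.1 * W j))) + ((V 1 ^ (κ.1+1) - t ^ (κ.1+1)) * W 0 + V 0 * (((κ.1+1 : ℕ):ℝ) * V 1 ^ κ.1 * W 1)) := by
    rw [ContinuousLinearMap.add_apply, ContinuousLinearMap.sum_apply]
    congr 1
    · refine Finset.sum_congr rfl fun j _ => ?_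
      split_ifs
      · simp
      · simp [hW]; ring
    · simp [hW]; ring
  rw [hl, hab]
  rw [ContinuousLinearMap.comp_apply]
  simp only [ContinuousLinearMap.proj_apply, LinearMap.coe_toContinuousLinearMap', Matrix.toLin'_apply,
    Matrix.mulVec, dotProduct]
  rw [Finset.sum_range]
  refine Finset.sum_congr rfl fun i _ => ?_
  have hWi : W i.1 = w i := by simp [hW, D]
  simp only [jacM, Matrix.of_apply]
  split_ifs with h1 h2
  · rw [hWi]; simp [nodeV, h2]
  · rw [hWi]; simp [nodeV, h2, h1]
  · rw [hWi]; push_cast; ring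

lemma Yf_poly (n : ℕ) (y0 : Fin n → ℝ) (t : ℝ) (V V' : ℕ → ℝ) (h : Yf n y0 t V = Yf n y0 t V')
    (p : Polynomial ℝ) (hp : p.natDegree ≤ n) :
    (∑ j ∈ Finset.range n, if Even j then 0 else V (j+1) * (p.eval (V (j+2)) - p.eval (V j)))
       + V 0 * (p.eval (V 1) - p.eval t) =
    (∑ j ∈ Finset.range n, if Even j then 0 else V' (j+1) * (p.eval (V' (j+2)) - p.eval (V' j)))
       + V' 0 * (p.eval (V' 1) - p.eval t) := by
  have key : ∀ V : ℕ → ℝ, (∑ j ∈ Finset.range n, if Even j then 0 else V (j+1) * (p.eval (V (j+2)) - p.eval (V j)))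
       + V 0 * (p.eval (V 1) - p.eval t) =
       ∑ κ : Fin n, p.coeff (κ.1+1) * (Yf n y0 t V κ - y0 κ) := by
    intro V
    have he : ∀ x y, p.eval x - p.eval y = ∑ κ : Fin n, p.coeff (κ.1+1) * (x^(κ.1+1) - y^(κ.1+1)) := by
      intro x y
      rw [Polynomial.eval_eq_sum_range' (Nat.lt_succ_of_le hp), Polynomial.eval_eq_sum_range' (Nat.lt_succ_of_le hp),
        ← Finset.sum_sub_distrib, Finset.sum_range_succ', Finset.sum_range]
      simp [mul_sub]
    simp only [he, Yf_apply]
    have : ∀ κ : Fin n, p.coeff (κ.1+1) * ((y0 κ + (∑ j ∈ Finset.range n, if Even j then 0 else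
      V (j+1) * (V (j+2) ^ (κ.1+1) - V j ^ (κ.1+1))) + V 0 * (V 1 ^ (κ.1+1) - t ^ (κ.1+1))) - y0 κ)
      = (∑ j ∈ Finset.range n, if Even j then 0 else
      V (j+1) * (p.coeff (κ.1+1) * (V (j+2) ^ (κ.1+1) - V j ^ (κ.1+1)))) + V 0 * (p.coeff (κ.1+1) * (V 1 ^ (κ.1+1) - t ^ (κ.1+1))) := by
      intro κ
      have : (∑ j ∈ Finset.range n, if Even j then 0 else
        V (j+1) * (p.coeff (κ.1+1) * (V (j+2) ^ (κ.1+1) - V j ^ (κ.1+1)))) =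
        p.coeff (κ.1+1) * (∑ j ∈ Finset.range n, if Even j then 0 else
        V (j+1) * (V (j+2) ^ (κ.1+1) - V j ^ (κ.1+1))) := by
        rw [Finset.mul_sum]
        refine Finset.sum_congr rfl fun j _ => ?_
        split_ifs <;> ring
      rw [this]; ring
    simp only [this]
    rw [Finset.sum_add_distrib, Finset.sum_comm]
    congr 1
    · refine Finset.sum_congr rfl fun j _ => ?_
      split_ifs
      · simp
      · rw [Finset.mul_sum]
    · rw [Finset.mul_sum]
  rw [key, key, h]

lemma extV_ge (n : ℕ) (s0 t0 : ℝ) (v : Fin n → ℝ) (i : ℕ) (h : n ≤ i) :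
    extV n s0 t0 v i = if Even i then s0 else t0 := by
  simp [extV, not_lt.2 h]

lemma injOn_Yf (n : ℕ) (y0 : Fin n → ℝ) (s0 t0 t : ℝ) (htt : t ≠ t0) (σ : Equiv.Perm (Fin (n/2))) :
    Set.InjOn (fun v => Yf n y0 t (extV n s0 t0 v))
      {v | (∀ r : Fin (n/2), extV n s0 t0 v (2*r.1) - extV n s0 t0 v (2*r.1+2) ≠ 0 ∧
          extV n s0 t0 v (2*r.1+1) ≠ t ∧ extV n s0 t0 v (2*r.1+1) ≠ t0) ∧
        StrictMono ((fun r : Fin (n/2) => extV n s0 t0 v (2*r.1+1)) ∘ σ)} := by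
  rintro v ⟨hv, hvs⟩ v' ⟨hv', hvs'⟩ hY
  set V := extV n s0 t0 v with hV
  set V' := extV n s0 t0 v' with hV'
  have hpoly := Yf_poly n y0 t V V' hY
  classical
  have hmain : (fun r : Fin (n/2) => V (2*r.1+1)) = (fun r : Fin (n/2) => V' (2*r.1+1)) ∧
      (fun r : Fin (n/2) => V (2*r.1) - V (2*r.1+2)) = (fun r : Fin (n/2) => V' (2*r.1) - V' (2*r.1+2)) ∧
      V 0 = V' 0 := by
    by_cases hn : Even n
    · obtain ⟨h1, h2, h3⟩ := prony_sorted (n := n) {t} (fun r : Fin (n/2) => V (2*r.1+1)) (fun r : Fin (n/2) => V' (2*r.1+1))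
        (fun r : Fin (n/2) => V (2*r.1) - V (2*r.1+2)) (fun r : Fin (n/2) => V' (2*r.1) - V' (2*r.1+2))
        (fun _ => - V 0) (fun _ => - V' 0) (by simp; omega)
        (by
          intro p hp
          have h := hpoly p hp
          have e1 := abel2 n V (fun i => p.eval (V i)) (p.eval t)
          have e2 := abel2 n V' (fun i => p.eval (V' i)) (p.eval t)
          simp only [hn, if_true] at e1 e2
          rw [e1, e2] at h
          have ho : ¬ Even (n+1) := by rw [Nat.even_add_one]; simpa using hn
          have g1 : V n = s0 := by rw [hV, extV_ge _ _ _ _ _ le_rfl, if_pos hn]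
          have g1' : V' n = s0 := by rw [hV', extV_ge _ _ _ _ _ le_rfl, if_pos hn]
          have g2 : V (n+1) = t0 := by rw [hV, extV_ge _ _ _ _ _ (by omega), if_neg ho]
          have g2' : V' (n+1) = t0 := by rw [hV', extV_ge _ _ _ _ _ (by omega), if_neg ho]
          rw [g1, g1', g2, g2'] at h
          rw [Finset.sum_range, Finset.sum_range] at h
          simp only [Finset.sum_singleton]
          linarith)
        (fun r => (hv r).1) (fun r => (hv' r).1) (fun r => by simpa using (hv r).2.1)
        (fun r => by simpa using (hv' r).2.1) σ hvs hvs'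
      refine ⟨h1, h2, ?_⟩
      have := h3 t (by simp)
      linarith
    · obtain ⟨h1, h2, h3⟩ := prony_sorted (n := n) {t, t0} (fun r : Fin (n/2) => V (2*r.1+1)) (fun r : Fin (n/2) => V' (2*r.1+1))
        (fun r : Fin (n/2) => V (2*r.1) - V (2*r.1+2)) (fun r : Fin (n/2) => V' (2*r.1) - V' (2*r.1+2))
        (fun x => if x = t then - V 0 else V (n-1)) (fun x => if x = t then - V' 0 else V' (n-1))
        (by
          rw [Finset.card_pair htt]
          obtain ⟨r, hr⟩ := Nat.not_even_iff_odd.1 hn; omega)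
        (by
          intro p hp
          have h := hpoly p hp
          have e1 := abel2 n V (fun i => p.eval (V i)) (p.eval t)
          have e2 := abel2 n V' (fun i => p.eval (V' i)) (p.eval t)
          simp only [hn, if_false] at e1 e2
          rw [e1, e2] at h
          have g1 : V n = t0 := by rw [hV, extV_ge _ _ _ _ _ le_rfl, if_neg hn]
          have g1' : V' n = t0 := by rw [hV', extV_ge _ _ _ _ _ le_rfl, if_neg hn]
          rw [g1, g1'] at h
          rw [Finset.sum_range, Finset.sum_range] at h
          rw [Finset.sum_pair htt, Finset.sum_pair htt]
          simp only [if_true, if_neg htt.symm]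
          linarith)
        (fun r => (hv r).1) (fun r => (hv' r).1) (fun r => by simpa using (hv r).2)
        (fun r => by simpa using (hv' r).2) σ hvs hvs'
      refine ⟨h1, h2, ?_⟩
      have := h3 t (by simp)
      simp at this
      exact this
  obtain ⟨h1, h2, h3⟩ := hmain
  have heven : ∀ r, 2 * r ≤ n → V (2*r) = V' (2*r) := by
    intro r
    induction r with
    | zero => intro _; simpa using h3
    | succ r ih =>
      intro hr
      have a1 := ih (by omega)
      have a2 := congrFun h2 ⟨r, by omega⟩
      simp only at a2
      have : 2 * (r+1) = 2*r+2 := by ring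
      rw [this]; linarith
  funext i
  have hvi : V i.1 = v i := by simp [hV, extV]
  have hvi' : V' i.1 = v' i := by simp [hV', extV]
  rw [← hvi, ← hvi']
  rcases Nat.even_or_odd' i.1 with ⟨r, hr | hr⟩
  · rw [hr]; exact heven r (by have := i.2; omega)
  · have := congrFun h1 ⟨r, by have := i.2; omega⟩
    simp only at this
    rw [hr]; exact this


def expE (n : ℕ) : ℕ := ∑ i ∈ Finset.range n, 2 * (i/2)

lemma expE_add (n : ℕ) : 2 * (expE n + n/2) = n * (n-1) := by
  induction n with
  | zero => simp [expE]
  | succ n ih =>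
    have h : expE (n+1) = expE n + 2 * (n/2) := by simp [expE, Finset.sum_range_succ]
    rw [h]
    rcases Nat.even_or_odd' n with ⟨r, hr | hr⟩
    · subst hr
      cases r with
      | zero => simp [expE]
      | succ r =>
        have e1 : (2*(r+1))/2 = r+1 := by omega
        have e2 : (2*(r+1)+1)/2 = r+1 := by omega
        have e3 : 2*(r+1)-1 = 2*r+1 := by omega
        rw [e1, e3] at ih
        rw [e1, e2]
        simp only [Nat.add_sub_cancel]
        nlinarith
    · subst hr
      have e1 : (2*r+1)/2 = r := by omega
      have e2 : (2*r+1+1)/2 = r+1 := by omega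
      rw [e1] at ih
      rw [e1, e2]
      simp only [Nat.add_sub_cancel] at ih ⊢
      nlinarith

lemma prod_odd (n : ℕ) (A : ℝ) :
    (∏ i ∈ Finset.range n, if Even i then (1:ℝ) else A) = A ^ (n/2) := by
  induction n with
  | zero => simp
  | succ n ih =>
    rw [Finset.prod_range_succ, ih]
    rcases Nat.even_or_odd' n with ⟨r, hr | hr⟩
    · have : Even n := ⟨r, by omega⟩
      rw [if_pos this, mul_one]; congr 1; omega
    · have : ¬ Even n := by rw [Nat.not_even_iff_odd]; exact ⟨r, hr⟩
      rw [if_neg this, ← pow_succ]; congr 1; omega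

lemma diagV_lower (t : ℝ) (V : ℕ → ℝ) (n i : ℕ) (hi : i < n) (B D : ℝ) (hB : 0 ≤ B) (hD : 0 ≤ D)
    (h1 : ∀ j ≤ n, ¬ Even j → D ≤ |V j - t|)
    (h2 : ∀ j ≤ n, ¬ Even j → ∀ k < j, ¬ Even k → B ≤ |V j - V k|) :
    D * B ^ (2 * (i/2)) ≤ |diagV t V i| := by
  have key : ∀ j ≤ n, ¬ Even j → ∀ m, m ≤ j →
      D * B ^ m ≤ |∏ l ∈ Finset.range (m+1), (V j - nodeV t V l)| ∨ m = j := by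
    intro j hj hje m
    induction m with
    | zero =>
      intro _
      left; simpa [nodeV] using h1 j hj hje
    | succ m ih =>
      intro hm
      by_cases hmj : m + 1 = j
      · right; exact hmj
      left
      rw [Finset.prod_range_succ, abs_mul, pow_succ, ← mul_assoc]
      have ih' := (ih (by omega)).resolve_right (by omega)
      refine mul_le_mul ih' ?_ hB (abs_nonneg _)
      by_cases hme : Even (m+1)
      · have hmo : ¬ Even m := by rw [Nat.even_add_one] at hme; exact hme
        rw [node_odd_succ _ _ _ hmo]
        exact h2 j hj hje m (by omega) hmo
      · rw [node_odd _ _ _ hme]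
        exact h2 j hj hje (m+1) (by omega) hme
  unfold diagV
  split_ifs with h
  · have hh := (key (i+1) (by omega) (by rw [Nat.even_add_one]; simpa using h) i (by omega)).resolve_right (by omega)
    have : 2 * (i/2) = i := by obtain ⟨r, rfl⟩ := h; omega
    rw [this]; exact hh
  · obtain ⟨r, hr⟩ := Nat.not_even_iff_odd.1 h
    have hh := (key i (by omega) h (i-1) (by omega)).resolve_right (by omega)
    have e : 2 * (i/2) = i - 1 := by omega
    have e2 : i - 1 + 1 = i := by omega
    rw [e2] at hh
    rw [e]; exact hh

lemma det_lower (n : ℕ) (t : ℝ) (V : ℕ → ℝ) (A B D : ℝ) (hA : 0 ≤ A) (hB : 0 ≤ B) (hD : 0 ≤ D)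
    (h0 : ∀ j < n, ¬ Even j → A ≤ |V (j-1) - V (j+1)|)
    (h1 : ∀ j ≤ n, ¬ Even j → D ≤ |V j - t|)
    (h2 : ∀ j ≤ n, ¬ Even j → ∀ k < j, ¬ Even k → B ≤ |V j - V k|) :
    A ^ (n/2) * D ^ n * B ^ (expE n) ≤ |(jacM n t V).det| := by
  rw [det_jacM, abs_mul, Finset.abs_prod, Finset.abs_prod, mul_assoc]
  refine mul_le_mul ?_ ?_ (by positivity) (by positivity)
  · rw [← prod_odd n A, Finset.prod_range]
    refine Finset.prod_le_prod (fun i _ => by split_ifs <;> positivity) fun i _ => ?_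
    split_ifs with h
    · simp
    · exact h0 i i.2 h
  · have : D ^ n * B ^ (expE n) = ∏ i ∈ Finset.range n, (D * B ^ (2 * (i/2))) := by
      rw [Finset.prod_mul_distrib, Finset.prod_const, Finset.card_range, expE, Finset.prod_pow_eq_pow_sum]
    rw [this, Finset.prod_range]
    exact Finset.prod_le_prod (fun i _ => by positivity) fun i _ => diagV_lower t V n i i.2 B D hB hD h1 h2

lemma measurable_extV (n : ℕ) (s0 t0 : ℝ) (i : ℕ) : Measurable (fun v => extV n s0 t0 v i) := by
  unfold extV
  split_ifs
  · exact measurable_pi_apply _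
  · exact measurable_const
  · exact measurable_const

lemma fixed_t (n : ℕ) (y0 : Fin n → ℝ) (s0 t0 t : ℝ) (A B D : ℝ) (hA : 0 < A) (hB : 0 < B) (hD : 0 < D)
    (S : Set (Fin n → ℝ)) (hS : MeasurableSet S) (K : Set (Fin n → ℝ))
    (htt : D ≤ |t0 - t|)
    (h0 : ∀ v ∈ S, ∀ j < n, ¬ Even j → A ≤ |extV n s0 t0 v (j-1) - extV n s0 t0 v (j+1)|)
    (h1 : ∀ v ∈ S, ∀ j ≤ n, ¬ Even j → D ≤ |extV n s0 t0 v j - t|)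
    (h2 : ∀ v ∈ S, ∀ j ≤ n + 1, ¬ Even j → ∀ k < j, ¬ Even k → B ≤ |extV n s0 t0 v j - extV n s0 t0 v k|)
    (hK : ∀ v ∈ S, Yf n y0 t (extV n s0 t0 v) ∈ K) :
    volume S * ENNReal.ofReal (A ^ (n/2) * D ^ n * B ^ (expE n)) ≤ (Nat.factorial (n/2) : ℝ≥0∞) * volume K := by
  classical
  set P : Equiv.Perm (Fin (n/2)) → Set (Fin n → ℝ) := fun σ =>
    {v | StrictMono ((fun r : Fin (n/2) => extV n s0 t0 v (2*r.1+1)) ∘ σ)} with hP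
  have hPm : ∀ σ, MeasurableSet (P σ) := by
    intro σ
    have : P σ = ⋂ (i : Fin (n/2)), ⋂ (j : Fin (n/2)), ⋂ (_ : i < j),
        {v | extV n s0 t0 v (2*(σ i).1+1) < extV n s0 t0 v (2*(σ j).1+1)} := by
      ext v
      simp only [hP, mem_setOf_eq, mem_iInter, StrictMono, Function.comp]
    rw [this]
    refine MeasurableSet.iInter fun i => MeasurableSet.iInter fun j => MeasurableSet.iInter fun _ => ?_
    exact measurableSet_lt (measurable_extV _ _ _ _) (measurable_extV _ _ _ _)
  have hcov : S ⊆ ⋃ σ, (S ∩ P σ) := by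
    intro v hv
    have hinj : Function.Injective (fun r : Fin (n/2) => extV n s0 t0 v (2*r.1+1)) := by
      have aux : ∀ r r' : Fin (n/2), r < r' → extV n s0 t0 v (2*r'.1+1) - extV n s0 t0 v (2*r.1+1) ≠ 0 := by
        intro r r' hlt h
        have hlt' : r.1 < r'.1 := hlt
        have := h2 v hv (2*r'.1+1) (by have := r'.2; omega) (by simp) (2*r.1+1) (by omega) (by simp)
        rw [h, abs_zero] at this
        linarith
      intro r r' h
      simp only at h
      rcases lt_trichotomy r r' with hl | hl | hl
      · exact absurd (by rw [h]; simp) (aux _ _ hl)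
      · exact hl
      · exact absurd (by rw [h]; simp) (aux _ _ hl)
    refine mem_iUnion.2 ⟨Tuple.sort (fun r : Fin (n/2) => extV n s0 t0 v (2*r.1+1)), hv, ?_⟩
    exact (Tuple.monotone_sort _).strictMono_of_injective (hinj.comp (Equiv.injective _))
  have hpiece : ∀ σ, volume (S ∩ P σ) * ENNReal.ofReal (A ^ (n/2) * D ^ n * B ^ (expE n)) ≤ volume K := by
    intro σ
    have hm : MeasurableSet (S ∩ P σ) := hS.inter (hPm σ)
    have hinj : InjOn (fun v => Yf n y0 t (extV n s0 t0 v)) (S ∩ P σ) := by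
      refine (injOn_Yf n y0 s0 t0 t ?_ σ).mono ?_
      · rintro rfl; simp at htt; linarith
      · rintro v ⟨hv, hvP⟩
        refine ⟨fun r => ⟨?_, ?_, ?_⟩, hvP⟩
        · have := h0 v hv (2*r.1+1) (by have := r.2; omega) (by simp)
          intro h
          simp only [Nat.add_sub_cancel] at this
          have e : 2*r.1+1+1 = 2*r.1+2 := by ring
          rw [e, h, abs_zero] at this; linarith
        · intro h
          have := h1 v hv (2*r.1+1) (by have := r.2; omega) (by simp)
          rw [h, sub_self, abs_zero] at this; linarith
        · intro h
          rcases Nat.even_or_odd' n with ⟨q, hr | hr⟩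
          · have := h2 v hv (n+1) le_rfl (by rw [Nat.even_add_one]; simp [hr]) (2*r.1+1) (by have := r.2; omega) (by simp)
            rw [h, extV_ge _ _ _ _ _ (by omega), if_neg (by rw [Nat.even_add_one]; simp [hr]), sub_self, abs_zero] at this
            linarith
          · have := h2 v hv n (by omega) (by rw [hr]; simp) (2*r.1+1) (by have := r.2; omega) (by simp)
            rw [h, extV_ge _ _ _ _ _ (by omega), if_neg (by rw [hr]; simp), sub_self, abs_zero] at this
            linarith
    have har := lintegral_abs_det_fderiv_eq_addHaar_image (volume : Measure (Fin n → ℝ)) hm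
      (fun v _ => (hasFDerivAt_Yf n y0 s0 t0 t v).hasFDerivWithinAt) hinj
    calc volume (S ∩ P σ) * ENNReal.ofReal (A ^ (n/2) * D ^ n * B ^ (expE n))
        = ∫⁻ _ in S ∩ P σ, ENNReal.ofReal (A ^ (n/2) * D ^ n * B ^ (expE n)) := by
          rw [setLIntegral_const, mul_comm]
      _ ≤ ∫⁻ x in S ∩ P σ, ENNReal.ofReal |(LinearMap.toContinuousLinearMap (Matrix.toLin' (jacM n t (extV n s0 t0 x)))).det| := by
          refine setLIntegral_mono' hm fun v hv => ENNReal.ofReal_le_ofReal ?_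
          have : (LinearMap.toContinuousLinearMap (Matrix.toLin' (jacM n t (extV n s0 t0 v)))).det
              = (jacM n t (extV n s0 t0 v)).det := by
            simp [ContinuousLinearMap.det]
          rw [this]
          exact det_lower n t _ A B D hA.le hB.le hD.le (h0 v hv.1) (h1 v hv.1)
            (fun j hj => h2 v hv.1 j (by omega))
      _ = _ := har
      _ ≤ volume K := measure_mono (by rintro _ ⟨v, hv, rfl⟩; exact hK v hv.1)
  calc volume S * ENNReal.ofReal (A ^ (n/2) * D ^ n * B ^ (expE n))
      ≤ (∑ σ, volume (S ∩ P σ)) * ENNReal.ofReal (A ^ (n/2) * D ^ n * B ^ (expE n)) := by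
        gcongr
        exact (measure_mono hcov).trans (measure_iUnion_fintype_le _ _)
    _ = ∑ σ, volume (S ∩ P σ) * ENNReal.ofReal (A ^ (n/2) * D ^ n * B ^ (expE n)) := Finset.sum_mul _ _ _
    _ ≤ ∑ _σ : Equiv.Perm (Fin (n/2)), volume K := Finset.sum_le_sum fun σ _ => hpiece σ
    _ = _ := by simp [Fintype.card_perm]


lemma lint_cauchy (n : ℕ) (hn : 2 ≤ n) (R c : ℝ) (hR : 0 < R) :
    ∫⁻ t : ℝ, ENNReal.ofReal (((R + |t - c|) ^ n)⁻¹) ≤ ENNReal.ofReal (Real.pi * (R ^ (n-1))⁻¹) := by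
  have hpt : ∀ t : ℝ, ((R + |t - c|) ^ n)⁻¹ ≤ (R ^ (n-2))⁻¹ * (R^2 + (t-c)^2)⁻¹ := by
    intro t
    rw [← mul_inv]
    apply inv_anti₀ (by positivity)
    have e : n = (n-2) + 2 := by omega
    conv_rhs => rw [e, pow_add]
    have := abs_nonneg (t-c)
    refine mul_le_mul ?_ ?_ (by positivity) (by positivity)
    · exact pow_le_pow_left₀ hR.le (by linarith) _
    · have h3 := sq_abs (t-c)
      nlinarith
  have hintegral : ∫⁻ t : ℝ, ENNReal.ofReal ((R^2 + (t-c)^2)⁻¹) = ENNReal.ofReal (Real.pi * R⁻¹) := by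
    have h1 : ∫⁻ t : ℝ, ENNReal.ofReal ((R^2 + (t-c)^2)⁻¹) = ∫⁻ t : ℝ, ENNReal.ofReal ((R^2 + t^2)⁻¹) :=
      lintegral_sub_right_eq_self (fun t : ℝ => ENNReal.ofReal ((R^2 + t^2)⁻¹)) c
    rw [h1]
    have hI : Integrable (fun t : ℝ => (1 + t^2)⁻¹) := integrable_inv_one_add_sq
    have e : ∀ t : ℝ, (R^2 + t^2)⁻¹ = (R^2)⁻¹ * (1 + (R⁻¹ * t)^2)⁻¹ := by
      intro t; rw [← mul_inv]; congr 1; field_simp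
    simp_rw [e]
    have hI2 : Integrable (fun t : ℝ => (R^2)⁻¹ * (1 + (R⁻¹ * t)^2)⁻¹) :=
      (hI.comp_mul_left' (inv_ne_zero hR.ne')).const_mul _
    rw [← ofReal_integral_eq_lintegral_ofReal hI2 (Filter.Eventually.of_forall fun t => by positivity)]
    congr 1
    rw [integral_const_mul, Measure.integral_comp_mul_left (fun t : ℝ => (1 + t^2)⁻¹), integral_univ_inv_one_add_sq]
    rw [abs_of_pos (by positivity)]
    simp only [smul_eq_mul, inv_inv]
    field_simp
  calc ∫⁻ t : ℝ, ENNReal.ofReal (((R + |t - c|) ^ n)⁻¹)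
      ≤ ∫⁻ t : ℝ, ENNReal.ofReal ((R ^ (n-2))⁻¹) * ENNReal.ofReal ((R^2 + (t-c)^2)⁻¹) := by
        refine lintegral_mono fun t => ?_
        rw [← ENNReal.ofReal_mul (by positivity)]
        exact ENNReal.ofReal_le_ofReal (hpt t)
    _ = ENNReal.ofReal ((R ^ (n-2))⁻¹) * ENNReal.ofReal (Real.pi * R⁻¹) := by
        rw [lintegral_const_mul' _ _ ENNReal.ofReal_ne_top, hintegral]
    _ = _ := by
        rw [← ENNReal.ofReal_mul (by positivity)]
        congr 1
        have : R ^ (n-1) = R ^ (n-2) * R := by rw [← pow_succ]; congr 1; omega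
        rw [this]; field_simp

lemma measurable_yl (n : ℕ) (y0 : Fin n → ℝ) (s0 t0 : ℝ) (k : ℕ) :
    Measurable (fun v => yl n y0 (extV n s0 t0 v) k) := by
  unfold yl mom
  refine measurable_const.add (Finset.measurable_sum _ fun j _ => ?_)
  split_ifs
  · exact measurable_const
  · refine measurable_pi_iff.2 fun i => ?_
    simp only [Pi.smul_apply, Pi.sub_apply, smul_eq_mul]
    exact (measurable_extV _ _ _ _).mul (((measurable_extV _ _ _ _).pow_const _).sub
      ((measurable_extV _ _ _ _).pow_const _))

lemma measurable_Yf (n : ℕ) (y0 : Fin n → ℝ) (s0 t0 : ℝ) :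
    Measurable (fun p : ℝ × (Fin n → ℝ) => Yf n y0 p.1 (extV n s0 t0 p.2)) := by
  unfold Yf
  refine ((measurable_yl n y0 s0 t0 0).comp measurable_snd).add ?_
  unfold mom
  refine measurable_pi_iff.2 fun i => ?_
  simp only [Pi.smul_apply, Pi.sub_apply, smul_eq_mul]
  exact ((measurable_extV n s0 t0 0).comp measurable_snd).mul
    ((((measurable_extV n s0 t0 1).comp measurable_snd).pow_const _).sub
      (measurable_fst.pow_const _))

/-- the path count, given a set `S` of good path parameters. -/
lemma path_count (n : ℕ) (hn : 2 ≤ n) (y0 : Fin n → ℝ) (s0 t0 c : ℝ) (A B R : ℝ)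
    (hA : 0 < A) (hB : 0 < B) (hR : 0 < R) (F : Set (Pt n)) (hF : MeasurableSet F) (Lm : ℝ≥0∞)
    (hL : ∀ t, sliceVol n F t ≤ Lm)
    (S : Set (Fin n → ℝ)) (hS : MeasurableSet S) (b : ℝ≥0∞)
    (h0 : ∀ v ∈ S, ∀ j < n, ¬ Even j → A ≤ |extV n s0 t0 v (j-1) - extV n s0 t0 v (j+1)|)
    (h2 : ∀ v ∈ S, ∀ j ≤ n + 1, ¬ Even j → ∀ k < j, ¬ Even k → B ≤ |extV n s0 t0 v j - extV n s0 t0 v k|)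
    (hJ : ∀ v ∈ S, ∀ j ≤ n + 1, ¬ Even j → |extV n s0 t0 v j - c| ≤ R/2)
    (hb : ∀ v ∈ S, b ≤ volume {t : ℝ | (t, Yf n y0 t (extV n s0 t0 v)) ∈ F ∧
      ∀ j ≤ n+1, ¬ Even j → R/2 ≤ |extV n s0 t0 v j - t|}) :
    b * volume S * ENNReal.ofReal (A ^ (n/2) * B ^ (expE n) * R ^ (n-1)) ≤
      ENNReal.ofReal (Nat.factorial (n/2) * 5^n * Real.pi) * Lm := by
  set G : Set (ℝ × (Fin n → ℝ)) := {p | p.2 ∈ S ∧ (p.1, Yf n y0 p.1 (extV n s0 t0 p.2)) ∈ F ∧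
      ∀ j ≤ n+1, ¬ Even j → R/2 ≤ |extV n s0 t0 p.2 j - p.1|} with hG
  have hGm : MeasurableSet G := by
    have : G = (Prod.snd ⁻¹' S) ∩ ((fun p : ℝ × (Fin n → ℝ) => (p.1, Yf n y0 p.1 (extV n s0 t0 p.2))) ⁻¹' F ∩
        ⋂ j, ⋂ (_ : j ≤ n+1), ⋂ (_ : ¬ Even j), {p | R/2 ≤ |extV n s0 t0 p.2 j - p.1|}) := by
      ext p; simp [hG]
    rw [this]
    refine (measurable_snd hS).inter (MeasurableSet.inter ?_ ?_)
    · exact (measurable_fst.prodMk (measurable_Yf n y0 s0 t0)) hF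
    · refine MeasurableSet.iInter fun j => MeasurableSet.iInter fun _ => MeasurableSet.iInter fun _ => ?_
      refine measurableSet_le measurable_const ?_
      exact (((measurable_extV n s0 t0 j).comp measurable_snd).sub measurable_fst).abs
  set m : ℝ := A ^ (n/2) * B ^ (expE n) with hm
  have hmpos : 0 < m := by positivity
  have hlow : b * volume S ≤ volume G := by
    rw [Measure.volume_eq_prod, Measure.prod_apply_symm hGm]
    calc b * volume S = ∫⁻ _ in S, b := by rw [setLIntegral_const]
      _ ≤ ∫⁻ v in S, volume ((fun x => (x, v)) ⁻¹' G) := by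
        refine setLIntegral_mono' hS fun v hv => (hb v hv).trans (measure_mono ?_)
        intro t ht
        exact ⟨hv, ht⟩
      _ ≤ _ := setLIntegral_le_lintegral _ _
  have hfix : ∀ t, volume (Prod.mk t ⁻¹' G) * ENNReal.ofReal m ≤
      (ENNReal.ofReal (Nat.factorial (n/2) * 5^n) * Lm) * ENNReal.ofReal (((R + |t - c|) ^ n)⁻¹) := by
    intro t
    rcases (Prod.mk t ⁻¹' G).eq_empty_or_nonempty with h | ⟨w, hw⟩
    · rw [h]; simp
    have hDgen : ∀ u : ℝ, |u - c| ≤ R/2 → R/2 ≤ |u - t| → (R + |t - c|)/5 ≤ |u - t| := by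
      intro u h1 h2
      have h3 : |t - c| ≤ |u - t| + |u - c| := by
        have := abs_sub_le t u c
        rw [abs_sub_comm t u] at this; exact this
      linarith
    have hx := fixed_t n y0 s0 t0 t A B ((R + |t - c|)/5) hA hB (by positivity) (Prod.mk t ⁻¹' G)
      (measurable_prodMk_left hGm) {y | (t, y) ∈ F}
      (by
        rcases Nat.even_or_odd n with he | he
        · have ho : ¬ Even (n+1) := by rw [Nat.even_add_one]; simpa using he
          have := hDgen _ (hJ w hw.1 (n+1) le_rfl ho) (hw.2.2 (n+1) le_rfl ho)
          rwa [extV_ge _ _ _ _ _ (by omega), if_neg ho] at this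
        · have ho : ¬ Even n := by simpa using he
          have := hDgen _ (hJ w hw.1 n (by omega) ho) (hw.2.2 n (by omega) ho)
          rwa [extV_ge _ _ _ _ _ (by omega), if_neg ho] at this)
      (fun v hv => h0 v hv.1)
      (fun v hv j hj ho => hDgen _ (hJ v hv.1 j (by omega) ho) (hv.2.2 j (by omega) ho))
      (fun v hv => h2 v hv.1) (fun v hv => hv.2.1)
    have hq : (0:ℝ) < (R + |t - c|) ^ n := by positivity
    have e1 : A ^ (n/2) * ((R + |t - c|)/5) ^ n * B ^ (expE n) = m * ((R + |t - c|)^n / 5^n) := by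
      rw [hm, div_pow]; ring
    rw [e1, ENNReal.ofReal_mul hmpos.le, ← mul_assoc] at hx
    have hone : ENNReal.ofReal ((R + |t - c|)^n / 5^n) * ENNReal.ofReal (5^n * ((R + |t - c|)^n)⁻¹) = 1 := by
      rw [← ENNReal.ofReal_mul (by positivity)]
      rw [← ENNReal.ofReal_one]; congr 1; field_simp
    calc volume (Prod.mk t ⁻¹' G) * ENNReal.ofReal m
        = volume (Prod.mk t ⁻¹' G) * ENNReal.ofReal m * ENNReal.ofReal ((R + |t - c|)^n / 5^n) * ENNReal.ofReal (5^n * ((R + |t - c|)^n)⁻¹) := by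
          rw [mul_assoc _ (ENNReal.ofReal ((R + |t - c|)^n / 5^n)), hone, mul_one]
      _ ≤ (Nat.factorial (n/2) : ℝ≥0∞) * Lm * ENNReal.ofReal (5^n * ((R + |t - c|)^n)⁻¹) := by
          refine mul_le_mul_left (hx.trans (mul_le_mul_right (hL t) _)) _
      _ = _ := by
          rw [ENNReal.ofReal_mul (by positivity), ENNReal.ofReal_mul (by positivity), ENNReal.ofReal_natCast]
          ring
  have hup : volume G * ENNReal.ofReal m ≤
      (ENNReal.ofReal (Nat.factorial (n/2) * 5^n) * Lm) * ENNReal.ofReal (Real.pi * (R ^ (n-1))⁻¹) := by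
    rw [Measure.volume_eq_prod, Measure.prod_apply hGm, ← lintegral_mul_const' _ _ ENNReal.ofReal_ne_top]
    refine (lintegral_mono hfix).trans ?_
    have hmeas : Measurable fun t : ℝ => ENNReal.ofReal (((R + |t - c|) ^ n)⁻¹) := by fun_prop
    rw [lintegral_const_mul _ hmeas]
    gcongr
    exact lint_cauchy n hn R c hR
  calc b * volume S * ENNReal.ofReal (A ^ (n/2) * B ^ (expE n) * R ^ (n-1))
      = b * volume S * ENNReal.ofReal m * ENNReal.ofReal (R^(n-1)) := by
        rw [ENNReal.ofReal_mul (by positivity)]; ring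
    _ ≤ volume G * ENNReal.ofReal m * ENNReal.ofReal (R^(n-1)) := by gcongr
    _ ≤ (ENNReal.ofReal (Nat.factorial (n/2) * 5^n) * Lm) * ENNReal.ofReal (Real.pi * (R ^ (n-1))⁻¹) * ENNReal.ofReal (R^(n-1)) := by gcongr
    _ = _ := by
        rw [mul_assoc, ← ENNReal.ofReal_mul (by positivity)]
        have : Real.pi * (R ^ (n-1))⁻¹ * R^(n-1) = Real.pi := by field_simp
        rw [this, ENNReal.ofReal_mul (by positivity) (q := Real.pi)]
        ring


lemma tower (n : ℕ) (Cd : ℕ → Set (Fin n → ℝ)) (hm : ∀ k, MeasurableSet (Cd k))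
    (m : ℕ → ℝ≥0∞)
    (hdep : ∀ k (hk : k < n) (j : ℕ), k < j → j < n → ∀ v x, Function.update v ⟨k, hk⟩ x ∈ Cd j ↔ v ∈ Cd j)
    (hlow : ∀ k (hk : k < n) (v : Fin n → ℝ), (∀ j, k < j → j < n → v ∈ Cd j) →
      m k ≤ volume {x : ℝ | Function.update v ⟨k, hk⟩ x ∈ Cd k}) :
    ∏ k ∈ Finset.range n, m k ≤ volume {v : Fin n → ℝ | ∀ k < n, v ∈ Cd k} := by
  classical
  have hSm : ∀ k, MeasurableSet {v : Fin n → ℝ | ∀ j, k ≤ j → j < n → v ∈ Cd j} := by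
    intro k
    have : {v : Fin n → ℝ | ∀ j, k ≤ j → j < n → v ∈ Cd j} = ⋂ j, ⋂ (_ : k ≤ j), ⋂ (_ : j < n), Cd j := by
      ext v; simp
    rw [this]
    exact MeasurableSet.iInter fun j => MeasurableSet.iInter fun _ => MeasurableSet.iInter fun _ => hm j
  set f : (Fin n → ℝ) → ℝ≥0∞ := {v : Fin n → ℝ | ∀ j, 0 ≤ j → j < n → v ∈ Cd j}.indicator 1 with hf
  have hfm : Measurable f := (measurable_one).indicator (hSm 0)
  have key : ∀ k ≤ n, ∀ v, (∏ i ∈ Finset.range k, m i) *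
      {v : Fin n → ℝ | ∀ j, k ≤ j → j < n → v ∈ Cd j}.indicator 1 v ≤
      lmarginal (fun _ : Fin n => (volume : Measure ℝ)) (Finset.univ.filter fun i : Fin n => i.1 < k) f v := by
    intro k
    induction k with
    | zero => intro _ v; simp [hf]
    | succ k ih =>
      intro hk v
      have hins : (Finset.univ.filter fun i : Fin n => i.1 < k+1) =
          insert (⟨k, hk⟩ : Fin n) (Finset.univ.filter fun i : Fin n => i.1 < k) := by
        ext i; simp [Fin.ext_iff]; omega
      rw [hins, lmarginal_insert f hfm (by simp)]
      refine le_trans ?_ (lintegral_mono fun x => ih (by omega) _)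
      by_cases hv : ∀ j, k + 1 ≤ j → j < n → v ∈ Cd j
      · rw [indicator_of_mem (by exact hv), Pi.one_apply, mul_one, Finset.prod_range_succ]
        have hset : ∀ x, {v : Fin n → ℝ | ∀ j, k ≤ j → j < n → v ∈ Cd j}.indicator (1 : (Fin n → ℝ) → ℝ≥0∞) (Function.update v ⟨k, hk⟩ x)
            = {x : ℝ | Function.update v ⟨k, hk⟩ x ∈ Cd k}.indicator 1 x := by
          intro x
          by_cases hx : Function.update v ⟨k, hk⟩ x ∈ Cd k
          · rw [indicator_of_mem, indicator_of_mem]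
            · rfl
            · exact hx
            · intro j hj hjn
              rcases hj.eq_or_lt with rfl | hj
              · exact hx
              · exact (hdep k hk j hj hjn v x).2 (hv j hj hjn)
          · rw [indicator_of_notMem, indicator_of_notMem]
            · exact hx
            · intro h; exact hx (h k le_rfl hk)
        simp_rw [hset]
        have hmm : MeasurableSet {x : ℝ | Function.update v ⟨k, hk⟩ x ∈ Cd k} :=
          (measurable_update v) (hm k)
        rw [lintegral_const_mul _ (measurable_one.indicator hmm), lintegral_indicator_one hmm]
        gcongr
        exact hlow k hk v hv
      · rw [indicator_of_notMem (by exact hv)]; simp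
  have h := key n le_rfl 0
  have hu : (Finset.univ.filter fun i : Fin n => i.1 < n) = Finset.univ := by
    ext i; simp
  rw [hu, ← lintegral_eq_lmarginal_univ, indicator_of_mem (by intro j h1 h2; omega), Pi.one_apply, mul_one,
    hf, lintegral_indicator_one (hSm 0)] at h
  refine h.trans (le_of_eq ?_)
  rw [volume_pi]
  congr 1
  ext v; simp

lemma extV_update_gt (n : ℕ) (s0 t0 : ℝ) (v : Fin n → ℝ) (k : ℕ) (hk : k < n) (x : ℝ) (j : ℕ) (hj : k < j) :
    extV n s0 t0 (Function.update v ⟨k, hk⟩ x) j = extV n s0 t0 v j := by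
  unfold extV
  split_ifs with h
  · rw [Function.update_of_ne]; simp [Fin.ext_iff]; omega
  · rfl
  · rfl

lemma extV_update_self (n : ℕ) (s0 t0 : ℝ) (v : Fin n → ℝ) (k : ℕ) (hk : k < n) (x : ℝ) :
    extV n s0 t0 (Function.update v ⟨k, hk⟩ x) k = x := by
  unfold extV
  rw [dif_pos hk]; simp

lemma yl_update_gt (n : ℕ) (y0 : Fin n → ℝ) (s0 t0 : ℝ) (v : Fin n → ℝ) (k : ℕ) (hk : k < n) (x : ℝ) (j : ℕ) (hj : k < j) :
    yl n y0 (extV n s0 t0 (Function.update v ⟨k, hk⟩ x)) j = yl n y0 (extV n s0 t0 v) j := by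
  unfold yl
  congr 1
  refine Finset.sum_congr rfl fun i hi => ?_
  have := (Finset.mem_Ico.1 hi).1
  rw [extV_update_gt _ _ _ _ _ _ _ _ (by omega), extV_update_gt _ _ _ _ _ _ _ _ (by omega),
    extV_update_gt _ _ _ _ _ _ _ _ (by omega)]

lemma yl_step (n : ℕ) (y0 : Fin n → ℝ) (V : ℕ → ℝ) (k : ℕ) (hk : k < n) :
    yl n y0 V k = yl n y0 V (k+1) + (if Even k then 0 else V (k+1) • (mom n (V (k+2)) - mom n (V k))) := by
  unfold yl
  rw [Finset.sum_eq_sum_Ico_succ_bot hk]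
  abel

/-- state of the path -/
def stateV (n : ℕ) (y0 : Fin n → ℝ) (V : ℕ → ℝ) (k : ℕ) : ℝ × ℝ × (Fin n → ℝ) :=
  (if Even k then V k else V (k+1), if Even k then V (k+1) else V k, yl n y0 V k)

lemma measurable_stateV (n : ℕ) (y0 : Fin n → ℝ) (s0 t0 : ℝ) (k : ℕ) :
    Measurable (fun v => stateV n y0 (extV n s0 t0 v) k) := by
  unfold stateV
  refine Measurable.prodMk ?_ (Measurable.prodMk ?_ (measurable_yl n y0 s0 t0 k))
  · split_ifs <;> exact measurable_extV _ _ _ _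
  · split_ifs <;> exact measurable_extV _ _ _ _

lemma vol_abs_lt (c r : ℝ) : volume {x : ℝ | |x - c| < r} = ENNReal.ofReal (2*r) := by
  have : {x : ℝ | |x - c| < r} = Metric.ball c r := by
    ext x; simp [Real.dist_eq]
  rw [this, Real.volume_ball]

/-- the condition at step `k` -/
def condV (n : ℕ) (y0 : Fin n → ℝ) (s0 t0 : ℝ) (W : ℕ → Set (ℝ × ℝ × (Fin n → ℝ))) (A B : ℝ) (k : ℕ) :
    Set (Fin n → ℝ) :=
  {v | stateV n y0 (extV n s0 t0 v) k ∈ W k ∧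
    (Even k → A ≤ |extV n s0 t0 v k - extV n s0 t0 v (k+2)|) ∧
    (¬ Even k → ∀ j ≤ n + 1, k < j → B ≤ |extV n s0 t0 v j - extV n s0 t0 v k| ∨ Even j)}

lemma measurableSet_condV (n : ℕ) (y0 : Fin n → ℝ) (s0 t0 : ℝ) (W : ℕ → Set (ℝ × ℝ × (Fin n → ℝ)))
    (hW : ∀ k, MeasurableSet (W k)) (A B : ℝ) (k : ℕ) : MeasurableSet (condV n y0 s0 t0 W A B k) := by
  have : condV n y0 s0 t0 W A B k = (fun v => stateV n y0 (extV n s0 t0 v) k) ⁻¹' W k ∩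
    ((⋂ (_ : Even k), {v | A ≤ |extV n s0 t0 v k - extV n s0 t0 v (k+2)|}) ∩
     (⋂ (_ : ¬ Even k), ⋂ j, ⋂ (_ : j ≤ n + 1), ⋂ (_ : k < j),
       ({v | B ≤ |extV n s0 t0 v j - extV n s0 t0 v k|} ∪ ⋂ (_ : ¬ Even j), ∅))) := by
    ext v
    simp only [condV, mem_setOf_eq, mem_inter_iff, mem_preimage, mem_iInter, mem_union, mem_empty_iff_false]
    simp
  rw [this]
  refine (measurable_stateV n y0 s0 t0 k (hW k)).inter (MeasurableSet.inter ?_ ?_)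
  · refine MeasurableSet.iInter fun _ => measurableSet_le measurable_const ?_
    exact ((measurable_extV _ _ _ _).sub (measurable_extV _ _ _ _)).abs
  · refine MeasurableSet.iInter fun _ => MeasurableSet.iInter fun j => MeasurableSet.iInter fun _ =>
      MeasurableSet.iInter fun _ => MeasurableSet.union (measurableSet_le measurable_const ?_)
        (MeasurableSet.iInter fun _ => MeasurableSet.empty)
    exact ((measurable_extV _ _ _ _).sub (measurable_extV _ _ _ _)).abs

lemma path_main (n : ℕ) (hn : 2 ≤ n) (a b R c : ℝ) (ha : 0 < a) (hb : 0 < b) (hR : 0 < R) (β : ℝ≥0∞)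
    (F : Set (Pt n)) (hF : MeasurableSet F) (Lm : ℝ≥0∞) (hL : ∀ t, sliceVol n F t ≤ Lm)
    (W : ℕ → Set (ℝ × ℝ × (Fin n → ℝ))) (hW : ∀ k, MeasurableSet (W k)) (hanti : ∀ k, W k ⊆ W 0)
    (hne : (W n).Nonempty)
    (href1 : ∀ k < n, ∀ s t y, (s, t, y) ∈ W (k+1) → ENNReal.ofReal a ≤ volume {s' : ℝ | (s', t, y) ∈ W k})
    (href2 : ∀ k < n, ∀ s t y, (s, t, y) ∈ W (k+1) →
      ENNReal.ofReal b ≤ volume {t' : ℝ | (s, t', y + s • (mom n t - mom n t')) ∈ W k})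
    (hJ : ∀ s t y, (s, t, y) ∈ W 0 → |t - c| ≤ R/2)
    (hβ : ∀ s t y, (s, t, y) ∈ W 0 → ∀ p : ℕ → ℝ, β ≤ volume {t' : ℝ | (t', y + s • (mom n t - mom n t')) ∈ F ∧
      ∀ j ≤ n+1, ¬ Even j → R/2 ≤ |p j - t'|}) :
    β * (∏ k ∈ Finset.range n, if Even k then ENNReal.ofReal (a/2) else ENNReal.ofReal (b/2)) *
      ENNReal.ofReal ((a/4) ^ (n/2) * (b/(4*(n+1))) ^ (expE n) * R ^ (n-1)) ≤
      ENNReal.ofReal (Nat.factorial (n/2) * 5^n * Real.pi) * Lm := by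
  obtain ⟨⟨s0, t0, y0⟩, hw0⟩ := hne
  set A := a/4 with hA
  set B := b/(4*(n+1)) with hB
  have hApos : 0 < A := by positivity
  have hBpos : 0 < B := by positivity
  set Cd := condV n y0 s0 t0 W A B with hCd
  have hstn : ∀ v, stateV n y0 (extV n s0 t0 v) n ∈ W n := by
    intro v
    have : stateV n y0 (extV n s0 t0 v) n = (s0, t0, y0) := by
      unfold stateV
      have hy : yl n y0 (extV n s0 t0 v) n = y0 := by simp [yl]
      rw [hy, extV_ge _ _ _ _ _ le_rfl, extV_ge _ _ _ _ _ (Nat.le_succ n)]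
      by_cases h : Even n
      · have h' : ¬ Even (n+1) := by rw [Nat.even_add_one]; simpa using h
        simp [h, h']
      · have h' : Even (n+1) := by rw [Nat.even_add_one]; simpa using h
        simp [h, h']
    rw [this]; exact hw0
  have ht := tower n Cd (measurableSet_condV n y0 s0 t0 W hW A B)
    (fun k => if Even k then ENNReal.ofReal (a/2) else ENNReal.ofReal (b/2))
    (by
      intro k hk j hkj hjn v x
      simp only [hCd, condV, mem_setOf_eq, stateV]
      rw [yl_update_gt _ _ _ _ _ _ _ _ _ hkj, extV_update_gt _ _ _ _ _ _ _ _ hkj,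
        extV_update_gt _ _ _ _ _ _ _ (j+1) (by omega), extV_update_gt _ _ _ _ _ _ _ (j+2) (by omega)]
      have e : ∀ i, j < i → extV n s0 t0 (Function.update v ⟨k, hk⟩ x) i = extV n s0 t0 v i :=
        fun i hi => extV_update_gt _ _ _ _ _ _ _ i (by omega)
      have e2 : (∀ i ≤ n + 1, j < i → B ≤ |extV n s0 t0 (Function.update v ⟨k, hk⟩ x) i - extV n s0 t0 v j| ∨ Even i) ↔
          (∀ i ≤ n + 1, j < i → B ≤ |extV n s0 t0 v i - extV n s0 t0 v j| ∨ Even i) := by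
        constructor
        · intro h i hi hji; have := h i hi hji; rwa [e i hji] at this
        · intro h i hi hji; rw [e i hji]; exact h i hi hji
      rw [e2])
    (by
      intro k hk v hv
      have hst : stateV n y0 (extV n s0 t0 v) (k+1) ∈ W (k+1) := by
        rcases (Nat.succ_le_of_lt hk).eq_or_lt with h | h
        · have h' : k + 1 = n := h
          rw [h']; exact hstn v
        · exact (hv (k+1) (by omega) h).1
      set V := extV n s0 t0 v with hV
      have e : ∀ x i, k < i → extV n s0 t0 (Function.update v ⟨k, hk⟩ x) i = V i :=
        fun x i hi => extV_update_gt _ _ _ _ _ _ _ i (by omega)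
      have e0 : ∀ x, extV n s0 t0 (Function.update v ⟨k, hk⟩ x) k = x :=
        fun x => extV_update_self _ _ _ _ _ _ _
      have ey : ∀ x, yl n y0 (extV n s0 t0 (Function.update v ⟨k, hk⟩ x)) (k+1) = yl n y0 V (k+1) :=
        fun x => yl_update_gt _ _ _ _ _ _ _ _ _ (by omega)
      by_cases hke : Even k
      · have hko : ¬ Even (k+1) := by rw [Nat.even_add_one]; simpa using hke
        simp only [if_pos hke]
        simp only [stateV, if_neg hko] at hst
        have hr := href1 k hk _ _ _ hst
        have hsub : {s' : ℝ | (s', V (k+1), yl n y0 V (k+1)) ∈ W k} \ {x | |x - V (k+2)| < A} ⊆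
            {x | Function.update v ⟨k, hk⟩ x ∈ Cd k} := by
          rintro x ⟨hx1, hx2⟩
          simp only [hCd, condV, mem_setOf_eq, stateV, if_pos hke] at hx1 hx2 ⊢
          rw [e0, e x (k+1) (by omega), e x (k+2) (by omega), yl_step _ _ _ _ hk, ey, if_pos hke, add_zero]
          exact ⟨hx1, fun _ => not_lt.1 hx2, fun h => absurd hke h⟩
        refine le_trans ?_ (measure_mono hsub)
        refine le_trans ?_ le_measure_diff
        rw [vol_abs_lt]
        refine le_trans ?_ (tsub_le_tsub_right hr _)
        rw [← ENNReal.ofReal_sub _ (by positivity)]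
        apply ENNReal.ofReal_le_ofReal
        rw [hA]; linarith
      · have hko : Even (k+1) := by rw [Nat.even_add_one]; simpa using hke
        simp only [if_neg hke]
        simp only [stateV, if_pos hko] at hst
        have hr := href2 k hk _ _ _ hst
        have hsub : {t' : ℝ | (V (k+1), t', yl n y0 V (k+1) + V (k+1) • (mom n (V (k+2)) - mom n t')) ∈ W k} \
            (⋃ j ∈ Finset.Ioc k (n+1), {x | |x - V j| < B}) ⊆
            {x | Function.update v ⟨k, hk⟩ x ∈ Cd k} := by
          rintro x ⟨hx1, hx2⟩
          simp only [hCd, condV, mem_setOf_eq, stateV, if_neg hke] at hx1 ⊢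
          rw [e0, e x (k+1) (by omega), yl_step _ _ _ _ hk, ey, if_neg hke, e x (k+1) (by omega), e x (k+2) (by omega), e0]
          refine ⟨hx1, fun h => absurd h hke, fun _ j hj hkj => Or.inl ?_⟩
          rw [e x j hkj]
          by_contra hlt
          apply hx2
          refine mem_iUnion₂.2 ⟨j, Finset.mem_Ioc.2 ⟨hkj, hj⟩, ?_⟩
          rw [abs_sub_comm] at hlt
          exact not_le.1 hlt
        refine le_trans ?_ (measure_mono hsub)
        refine le_trans ?_ le_measure_diff
        have hU : volume (⋃ j ∈ Finset.Ioc k (n+1), {x : ℝ | |x - V j| < B}) ≤ ENNReal.ofReal (b/2) := by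
          refine (measure_biUnion_finset_le _ _).trans ?_
          simp only [vol_abs_lt, Finset.sum_const, Nat.card_Ioc, nsmul_eq_mul]
          rw [← ENNReal.ofReal_natCast, ← ENNReal.ofReal_mul (by positivity)]
          apply ENNReal.ofReal_le_ofReal
          have : ((n + 1 - k : ℕ):ℝ) ≤ n + 1 := by
            have : n + 1 - k ≤ n + 1 := by omega
            exact_mod_cast this
          calc ((n + 1 - k : ℕ):ℝ) * (2 * B) ≤ (n+1) * (2 * B) := by gcongr
            _ = b/2 := by rw [hB]; field_simp; ring
        refine le_trans ?_ (tsub_le_tsub hr hU)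
        rw [← ENNReal.ofReal_sub _ (by positivity)]
        apply ENNReal.ofReal_le_ofReal
        linarith)
  set S := {v : Fin n → ℝ | ∀ k < n, v ∈ Cd k} with hS
  have hSm : MeasurableSet S := by
    have : S = ⋂ k, ⋂ (_ : k < n), Cd k := by ext v; simp [hS]
    rw [this]
    exact MeasurableSet.iInter fun k => MeasurableSet.iInter fun _ => measurableSet_condV n y0 s0 t0 W hW A B k
  have hst0 : ∀ v ∈ S, ∀ k ≤ n, stateV n y0 (extV n s0 t0 v) k ∈ W 0 := by
    intro v hv k hk
    rcases hk.eq_or_lt with rfl | h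
    · exact hanti _ (hstn v)
    · exact hanti _ (hv k h).1
  have hpc := path_count n hn y0 s0 t0 c A B R hApos hBpos hR F hF Lm hL S hSm β
    (by
      intro v hv j hj hjo
      obtain ⟨r, hr⟩ := Nat.not_even_iff_odd.1 hjo
      have he : Even (j-1) := ⟨r, by omega⟩
      have := (hv (j-1) (by omega)).2.1 he
      have e : j - 1 + 2 = j + 1 := by omega
      rwa [e] at this)
    (by
      intro v hv j hj hjo k hkj hko
      by_cases hkn : k < n
      · exact ((hv k hkn).2.2 hko j hj hkj).resolve_right hjo
      · exfalso
        obtain ⟨r, hr⟩ := Nat.not_even_iff_odd.1 hjo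
        obtain ⟨r', hr'⟩ := Nat.not_even_iff_odd.1 hko
        omega)
    (by
      intro v hv j hj hjo
      by_cases hjn : j ≤ n
      · have := hst0 v hv j hjn
        simp only [stateV, if_neg hjo] at this
        exact hJ _ _ _ this
      · have hjn' : j = n + 1 := by omega
        subst hjn'
        have hne : Even n := by rw [Nat.even_add_one] at hjo; simpa using hjo
        have := hst0 v hv n le_rfl
        simp only [stateV, if_pos hne] at this
        exact hJ _ _ _ this)
    (by
      intro v hv
      have := hst0 v hv 0 (by omega)
      simp only [stateV, Even.zero, if_true, zero_add] at this
      exact hβ _ _ _ this (extV n s0 t0 v))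
  refine le_trans ?_ hpc
  gcongr


lemma measurable_mom (n : ℕ) : Measurable (mom n) := by
  unfold mom
  exact measurable_pi_iff.2 fun i => measurable_id.pow_const _

abbrev Inc (n : ℕ) := ℝ × ℝ × (Fin n → ℝ)

/-- fibre over a line -/
def fibL (n : ℕ) (W : Set (Inc n)) (z : Pt n) : Set ℝ := {s | (s, z.1, z.2) ∈ W}
/-- fibre over a point -/
def fibP (n : ℕ) (W : Set (Inc n)) (z : Pt n) : Set ℝ := {t | (z.1, t, z.2 - z.1 • mom n t) ∈ W}

lemma meas_shear (n : ℕ) : Measurable (fun p : Pt n × ℝ => ((p.1.1, p.2, p.1.2 - p.1.1 • mom n p.2) : Inc n)) := by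
  have h := measurable_mom n
  have h1 : Measurable (fun p : Pt n × ℝ => mom n p.2) := h.comp measurable_snd
  refine Measurable.prodMk (measurable_fst.comp measurable_fst) (Measurable.prodMk measurable_snd ?_)
  exact (measurable_snd.comp measurable_fst).sub ((measurable_fst.comp measurable_fst).smul h1)

lemma measurable_volL (n : ℕ) {W : Set (Inc n)} (hW : MeasurableSet W) :
    Measurable (fun z => volume (fibL n W z)) :=
  measurable_measure_prodMk_right (μ := (volume : Measure ℝ)) hW

lemma measurable_volP (n : ℕ) {W : Set (Inc n)} (hW : MeasurableSet W) :
    Measurable (fun z => volume (fibP n W z)) :=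
  measurable_measure_prodMk_left (ν := (volume : Measure ℝ)) ((meas_shear n) hW)

lemma measSet_fibP (n : ℕ) {W : Set (Inc n)} (hW : MeasurableSet W) (z : Pt n) : MeasurableSet (fibP n W z) :=
  ((meas_shear n).comp measurable_prodMk_left) hW

lemma vol_line (n : ℕ) {W : Set (Inc n)} (hW : MeasurableSet W) :
    volume W = ∫⁻ z : Pt n, volume (fibL n W z) := by
  rw [Measure.volume_eq_prod, Measure.prod_apply_symm hW]
  rfl

lemma vol_point (n : ℕ) {W : Set (Inc n)} (hW : MeasurableSet W) :
    volume W = ∫⁻ z : Pt n, volume (fibP n W z) := by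
  have h1 : volume W = ∫⁻ s : ℝ, ∫⁻ t : ℝ, volume {y | (s, t, y) ∈ W} := by
    rw [Measure.volume_eq_prod, Measure.prod_apply hW]
    refine lintegral_congr fun s => ?_
    rw [Measure.volume_eq_prod, Measure.prod_apply (measurable_prodMk_left hW)]
    rfl
  have h2 : ∫⁻ z : Pt n, volume (fibP n W z) = ∫⁻ s : ℝ, ∫⁻ x : Fin n → ℝ, volume (fibP n W (s, x)) := by
    rw [Measure.volume_eq_prod, lintegral_prod _ (measurable_volP n hW).aemeasurable]
  rw [h1, h2]
  refine lintegral_congr fun s => ?_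
  set B : Set (ℝ × (Fin n → ℝ)) := {q | (s, q.1, q.2 - s • mom n q.1) ∈ W} with hB
  have hBm : MeasurableSet B := by
    refine Measurable.prodMk measurable_const (Measurable.prodMk measurable_fst ?_) hW
    exact measurable_snd.sub (((measurable_mom n).comp measurable_fst).const_smul s)
  have h3 := Measure.prod_apply (μ := (volume : Measure ℝ)) (ν := (volume : Measure (Fin n → ℝ))) hBm
  have h4 := Measure.prod_apply_symm (μ := (volume : Measure ℝ)) (ν := (volume : Measure (Fin n → ℝ))) hBm
  have h5 : ∫⁻ x : Fin n → ℝ, volume (fibP n W (s, x)) = ∫⁻ x : Fin n → ℝ, volume ((fun t => (t, x)) ⁻¹' B) := rfl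
  rw [h5, ← h4, h3]
  refine lintegral_congr fun t => ?_
  have : (Prod.mk t ⁻¹' B) = (fun y => y + (- (s • mom n t))) ⁻¹' {y | (s, t, y) ∈ W} := by
    ext y; simp [hB, sub_eq_add_neg]
  rw [this, measure_preimage_add_right]

/-- refined incidence set -/
def refine1 (n : ℕ) (a b : ℝ≥0∞) (W : Set (Inc n)) : Set (Inc n) :=
  W ∩ ({w | a ≤ volume (fibL n W (w.2.1, w.2.2))} ∩
    {w | b ≤ volume (fibP n W (w.1, w.2.2 + w.1 • mom n w.2.1))})

lemma meas_line (n : ℕ) : Measurable (fun w : Inc n => ((w.2.1, w.2.2) : Pt n)) := by fun_prop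

lemma meas_point (n : ℕ) : Measurable (fun w : Inc n => ((w.1, w.2.2 + w.1 • mom n w.2.1) : Pt n)) := by
  have h := measurable_mom n
  have h1 : Measurable (fun w : Inc n => mom n w.2.1) := h.comp (by fun_prop)
  refine Measurable.prodMk measurable_fst (Measurable.add (by fun_prop) (measurable_fst.smul h1))

lemma meas_refine1 (n : ℕ) (a b : ℝ≥0∞) {W : Set (Inc n)} (hW : MeasurableSet W) :
    MeasurableSet (refine1 n a b W) := by
  refine hW.inter (MeasurableSet.inter ?_ ?_)
  · exact measurableSet_le measurable_const ((measurable_volL n hW).comp (meas_line n))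
  · exact measurableSet_le measurable_const ((measurable_volP n hW).comp (meas_point n))

lemma vol_refine1 (n : ℕ) (a b : ℝ≥0∞) {W : Set (Inc n)} (hW : MeasurableSet W)
    (F0 E0 : Set (Pt n)) (hF0 : MeasurableSet F0) (hE0 : MeasurableSet E0)
    (hF : ∀ w ∈ W, (w.2.1, w.2.2) ∈ F0) (hE : ∀ w ∈ W, (w.1, w.2.2 + w.1 • mom n w.2.1) ∈ E0) :
    volume W ≤ volume (refine1 n a b W) + (a * volume F0 + b * volume E0) := by
  set B1 : Set (Inc n) := W ∩ {w | volume (fibL n W (w.2.1, w.2.2)) < a} with hB1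
  set B2 : Set (Inc n) := W ∩ {w | volume (fibP n W (w.1, w.2.2 + w.1 • mom n w.2.1)) < b} with hB2
  have hB1m : MeasurableSet B1 :=
    hW.inter (measurableSet_lt ((measurable_volL n hW).comp (meas_line n)) measurable_const)
  have hB2m : MeasurableSet B2 :=
    hW.inter (measurableSet_lt ((measurable_volP n hW).comp (meas_point n)) measurable_const)
  have hsub : W ⊆ refine1 n a b W ∪ (B1 ∪ B2) := by
    intro w hw
    by_cases h1 : volume (fibL n W (w.2.1, w.2.2)) < a
    · exact Or.inr (Or.inl ⟨hw, h1⟩)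
    by_cases h2 : volume (fibP n W (w.1, w.2.2 + w.1 • mom n w.2.1)) < b
    · exact Or.inr (Or.inr ⟨hw, h2⟩)
    exact Or.inl ⟨hw, not_lt.1 h1, not_lt.1 h2⟩
  have v1 : volume B1 ≤ a * volume F0 := by
    rw [vol_line n hB1m, ← lintegral_indicator_const hF0]
    refine lintegral_mono fun z => ?_
    by_cases hz : ∃ s, s ∈ fibL n B1 z
    · obtain ⟨s, hs⟩ := hz
      rw [indicator_of_mem (hF _ hs.1)]
      have : volume (fibL n W z) < a := hs.2
      refine le_trans (measure_mono ?_) this.le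
      intro s' hs'; exact hs'.1
    · have : fibL n B1 z = ∅ := by
        rw [Set.eq_empty_iff_forall_notMem]; push Not at hz; exact hz
      rw [this]; simp
  have v2 : volume B2 ≤ b * volume E0 := by
    rw [vol_point n hB2m, ← lintegral_indicator_const hE0]
    refine lintegral_mono fun z => ?_
    by_cases hz : ∃ s, s ∈ fibP n B2 z
    · obtain ⟨t, hs⟩ := hz
      have e : ((z.1, z.2 - z.1 • mom n t + z.1 • mom n t) : Pt n) = z := by simp
      have hz1 := hE _ hs.1
      simp only at hz1
      rw [e] at hz1
      rw [indicator_of_mem hz1]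
      have hz2 : volume (fibP n W (z.1, z.2 - z.1 • mom n t + z.1 • mom n t)) < b := hs.2
      rw [e] at hz2
      refine le_trans (measure_mono ?_) hz2.le
      intro s' hs'; exact hs'.1
    · have : fibP n B2 z = ∅ := by
        rw [Set.eq_empty_iff_forall_notMem]; push Not at hz; exact hz
      rw [this]; simp
  calc volume W ≤ volume (refine1 n a b W) + (volume B1 + volume B2) :=
        (measure_mono hsub).trans ((measure_union_le _ _).trans (by gcongr; exact measure_union_le _ _))
    _ ≤ _ := by gcongr

def refineN (n : ℕ) (a b : ℝ≥0∞) (W : Set (Inc n)) : ℕ → Set (Inc n)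
  | 0 => W
  | k+1 => refine1 n a b (refineN n a b W k)

lemma refineN_sub (n : ℕ) (a b : ℝ≥0∞) (W : Set (Inc n)) (k : ℕ) : refineN n a b W k ⊆ W := by
  induction k with
  | zero => exact subset_rfl
  | succ k ih => exact fun w hw => ih hw.1

lemma refineN_meas (n : ℕ) (a b : ℝ≥0∞) {W : Set (Inc n)} (hW : MeasurableSet W) (k : ℕ) :
    MeasurableSet (refineN n a b W k) := by
  induction k with
  | zero => exact hW
  | succ k ih => exact meas_refine1 n a b ih

lemma refineN_vol (n : ℕ) (a b : ℝ≥0∞) {W : Set (Inc n)} (hW : MeasurableSet W)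
    (F0 E0 : Set (Pt n)) (hF0 : MeasurableSet F0) (hE0 : MeasurableSet E0)
    (hF : ∀ w ∈ W, (w.2.1, w.2.2) ∈ F0) (hE : ∀ w ∈ W, (w.1, w.2.2 + w.1 • mom n w.2.1) ∈ E0) (k : ℕ) :
    volume W ≤ volume (refineN n a b W k) + k * (a * volume F0 + b * volume E0) := by
  induction k with
  | zero => simp [refineN]
  | succ k ih =>
    refine ih.trans ?_
    have := vol_refine1 n a b (refineN_meas n a b hW k) F0 E0 hF0 hE0
      (fun w hw => hF w (refineN_sub n a b W k hw)) (fun w hw => hE w (refineN_sub n a b W k hw))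
    calc _ ≤ (volume (refine1 n a b (refineN n a b W k)) + (a * volume F0 + b * volume E0)) + k * (a * volume F0 + b * volume E0) := by gcongr
      _ = _ := by simp only [refineN]; push_cast; ring

/-- path theorem from a large incidence set -/
lemma path_from_set (n : ℕ) (hn : 2 ≤ n) (a b R c : ℝ) (ha : 0 < a) (hb : 0 < b) (hR : 0 < R) (β : ℝ≥0∞)
    (F : Set (Pt n)) (hF : MeasurableSet F) (Lm : ℝ≥0∞) (hL : ∀ t, sliceVol n F t ≤ Lm)
    (W : Set (Inc n)) (hW : MeasurableSet W)
    (F0 E0 : Set (Pt n)) (hF0 : MeasurableSet F0) (hE0 : MeasurableSet E0)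
    (hWF : ∀ w ∈ W, (w.2.1, w.2.2) ∈ F0) (hWE : ∀ w ∈ W, (w.1, w.2.2 + w.1 • mom n w.2.1) ∈ E0)
    (hbig : n * (ENNReal.ofReal a * volume F0 + ENNReal.ofReal b * volume E0) < volume W)
    (hJ : ∀ z ∈ F0, |z.1 - c| ≤ R/2)
    (hβ : ∀ z ∈ E0, ∀ p : ℕ → ℝ, β ≤ volume {t' : ℝ | (t', z.2 - z.1 • mom n t') ∈ F ∧
      ∀ j ≤ n+1, ¬ Even j → R/2 ≤ |p j - t'|}) :
    β * (∏ k ∈ Finset.range n, if Even k then ENNReal.ofReal (a/2) else ENNReal.ofReal (b/2)) *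
      ENNReal.ofReal ((a/4) ^ (n/2) * (b/(4*(n+1))) ^ (expE n) * R ^ (n-1)) ≤
      ENNReal.ofReal (Nat.factorial (n/2) * 5^n * Real.pi) * Lm := by
  have hv := refineN_vol n (ENNReal.ofReal a) (ENNReal.ofReal b) hW F0 E0 hF0 hE0 hWF hWE n
  refine path_main n hn a b R c ha hb hR β F hF Lm hL (refineN n (ENNReal.ofReal a) (ENNReal.ofReal b) W)
    (refineN_meas n _ _ hW) (refineN_sub n _ _ W) ?_ ?_ ?_ ?_ ?_
  · by_contra hne
    rw [Set.not_nonempty_iff_eq_empty] at hne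
    rw [hne, measure_empty, zero_add] at hv
    exact absurd hbig (not_lt.2 hv)
  · intro k _ s t y h
    exact h.2.1
  · intro k _ s t y h
    have h' := h.2.2
    refine le_trans h' (le_of_eq ?_)
    congr 1
    ext t'
    simp only [fibP, mem_setOf_eq]
    have : y + s • mom n t - s • mom n t' = y + s • (mom n t - mom n t') := by
      rw [smul_sub]; abel
    rw [this]
  · intro s t y h
    exact hJ _ (hWF _ h)
  · intro s t y h p
    refine le_trans (hβ _ (hWE _ h) p) (le_of_eq ?_)
    congr 1
    ext t'
    simp only [mem_setOf_eq]
    have : y + s • mom n t - s • mom n t' = y + s • (mom n t - mom n t') := by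
      rw [smul_sub]; abel
    rw [this]


/-- grid interval of length `h` -/
def gridJ (h : ℝ) (j : ℤ) : Set ℝ := {t | ⌊t / h⌋ = j}

lemma meas_gridJ (h : ℝ) (j : ℤ) : MeasurableSet (gridJ h j) :=
  (Int.measurable_floor.comp (measurable_id.div_const h)) (measurableSet_singleton j)

lemma gridJ_mem {h : ℝ} (hh : 0 < h) {j : ℤ} {t : ℝ} (ht : t ∈ gridJ h j) : j * h ≤ t ∧ t < (j+1) * h := by
  have ht' : ⌊t / h⌋ = j := ht
  rw [Int.floor_eq_iff] at ht'
  exact ⟨(le_div_iff₀ hh).1 ht'.1, (div_lt_iff₀ hh).1 ht'.2⟩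

lemma vol_gridJ {h : ℝ} (hh : 0 < h) (j : ℤ) : volume (gridJ h j) ≤ ENNReal.ofReal h := by
  have : gridJ h j ⊆ Ico (j*h) ((j+1)*h) := fun t ht => gridJ_mem hh ht
  refine (measure_mono this).trans ?_
  rw [Real.volume_Ico]
  apply ENNReal.ofReal_le_ofReal
  linarith

lemma gridJ_center {h : ℝ} (hh : 0 < h) {j : ℤ} {t : ℝ} (ht : t ∈ gridJ h j) : |t - (j + 1/2) * h| ≤ h/2 := by
  obtain ⟨h1, h2⟩ := gridJ_mem hh ht
  rw [abs_le]; constructor <;> linarith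

lemma sum_gridJ (h : ℝ) (T : Set ℝ) (hT : MeasurableSet T) :
    ∑' j : ℤ, volume (T ∩ gridJ h j) = volume T := by
  rw [← measure_iUnion]
  · congr 1
    ext t
    simp only [mem_iUnion, mem_inter_iff]
    constructor
    · rintro ⟨_, h, _⟩; exact h
    · intro ht; exact ⟨⌊t/h⌋, ht, rfl⟩
  · intro i j hij
    refine Set.disjoint_left.2 ?_
    rintro t ⟨_, h1⟩ ⟨_, h2⟩
    exact hij (h1.symm.trans h2)
  · exact fun j => hT.inter (meas_gridJ h j)

lemma ball_grid {h : ℝ} (hh : 0 < h) (p t : ℝ) (ht : |p - t| < h) :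
    t ∈ gridJ h (⌊p/h⌋ - 1) ∪ (gridJ h ⌊p/h⌋ ∪ gridJ h (⌊p/h⌋ + 1)) := by
  have h1 : |p/h - t/h| < 1 := by
    rw [← sub_div, abs_div, abs_of_pos hh, div_lt_one hh]; exact ht
  obtain ⟨h2, h3⟩ := abs_lt.1 h1
  have f1 := Int.floor_le (p/h)
  have f2 := Int.lt_floor_add_one (p/h)
  have g1 := Int.floor_le (t/h)
  have g2 := Int.lt_floor_add_one (t/h)
  have k1 : ⌊t/h⌋ < ⌊p/h⌋ + 2 := by
    have : (⌊t/h⌋:ℝ) < ⌊p/h⌋ + 2 := by linarith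
    exact_mod_cast this
  have k2 : ⌊p/h⌋ - 2 < ⌊t/h⌋ := by
    have : (⌊p/h⌋:ℝ) - 2 < ⌊t/h⌋ := by linarith
    exact_mod_cast this
  have : ⌊t/h⌋ = ⌊p/h⌋ - 1 ∨ ⌊t/h⌋ = ⌊p/h⌋ ∨ ⌊t/h⌋ = ⌊p/h⌋ + 1 := by omega
  exact this

lemma selection (T : Set ℝ) (β c : ℝ) (hβ : 0 < β) (hc : 0 < c) (hc4 : c ≤ 1/4)
    (h1 : ENNReal.ofReal β ≤ volume T) (h2 : volume T < ⊤) :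
    ∃ i : ℕ, (∃ j : ℤ, ENNReal.ofReal c * volume T ≤ volume (T ∩ gridJ (c*β*2^i) j)) ∧
      ∀ j : ℤ, volume (T ∩ gridJ (c*β*2^i/2) j) < ENNReal.ofReal c * volume T := by
  classical
  obtain ⟨τ, hτ⟩ : ∃ τ : ℝ, volume T = ENNReal.ofReal τ := ⟨_, (ENNReal.ofReal_toReal h2.ne).symm⟩
  have hβτ : β ≤ τ := by
    rw [hτ] at h1
    by_contra h
    push Not at h
    exact absurd h1 (not_le.2 ((ENNReal.ofReal_lt_ofReal_iff hβ).2 h))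
  have hτ0 : 0 < τ := by linarith
  have hex : ∃ i : ℕ, ∃ j : ℤ, ENNReal.ofReal c * volume T ≤ volume (T ∩ gridJ (c*β*2^i) j) := by
    by_contra hno
    push Not at hno
    have hmono : Monotone (fun i : ℕ => T ∩ Ico (-(c*β*2^i)) (c*β*2^i)) := by
      intro i j hij
      refine inter_subset_inter_right _ (Ico_subset_Ico ?_ ?_)
      · apply neg_le_neg; gcongr; norm_num
      · gcongr; norm_num
    have hU : (⋃ i : ℕ, T ∩ Ico (-(c*β*2^i)) (c*β*2^i)) = T := by
      ext t
      simp only [mem_iUnion, mem_inter_iff, mem_Ico]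
      constructor
      · rintro ⟨_, h, _⟩; exact h
      · intro ht
        obtain ⟨i, hi⟩ := pow_unbounded_of_one_lt (|t|/(c*β)) (one_lt_two)
        have : |t| < c*β*2^i := by
          rw [div_lt_iff₀ (by positivity)] at hi; linarith
        exact ⟨i, ht, (abs_lt.1 this).1.le, (abs_lt.1 this).2⟩
    have htend := tendsto_measure_iUnion_atTop (μ := (volume : Measure ℝ)) hmono
    rw [hU, hτ] at htend
    have hev := htend.eventually (lt_mem_nhds (show ENNReal.ofReal (τ/2) < ENNReal.ofReal τ from
      (ENNReal.ofReal_lt_ofReal_iff hτ0).2 (by linarith)))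
    obtain ⟨i, hi⟩ := hev.exists
    have hsub : T ∩ Ico (-(c*β*2^i)) (c*β*2^i) ⊆ (T ∩ gridJ (c*β*2^i) (-1)) ∪ (T ∩ gridJ (c*β*2^i) 0) := by
      rintro t ⟨ht, ht1, ht2⟩
      have hp : 0 < c*β*2^i := by positivity
      by_cases h0 : t < 0
      · left; refine ⟨ht, ?_⟩
        have : ⌊t / (c*β*2^i)⌋ = -1 := by
          rw [Int.floor_eq_iff]
          constructor
          · rw [le_div_iff₀ hp]; push_cast; linarith
          · rw [div_lt_iff₀ hp]; push_cast; linarith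
        exact this
      · right; refine ⟨ht, ?_⟩
        push Not at h0
        have : ⌊t / (c*β*2^i)⌋ = 0 := by
          rw [Int.floor_eq_iff]
          constructor
          · rw [le_div_iff₀ hp]; push_cast; linarith
          · rw [div_lt_iff₀ hp]; push_cast; linarith
        exact this
    have hlt : volume (T ∩ Ico (-(c*β*2^i)) (c*β*2^i)) ≤ ENNReal.ofReal (τ/2) := by
      refine (measure_mono hsub).trans ((measure_union_le _ _).trans ?_)
      refine (add_le_add (hno i (-1)).le (hno i 0).le).trans ?_
      rw [hτ, ← ENNReal.ofReal_mul hc.le, ← ENNReal.ofReal_add (by positivity) (by positivity)]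
      apply ENNReal.ofReal_le_ofReal
      nlinarith
    exact absurd hi (not_lt.2 hlt)
  refine ⟨Nat.find hex, Nat.find_spec hex, ?_⟩
  intro j
  rcases Nat.eq_zero_or_pos (Nat.find hex) with h0 | h0
  · rw [h0]
    refine lt_of_le_of_lt (measure_mono inter_subset_right) (lt_of_le_of_lt (vol_gridJ (by positivity) j) ?_)
    rw [hτ, ← ENNReal.ofReal_mul hc.le, ENNReal.ofReal_lt_ofReal_iff (by positivity)]
    have : c * β ≤ c * τ := by gcongr
    have : 0 < c * β := by positivity
    simp; linarith
  · have hm := Nat.find_min hex (m := Nat.find hex - 1) (by omega)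
    push Not at hm
    have e : c*β*2^(Nat.find hex)/2 = c*β*2^(Nat.find hex - 1) := by
      have : (2:ℝ)^(Nat.find hex) = 2^(Nat.find hex - 1) * 2 := by
        rw [← pow_succ]; congr 1; omega
      rw [this]; ring
    rw [e]
    exact hm j

lemma good_fibre (n : ℕ) (T : Set ℝ) (h : ℝ) (hh : 0 < h) (hT2 : volume T < ⊤)
    (hs : ∀ j : ℤ, volume (T ∩ gridJ h j) ≤ ENNReal.ofReal (1/(8*(n+2))) * volume T) (p : ℕ → ℝ) :
    volume T ≤ 2 * volume (T ∩ {t' | ∀ j ≤ n+1, ¬ Even j → h ≤ |p j - t'|}) := by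
  set G := T ∩ {t' | ∀ j ≤ n+1, ¬ Even j → h ≤ |p j - t'|} with hG
  have hsub : T ⊆ G ∪ ⋃ j ∈ Finset.range (n+2), (T ∩ gridJ h (⌊p j/h⌋ - 1) ∪ (T ∩ gridJ h ⌊p j/h⌋ ∪ T ∩ gridJ h (⌊p j/h⌋ + 1))) := by
    intro t ht
    by_cases hg : ∀ j ≤ n+1, ¬ Even j → h ≤ |p j - t|
    · exact Or.inl ⟨ht, hg⟩
    · push Not at hg
      obtain ⟨j, hj, _, hlt⟩ := hg
      right
      refine mem_iUnion₂.2 ⟨j, Finset.mem_range.2 (by omega), ?_⟩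
      rcases ball_grid hh _ _ hlt with h1 | h1 | h1
      · exact Or.inl ⟨ht, h1⟩
      · exact Or.inr (Or.inl ⟨ht, h1⟩)
      · exact Or.inr (Or.inr ⟨ht, h1⟩)
  obtain ⟨τ, hτ0, hτ⟩ : ∃ τ : ℝ, 0 ≤ τ ∧ volume T = ENNReal.ofReal τ :=
    ⟨_, ENNReal.toReal_nonneg, (ENNReal.ofReal_toReal hT2.ne).symm⟩
  have hU : volume (⋃ j ∈ Finset.range (n+2), (T ∩ gridJ h (⌊p j/h⌋ - 1) ∪ (T ∩ gridJ h ⌊p j/h⌋ ∪ T ∩ gridJ h (⌊p j/h⌋ + 1))))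
      ≤ ENNReal.ofReal (τ/2) := by
    refine (measure_biUnion_finset_le _ _).trans ?_
    calc _ ≤ ∑ _j ∈ Finset.range (n+2), ENNReal.ofReal (3 * (1/(8*(n+2)) * τ)) := by
          refine Finset.sum_le_sum fun j _ => ?_
          refine (measure_union_le _ _).trans ((add_le_add le_rfl (measure_union_le _ _)).trans ?_)
          refine (add_le_add (hs _) (add_le_add (hs _) (hs _))).trans (le_of_eq ?_)
          rw [hτ, ← ENNReal.ofReal_mul (by positivity), ← ENNReal.ofReal_add (by positivity) (by positivity),
            ← ENNReal.ofReal_add (by positivity) (by positivity)]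
          congr 1; ring
      _ = ENNReal.ofReal ((n+2) * (3 * (1/(8*(n+2)) * τ))) := by
          rw [Finset.sum_const, Finset.card_range, nsmul_eq_mul, ← ENNReal.ofReal_natCast, ← ENNReal.ofReal_mul (by positivity)]
          push_cast; rfl
      _ ≤ _ := by
          apply ENNReal.ofReal_le_ofReal
          have : ((n:ℝ)+2) * (3 * (1/(8*(n+2)) * τ)) = 3/8 * τ := by field_simp
          rw [this]; linarith
  have hmain := (measure_mono hsub).trans (measure_union_le (μ := (volume : Measure ℝ)) _ _)
  have h3 := hmain.trans (add_le_add le_rfl hU)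
  have hGfin : volume G ≠ ⊤ := ((measure_mono inter_subset_left).trans_lt hT2).ne
  obtain ⟨γ, hγ0, hγ⟩ : ∃ τ : ℝ, 0 ≤ τ ∧ volume G = ENNReal.ofReal τ :=
    ⟨_, ENNReal.toReal_nonneg, (ENNReal.ofReal_toReal hGfin).symm⟩
  rw [hγ, hτ, ← ENNReal.ofReal_add hγ0 (by positivity), ENNReal.ofReal_le_ofReal_iff (by positivity)] at h3
  rw [hγ, hτ, ← ENNReal.ofReal_ofNat, ← ENNReal.ofReal_mul (by norm_num)]
  apply ENNReal.ofReal_le_ofReal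
  linarith


/-- incidences with a set of lines, `t` restricted to `K` -/
def incF (n : ℕ) (F : Set (Pt n)) (K : Set ℝ) : Set (Inc n) :=
  (fun w : Inc n => ((w.2.1, w.2.2) : Pt n)) ⁻¹' F ∩ (fun w : Inc n => w.2.1) ⁻¹' K

def tSet (n : ℕ) (F : Set (Pt n)) (z : Pt n) : Set ℝ := {t | (t, z.2 - z.1 • mom n t) ∈ F}

lemma meas_incF (n : ℕ) {F : Set (Pt n)} (hF : MeasurableSet F) {K : Set ℝ} (hK : MeasurableSet K) :
    MeasurableSet (incF n F K) :=
  (meas_line n hF).inter ((by fun_prop : Measurable (fun w : Inc n => w.2.1)) hK)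

lemma fibP_incF (n : ℕ) (F : Set (Pt n)) (K : Set ℝ) (z : Pt n) : fibP n (incF n F K) z = tSet n F z ∩ K := by
  ext t; simp [fibP, incF, tSet]

lemma meas_tau (n : ℕ) {F : Set (Pt n)} (hF : MeasurableSet F) {K : Set ℝ} (hK : MeasurableSet K) :
    Measurable (fun z => volume (tSet n F z ∩ K)) := by
  simp_rw [← fibP_incF]
  exact measurable_volP n (meas_incF n hF hK)

lemma meas_tau0 (n : ℕ) {F : Set (Pt n)} (hF : MeasurableSet F) :
    Measurable (fun z => volume (tSet n F z)) := by
  have := meas_tau n hF MeasurableSet.univ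
  simpa using this

lemma meas_tSet (n : ℕ) {F : Set (Pt n)} (hF : MeasurableSet F) (z : Pt n) : MeasurableSet (tSet n F z) := by
  have := measSet_fibP n (meas_incF n hF MeasurableSet.univ) z
  rwa [fibP_incF, inter_univ] at this

/-- selected points at scale `R`, interval `j` -/
def selE (n : ℕ) (E F : Set (Pt n)) (β c R : ℝ) (j : ℤ) : Set (Pt n) :=
  E ∩ ({z | ENNReal.ofReal β ≤ volume (tSet n F z)} ∩ ({z | volume (tSet n F z) < ⊤} ∩
    ({z | ENNReal.ofReal c * volume (tSet n F z) ≤ volume (tSet n F z ∩ gridJ R j)} ∩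
     ⋂ j' : ℤ, {z | volume (tSet n F z ∩ gridJ (R/2) j') < ENNReal.ofReal c * volume (tSet n F z)})))

lemma meas_selE (n : ℕ) {E F : Set (Pt n)} (hE : MeasurableSet E) (hF : MeasurableSet F) (β c R : ℝ) (j : ℤ) :
    MeasurableSet (selE n E F β c R j) := by
  have h0 := meas_tau0 n hF
  refine hE.inter ((measurableSet_le measurable_const h0).inter ((measurableSet_lt h0 measurable_const).inter
    (MeasurableSet.inter ?_ (MeasurableSet.iInter fun j' => ?_))))
  · exact measurableSet_le (measurable_const.mul h0) (meas_tau n hF (meas_gridJ _ _))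
  · exact measurableSet_lt (meas_tau n hF (meas_gridJ _ _)) (measurable_const.mul h0)

lemma sum_selE (n : ℕ) {E F : Set (Pt n)} (hE : MeasurableSet E) (hF : MeasurableSet F) (β c R : ℝ)
    (hβ : 0 < β) :
    ∑' j, ENNReal.ofReal c * volume (selE n E F β c R j) ≤ volume E := by
  have h1 : ∀ j, ENNReal.ofReal c * volume (selE n E F β c R j) =
      ∫⁻ z, (selE n E F β c R j).indicator (fun _ => ENNReal.ofReal c) z := by
    intro j; rw [lintegral_indicator_const (meas_selE n hE hF β c R j)]
  simp_rw [h1]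
  rw [← lintegral_tsum fun j => (measurable_const.indicator (meas_selE n hE hF β c R j)).aemeasurable]
  rw [← lintegral_indicator_one hE]
  refine lintegral_mono fun z => ?_
  by_cases hz : ∃ j, z ∈ selE n E F β c R j
  · obtain ⟨j0, hj0⟩ := hz
    rw [indicator_of_mem hj0.1]
    have hpos : volume (tSet n F z) ≠ 0 := by
      have : ENNReal.ofReal β ≤ volume (tSet n F z) := hj0.2.1
      exact ((ENNReal.ofReal_pos.2 hβ).trans_le this).ne'
    have hfin : volume (tSet n F z) ≠ ⊤ := ne_of_lt hj0.2.2.1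
    have hle : (∑' j, (selE n E F β c R j).indicator (fun _ => ENNReal.ofReal c) z) * volume (tSet n F z) ≤ 1 * volume (tSet n F z) := by
      rw [← ENNReal.tsum_mul_right, one_mul]
      calc _ ≤ ∑' j, volume (tSet n F z ∩ gridJ R j) := by
            refine ENNReal.tsum_le_tsum fun j => ?_
            by_cases hj : z ∈ selE n E F β c R j
            · rw [indicator_of_mem hj]; exact hj.2.2.2.1
            · rw [indicator_of_notMem hj]; simp
        _ = _ := sum_gridJ R _ (meas_tSet n hF z)
    exact (ENNReal.mul_le_mul_iff_left hpos hfin).1 hle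
  · push Not at hz
    have : ∀ j, (selE n E F β c R j).indicator (fun _ => ENNReal.ofReal c) z = 0 :=
      fun j => indicator_of_notMem (hz j) _
    simp [this]

def selW (n : ℕ) (E F : Set (Pt n)) (β c R : ℝ) (j : ℤ) : Set (Inc n) :=
  (fun w : Inc n => ((w.1, w.2.2 + w.1 • mom n w.2.1) : Pt n)) ⁻¹' (selE n E F β c R j) ∩ incF n F (gridJ R j)

lemma meas_selW (n : ℕ) {E F : Set (Pt n)} (hE : MeasurableSet E) (hF : MeasurableSet F) (β c R : ℝ) (j : ℤ) :
    MeasurableSet (selW n E F β c R j) :=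
  (meas_point n (meas_selE n hE hF β c R j)).inter (meas_incF n hF (meas_gridJ R j))

lemma vol_selW (n : ℕ) {E F : Set (Pt n)} (hE : MeasurableSet E) (hF : MeasurableSet F) (β c R : ℝ) (j : ℤ) :
    ∫⁻ z in selE n E F β c R j, ENNReal.ofReal c * volume (tSet n F z) ≤ volume (selW n E F β c R j) := by
  rw [vol_point n (meas_selW n hE hF β c R j), ← lintegral_indicator (meas_selE n hE hF β c R j)]
  refine lintegral_mono fun z => ?_
  by_cases hz : z ∈ selE n E F β c R j
  · rw [indicator_of_mem hz]
    have : fibP n (selW n E F β c R j) z = tSet n F z ∩ gridJ R j := by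
      rw [← fibP_incF]
      ext t; simp [fibP, selW, hz]
    rw [this]; exact hz.2.2.2.1
  · rw [indicator_of_notMem hz]; simp

lemma sum_F_grid (n : ℕ) {F : Set (Pt n)} (hF : MeasurableSet F) (R : ℝ) :
    ∑' j : ℤ, volume (F ∩ Prod.fst ⁻¹' (gridJ R j)) = volume F := by
  rw [← measure_iUnion]
  · congr 1
    ext z
    simp only [mem_iUnion, mem_inter_iff]
    constructor
    · rintro ⟨_, h, _⟩; exact h
    · intro hz; exact ⟨⌊z.1/R⌋, hz, rfl⟩
  · intro i j hij
    refine Set.disjoint_left.2 ?_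
    rintro z ⟨_, h1⟩ ⟨_, h2⟩
    exact hij (Eq.trans (Eq.symm h1) h2)
  · exact fun j => hF.inter (measurable_fst (meas_gridJ R j))

/-- multi-scale pigeonhole -/
lemma pigeon (n : ℕ) (hn : 1 ≤ n) {E F : Set (Pt n)} (hE : MeasurableSet E) (hF : MeasurableSet F)
    (X e f c x : ℝ) (hX : 0 < X) (he : 0 < e) (hf : 0 < f) (hc : 0 < c) (hc4 : c ≤ 1/4) (hx0 : 0 < x) (hx1 : x < 1)
    (hEv : volume E = ENNReal.ofReal e) (hFv : volume F = ENNReal.ofReal f)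
    (hXv : ∫⁻ z in E, volume (tSet n F z) = ENNReal.ofReal X) :
    ∃ (i : ℕ) (j : ℤ),
      n * (ENNReal.ofReal (c^2*(1-x)/(4*n) * x^i * (X/f)) * volume (F ∩ Prod.fst ⁻¹' (gridJ (c*(X/(2*e))*2^i) j)) +
        ENNReal.ofReal (c^2*(1-x)/(4*n) * x^i * (X/(2*e))) * volume (selE n E F (X/(2*e)) c (c*(X/(2*e))*2^i) j))
      < volume (selW n E F (X/(2*e)) c (c*(X/(2*e))*2^i) j) := by
  set β := X/(2*e) with hβ
  have hβ0 : 0 < β := by positivity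
  have hn0 : (0:ℝ) < n := by exact_mod_cast hn
  set c' := c^2*(1-x)/(4*n) with hc'
  have hc'0 : 0 < c' := by have : 0 < 1 - x := by linarith
                           positivity
  by_contra hno
  push Not at hno
  have hτ := meas_tau0 n hF
  -- lower bound
  set E1 : Set (Pt n) := E ∩ ({z | ENNReal.ofReal β ≤ volume (tSet n F z)} ∩ {z | volume (tSet n F z) < ⊤}) with hE1
  have hE1m : MeasurableSet E1 := hE.inter ((measurableSet_le measurable_const hτ).inter (measurableSet_lt hτ measurable_const))
  have hlow : ENNReal.ofReal (X/2) ≤ ∫⁻ z in E1, volume (tSet n F z) := by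
    have hfin : ∀ᵐ z ∂(volume.restrict E), volume (tSet n F z) < ⊤ :=
      ae_lt_top hτ (by rw [hXv]; exact ENNReal.ofReal_ne_top)
    have hsplit : ENNReal.ofReal X ≤ (∫⁻ z in E1, volume (tSet n F z)) + ENNReal.ofReal (X/2) := by
      rw [← hXv, ← lintegral_indicator hE1m]
      have hconst : ENNReal.ofReal (X/2) = ∫⁻ z in E, ENNReal.ofReal β := by
        rw [setLIntegral_const, hEv, ← ENNReal.ofReal_mul hβ0.le]
        congr 1; rw [hβ]; field_simp
      rw [hconst]
      calc ∫⁻ z in E, volume (tSet n F z) ≤ ∫⁻ z in E, (E1.indicator (fun z => volume (tSet n F z)) z + ENNReal.ofReal β) := by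
            refine lintegral_mono_ae ?_
            filter_upwards [hfin, ae_restrict_mem hE] with z hz hzE
            by_cases h : ENNReal.ofReal β ≤ volume (tSet n F z)
            · rw [indicator_of_mem (show z ∈ E1 from ⟨hzE, h, hz⟩)]; exact le_self_add
            · exact le_add_of_nonneg_of_le zero_le (not_le.1 h).le
        _ = (∫⁻ z in E, E1.indicator (fun z => volume (tSet n F z)) z) + ∫⁻ z in E, ENNReal.ofReal β := by
            rw [lintegral_add_right _ measurable_const]
        _ ≤ _ := by gcongr; exact Measure.restrict_le_self
    have : ENNReal.ofReal X = ENNReal.ofReal (X/2) + ENNReal.ofReal (X/2) := by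
      rw [← ENNReal.ofReal_add (by positivity) (by positivity)]; congr 1; ring
    rw [this] at hsplit
    exact (ENNReal.add_le_add_iff_right ENNReal.ofReal_ne_top).1 hsplit
  have hcov : E1 ⊆ ⋃ p : ℕ × ℤ, selE n E F β c (c*β*2^p.1) p.2 := by
    rintro z ⟨hzE, hz1, hz2⟩
    obtain ⟨i, ⟨j, hj⟩, hi⟩ := selection (tSet n F z) β c hβ0 hc hc4 hz1 hz2
    exact mem_iUnion.2 ⟨(i, j), hzE, hz1, hz2, hj, mem_iInter.2 hi⟩
  have h1 : ENNReal.ofReal c * ENNReal.ofReal (X/2) ≤ ∑' i : ℕ, ∑' j : ℤ, volume (selW n E F β c (c*β*2^i) j) := by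
    calc ENNReal.ofReal c * ENNReal.ofReal (X/2) ≤ ENNReal.ofReal c * ∫⁻ z in E1, volume (tSet n F z) := by gcongr
      _ = ∫⁻ z in E1, ENNReal.ofReal c * volume (tSet n F z) := by rw [lintegral_const_mul _ hτ]
      _ ≤ ∫⁻ z in ⋃ p : ℕ × ℤ, selE n E F β c (c*β*2^p.1) p.2, ENNReal.ofReal c * volume (tSet n F z) :=
          lintegral_mono_set hcov
      _ ≤ ∑' p : ℕ × ℤ, ∫⁻ z in selE n E F β c (c*β*2^p.1) p.2, ENNReal.ofReal c * volume (tSet n F z) :=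
          lintegral_iUnion_le _ _
      _ ≤ ∑' p : ℕ × ℤ, volume (selW n E F β c (c*β*2^p.1) p.2) :=
          ENNReal.tsum_le_tsum fun p => vol_selW n hE hF _ _ _ _
      _ = _ := ENNReal.tsum_prod (f := fun (i:ℕ) (j:ℤ) => volume (selW n E F β c (c*β*2^i) j))
  have hcpos : ENNReal.ofReal c ≠ 0 := (ENNReal.ofReal_pos.2 hc).ne'
  have h2 : ∀ i : ℕ, ∑' j : ℤ, volume (selW n E F β c (c*β*2^i) j) ≤
      ENNReal.ofReal (n * c' * (X + X/(2*c)) * x^i) := by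
    intro i
    have hsE : ∑' j : ℤ, volume (selE n E F β c (c*β*2^i) j) ≤ ENNReal.ofReal (e/c) := by
      have := sum_selE n hE hF β c (c*β*2^i) hβ0
      rw [ENNReal.tsum_mul_left, hEv] at this
      rw [ENNReal.ofReal_div_of_pos hc]
      rw [ENNReal.le_div_iff_mul_le (Or.inl hcpos) (Or.inl ENNReal.ofReal_ne_top), mul_comm]
      exact this
    calc ∑' j : ℤ, volume (selW n E F β c (c*β*2^i) j)
        ≤ ∑' j : ℤ, (n * (ENNReal.ofReal (c' * x^i * (X/f)) * volume (F ∩ Prod.fst ⁻¹' (gridJ (c*β*2^i) j)) +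
        ENNReal.ofReal (c' * x^i * β) * volume (selE n E F β c (c*β*2^i) j))) :=
          ENNReal.tsum_le_tsum fun j => hno i j
      _ = n * (ENNReal.ofReal (c' * x^i * (X/f)) * ENNReal.ofReal f + ENNReal.ofReal (c' * x^i * β) * ∑' j : ℤ, volume (selE n E F β c (c*β*2^i) j)) := by
          rw [ENNReal.tsum_mul_left, ENNReal.tsum_add, ENNReal.tsum_mul_left, ENNReal.tsum_mul_left, sum_F_grid n hF, hFv]
      _ ≤ n * (ENNReal.ofReal (c' * x^i * (X/f)) * ENNReal.ofReal f + ENNReal.ofReal (c' * x^i * β) * ENNReal.ofReal (e/c)) := by gcongr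
      _ = _ := by
          rw [← ENNReal.ofReal_mul (by positivity), ← ENNReal.ofReal_mul (by positivity),
            ← ENNReal.ofReal_add (by positivity) (by positivity), ← ENNReal.ofReal_natCast,
            ← ENNReal.ofReal_mul (by positivity)]
          congr 1
          rw [hβ]; field_simp
  have h3 := h1.trans (ENNReal.tsum_le_tsum h2)
  have hsm : Summable fun i : ℕ => x^i := summable_geometric_of_lt_one hx0.le hx1
  rw [← ENNReal.ofReal_tsum_of_nonneg (fun i => by positivity) (hsm.mul_left _), tsum_mul_left,
    tsum_geometric_of_lt_one hx0.le hx1, ← ENNReal.ofReal_mul hc.le, ENNReal.ofReal_le_ofReal_iff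
      (by have : 0 < 1 - x := by linarith
          positivity)] at h3
  have h4 : n * c' * (X + X/(2*c)) * (1-x)⁻¹ = c * X * (2*c+1)/8 := by
    have : 1 - x ≠ 0 := by linarith
    rw [hc']; field_simp; ring
  rw [h4] at h3
  nlinarith [mul_pos hc hX]


def bigN (n : ℕ) : ℕ := n + (n/2 + expE n)

lemma bigN_eq (n : ℕ) : 2 * bigN n = n * (n+1) := by
  have := expE_add n
  unfold bigN
  cases n with
  | zero => simp [expE]
  | succ n => simp only [Nat.add_sub_cancel] at this; nlinarith

lemma prod_even_odd (n : ℕ) (A B : ℝ) :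
    (∏ i ∈ Finset.range n, if Even i then A else B) = A ^ (n - n/2) * B ^ (n/2) := by
  induction n with
  | zero => simp
  | succ n ih =>
    rw [Finset.prod_range_succ, ih]
    rcases Nat.even_or_odd' n with ⟨r, hr | hr⟩
    · have h : Even n := ⟨r, by omega⟩
      have e1 : (n+1)/2 = n/2 := by omega
      have e2 : n + 1 - n/2 = (n - n/2) + 1 := by omega
      rw [if_pos h, e1, e2, pow_succ]; ring
    · have h : ¬ Even n := by rw [Nat.not_even_iff_odd]; exact ⟨r, hr⟩
      have e1 : (n+1)/2 = n/2 + 1 := by omega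
      have e2 : n + 1 - (n/2+1) = (n - n/2) := by omega
      rw [if_neg h, e1, e2, pow_succ]; ring

lemma tau_zero (n : ℕ) {E F : Set (Pt n)} (hF : MeasurableSet F) (h0 : volume F = 0) :
    ∫⁻ z in E, volume (tSet n F z) = 0 := by
  have hm := meas_incF n hF MeasurableSet.univ
  have h1 := vol_point n hm
  simp_rw [fibP_incF, inter_univ] at h1
  have h2 : volume (incF n F univ) = 0 := by
    rw [vol_line n hm]
    rw [lintegral_eq_zero_iff (measurable_volL n hm)]
    have : ∀ᵐ z : Pt n, z ∉ F := measure_eq_zero_iff_ae_notMem.1 h0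
    filter_upwards [this] with z hz
    have : fibL n (incF n F univ) z = ∅ := by
      ext s; simp [fibL, incF, hz]
    rw [this]; simp
  refine le_antisymm ?_ zero_le
  rw [← h2, h1]
  exact lintegral_mono' Measure.restrict_le_self le_rfl

theorem thmA (n : ℕ) (hn : 2 ≤ n) : ∃ C : ℝ, 0 < C ∧ ∀ E F : Set (Pt n), MeasurableSet E → MeasurableSet F →
    volume E < ⊤ → volume F < ⊤ → ∀ Lm : ℝ≥0∞, (∀ t, sliceVol n F t ≤ Lm) →
    ∫⁻ z in E, volume (tSet n F z) ≠ ⊤ →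
    (∫⁻ z in E, volume (tSet n F z)) ^ (n + bigN n) ≤
      ENNReal.ofReal C * Lm * volume F ^ n * volume E ^ (bigN n) := by
  set N := bigN n with hN
  have hNeq := bigN_eq n
  have hNpos : 0 < N := by rw [hN]; unfold bigN; omega
  have hNr : (0:ℝ) < N := by exact_mod_cast hNpos
  set x : ℝ := 1 - 1/(2*N) with hx
  have hN1 : (1:ℝ) ≤ N := by exact_mod_cast hNpos
  have hfrac : 1/(2*(N:ℝ)) ≤ 1/2 := by
    apply one_div_le_one_div_of_le <;> linarith
  have hfrac0 : 0 < 1/(2*(N:ℝ)) := by positivity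
  have hx0 : 0 < x := by rw [hx]; linarith
  have hx1 : x < 1 := by rw [hx]; linarith
  have hxN : 1 ≤ 2 * x ^ N := by
    have := one_add_mul_le_pow (a := -(1/(2*(N:ℝ)))) (by linarith) N
    have e : (1:ℝ) + N * -(1/(2*N)) = 1/2 := by field_simp; ring
    rw [e] at this
    have e2 : (1:ℝ) + -(1/(2*N)) = x := by rw [hx]; ring
    rw [e2] at this
    linarith
  set c : ℝ := 1/(8*(n+2)) with hc
  have hc0 : 0 < c := by positivity
  have hc4 : c ≤ 1/4 := by
    rw [hc]; apply one_div_le_one_div_of_le (by norm_num)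
    have : (0:ℝ) ≤ n := by positivity
    linarith
  set c' : ℝ := c^2*(1-x)/(4*n) with hc'
  have hnr : (0:ℝ) < n := by exact_mod_cast (by omega : 0 < n)
  have hc'0 : 0 < c' := by
    have : 0 < 1 - x := by linarith
    positivity
  set K : ℝ := (1/2) * (1/2)^(n - n/2) * (1/2)^(n/2) * (1/4)^(n/2) * (1/(4*((n:ℝ)+1)))^(expE n) * c'^N * c^(n-1) with hK
  have hK0 : 0 < K := by positivity
  set C0 : ℝ := Nat.factorial (n/2) * 5^n * Real.pi with hC0
  have hC00 : 0 < C0 := by positivity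
  refine ⟨C0 * 2^N / K, by positivity, ?_⟩
  intro E F hE hF hEt hFt Lm hL hXt
  by_cases hX0 : ∫⁻ z in E, volume (tSet n F z) = 0
  · rw [hX0, zero_pow (by omega)]; exact zero_le
  have hE0 : volume E ≠ 0 := by
    intro h; apply hX0; exact setLIntegral_measure_zero _ _ h
  have hF0 : volume F ≠ 0 := fun h => hX0 (tau_zero n hF h)
  obtain ⟨e, he0, hev⟩ : ∃ r : ℝ, 0 < r ∧ volume E = ENNReal.ofReal r :=
    ⟨_, ENNReal.toReal_pos hE0 hEt.ne, (ENNReal.ofReal_toReal hEt.ne).symm⟩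
  obtain ⟨f, hf0, hfv⟩ : ∃ r : ℝ, 0 < r ∧ volume F = ENNReal.ofReal r :=
    ⟨_, ENNReal.toReal_pos hF0 hFt.ne, (ENNReal.ofReal_toReal hFt.ne).symm⟩
  obtain ⟨X, hXp, hXv⟩ : ∃ r : ℝ, 0 < r ∧ ∫⁻ z in E, volume (tSet n F z) = ENNReal.ofReal r :=
    ⟨_, ENNReal.toReal_pos hX0 hXt, (ENNReal.ofReal_toReal hXt).symm⟩
  obtain ⟨i, j, hij⟩ := pigeon n (by omega) hE hF X e f c x hXp he0 hf0 hc0 hc4 hx0 hx1 hev hfv hXv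
  set β := X/(2*e) with hβ
  set α := X/f with hα
  have hβ0 : 0 < β := by positivity
  have hα0 : 0 < α := by positivity
  set a := c' * x^i * α with ha
  set b := c' * x^i * β with hb
  set R := c * β * 2^i with hR
  have ha0 : 0 < a := by positivity
  have hb0 : 0 < b := by positivity
  have hR0 : 0 < R := by positivity
  have hpath := path_from_set n hn a b R ((j+1/2)*R) ha0 hb0 hR0 (ENNReal.ofReal (β/2)) F hF Lm hL
    (selW n E F β c R j) (meas_selW n hE hF β c R j) (F ∩ Prod.fst ⁻¹' (gridJ R j)) (selE n E F β c R j)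
    (hF.inter (measurable_fst (meas_gridJ R j))) (meas_selE n hE hF β c R j)
    (fun w hw => hw.2) (fun w hw => hw.1) hij (fun z hz => gridJ_center hR0 hz.2)
    (by
      intro z hz p
      have hz1 : ENNReal.ofReal β ≤ volume (tSet n F z) := hz.2.1
      have hz2 : volume (tSet n F z) < ⊤ := hz.2.2.1
      have hz4 := mem_iInter.1 hz.2.2.2.2
      have hg := good_fibre n (tSet n F z) (R/2) (by positivity) hz2 (fun j' => (hz4 j').le) p
      have h1 := hz1.trans hg
      have e1 : tSet n F z ∩ {t' | ∀ j ≤ n+1, ¬ Even j → R/2 ≤ |p j - t'|} = {t' : ℝ | (t', z.2 - z.1 • mom n t') ∈ F ∧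
        ∀ j ≤ n+1, ¬ Even j → R/2 ≤ |p j - t'|} := by
        ext t'; simp [tSet]
      rw [e1] at h1
      rw [ENNReal.ofReal_div_of_pos (by norm_num)]
      rw [ENNReal.ofReal_ofNat]
      exact ENNReal.div_le_of_le_mul' h1)
  have hprod : (∏ k ∈ Finset.range n, if Even k then ENNReal.ofReal (a/2) else ENNReal.ofReal (b/2)) =
      ENNReal.ofReal ((a/2) ^ (n - n/2) * (b/2) ^ (n/2)) := by
    rw [← prod_even_odd, ENNReal.ofReal_prod_of_nonneg (fun k _ => by split_ifs <;> positivity)]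
    refine Finset.prod_congr rfl fun k _ => ?_
    split_ifs <;> rfl
  rw [hprod, ← ENNReal.ofReal_mul (by positivity), ← ENNReal.ofReal_mul (by positivity)] at hpath
  have hreal : K * (α^n * β^N) ≤ β/2 * ((a/2) ^ (n - n/2) * (b/2) ^ (n/2)) *
      ((a/4) ^ (n/2) * (b/(4*(n+1))) ^ (expE n) * R ^ (n-1)) := by
    set q := c' * x^i with hq
    have hq0 : 0 < q := by positivity
    have e1 : β/2 * ((a/2) ^ (n - n/2) * (b/2) ^ (n/2)) *
      ((a/4) ^ (n/2) * (b/(4*(n+1))) ^ (expE n) * R ^ (n-1)) =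
      ((1/2) * (1/2)^(n - n/2) * (1/2)^(n/2) * (1/4)^(n/2) * (1/(4*((n:ℝ)+1)))^(expE n)) *
        (β * (a^(n - n/2) * a^(n/2)) * (b^(n/2) * b^(expE n)) * R^(n-1)) := by
      simp only [div_eq_mul_inv, mul_pow, one_mul]
      ring
    have e2 : a^(n - n/2) * a^(n/2) = q^n * α^n := by
      rw [← pow_add, ← mul_pow]; congr 1; omega
    have e3 : b^(n/2) * b^(expE n) = q^(n/2 + expE n) * β^(n/2 + expE n) := by
      rw [← pow_add, ← mul_pow]
    have e4 : R^(n-1) = c^(n-1) * β^(n-1) * (2^i)^(n-1) := by rw [hR, mul_pow, mul_pow]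
    have e5 : β * β^(n/2 + expE n) * β^(n-1) = β^N := by
      rw [hN, bigN, ← pow_succ', ← pow_add]; congr 1; omega
    have e6 : q^n * q^(n/2 + expE n) = c'^N * (x^N)^i := by
      rw [← pow_add, hq, mul_pow, ← pow_mul x, ← pow_mul, mul_comm i]; rfl
    have e7 : 1 ≤ (x^N)^i * (2^i)^(n-1) := by
      calc (1:ℝ) ≤ (2 * x^N)^i := one_le_pow₀ hxN
        _ = (x^N)^i * 2^i := by rw [mul_pow]; ring
        _ ≤ _ := by
          gcongr
          refine le_self_pow₀ ?_ (by omega)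
          exact one_le_pow₀ (by norm_num)
    rw [e1, e2, e3, e4]
    have e8 : β * (q^n * α^n) * (q^(n/2 + expE n) * β^(n/2 + expE n)) * (c^(n-1) * β^(n-1) * (2^i)^(n-1))
        = c^(n-1) * c'^N * (α^n * β^N) * ((x^N)^i * (2^i)^(n-1)) := by
      rw [← e5]
      calc _ = c^(n-1) * (q^n * q^(n/2 + expE n)) * (α^n * (β * β^(n/2 + expE n) * β^(n-1))) * (2^i)^(n-1) := by ring
        _ = _ := by rw [e6]; ring
    rw [e8, hK]
    have hpp : 0 ≤ (1/2) * (1/2)^(n - n/2) * (1/2)^(n/2) * (1/4)^(n/2) * (1/(4*((n:ℝ)+1)))^(expE n) * (c^(n-1) * c'^N * (α^n * β^N)) := by positivity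
    calc _ = (1/2) * (1/2)^(n - n/2) * (1/2)^(n/2) * (1/4)^(n/2) * (1/(4*((n:ℝ)+1)))^(expE n) * (c^(n-1) * c'^N * (α^n * β^N)) * 1 := by ring
      _ ≤ (1/2) * (1/2)^(n - n/2) * (1/2)^(n/2) * (1/4)^(n/2) * (1/(4*((n:ℝ)+1)))^(expE n) * (c^(n-1) * c'^N * (α^n * β^N)) * ((x^N)^i * (2^i)^(n-1)) :=
        mul_le_mul_of_nonneg_left e7 hpp
      _ = _ := by ring
  have h1 : ENNReal.ofReal (K * (α^n * β^N)) ≤ ENNReal.ofReal C0 * Lm :=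
    (ENNReal.ofReal_le_ofReal hreal).trans hpath
  rw [hXv, hev, hfv]
  have e9 : X^(n+N) = (K * (α^n * β^N)) * (2^N/K * f^n * e^N) := by
    rw [hα, hβ, div_pow, div_pow, mul_pow, pow_add]
    field_simp
  calc ENNReal.ofReal X ^ (n+N) = ENNReal.ofReal (K * (α^n * β^N)) * ENNReal.ofReal (2^N/K * f^n * e^N) := by
        rw [← ENNReal.ofReal_pow hXp.le, e9, ENNReal.ofReal_mul (by positivity)]
    _ ≤ (ENNReal.ofReal C0 * Lm) * ENNReal.ofReal (2^N/K * f^n * e^N) := by gcongr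
    _ = _ := by
        have h1 : ENNReal.ofReal (2^N/K * f^n * e^N) = ENNReal.ofReal (2^N/K) * ENNReal.ofReal (f^n) * ENNReal.ofReal (e^N) := by
          rw [ENNReal.ofReal_mul (by positivity), ENNReal.ofReal_mul (by positivity)]
        have h2 : ENNReal.ofReal (C0*2^N/K) = ENNReal.ofReal C0 * ENNReal.ofReal (2^N/K) := by
          rw [mul_div_assoc, ENNReal.ofReal_mul hC00.le]
        rw [h1, h2, ENNReal.ofReal_pow hf0.le, ENNReal.ofReal_pow he0.le]
        ring


lemma two_zpow (k : ℤ) : (2:ℝ≥0∞)^k = ENNReal.ofReal ((2:ℝ)^k) := by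
  have h2 : ((2:NNReal) : ℝ≥0∞) = 2 := by simp
  rw [← h2, ← ENNReal.coe_zpow (by norm_num), ENNReal.ofReal, ENNReal.coe_inj]
  ext
  simp
  positivity

/-- two to a real power -/
def E2 (x : ℝ) : ℝ≥0∞ := ENNReal.ofReal ((2:ℝ) ^ x)

lemma E2_add (x y : ℝ) : E2 (x + y) = E2 x * E2 y := by
  unfold E2; rw [Real.rpow_add (by norm_num), ENNReal.ofReal_mul (by positivity)]

lemma E2_rpow (x r : ℝ) : E2 x ^ r = E2 (x * r) := by
  unfold E2
  rw [ENNReal.ofReal_rpow_of_pos (by positivity), ← Real.rpow_mul (by norm_num)]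

lemma E2_pow (x : ℝ) (m : ℕ) : E2 x ^ m = E2 (x * m) := by
  rw [← ENNReal.rpow_natCast, E2_rpow]

lemma E2_le (x y : ℝ) : E2 x ≤ E2 y ↔ x ≤ y := by
  unfold E2
  rw [ENNReal.ofReal_le_ofReal_iff (by positivity), Real.rpow_le_rpow_left_iff (by norm_num)]

lemma E2_int (k : ℤ) : (2:ℝ≥0∞)^k = E2 k := by
  rw [two_zpow, E2, Real.rpow_intCast]

lemma E2_ne_top (x : ℝ) : E2 x ≠ ⊤ := ENNReal.ofReal_ne_top
lemma E2_pos (x : ℝ) : 0 < E2 x := ENNReal.ofReal_pos.2 (by positivity)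

lemma exists_E2 {a : ℝ≥0∞} (h0 : a ≠ 0) (ht : a ≠ ⊤) : ∃ x, a = E2 x := by
  have : 0 < a.toReal := ENNReal.toReal_pos h0 ht
  refine ⟨Real.logb 2 a.toReal, ?_⟩
  unfold E2
  rw [Real.rpow_logb (by norm_num) (by norm_num) this, ENNReal.ofReal_toReal ht]

lemma exists_E2_real {a : ℝ} (h0 : 0 < a) : ∃ x, ENNReal.ofReal a = E2 x ∧ a = (2:ℝ)^x := by
  refine ⟨Real.logb 2 a, ?_, ?_⟩
  · unfold E2
    rw [Real.rpow_logb (by norm_num) (by norm_num) h0]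
  · rw [Real.rpow_logb (by norm_num) (by norm_num) h0]

lemma ofReal_ind (n : ℕ) (E : Set (Pt n)) (z : Pt n) :
    ENNReal.ofReal (ind n E z) = E.indicator (fun _ => (1:ℝ≥0∞)) z := by
  unfold ind
  by_cases h : z ∈ E <;> simp [h]

lemma meas_Xray_ind (n : ℕ) {E : Set (Pt n)} (hE : MeasurableSet E) :
    Measurable (Xray n (ind n E)) := by
  have hW : MeasurableSet ((fun w : Inc n => ((w.1, w.2.2 + w.1 • mom n w.2.1) : Pt n)) ⁻¹' E) :=
    meas_point n hE
  have h : Measurable (fun p : Pt n × ℝ => ENNReal.ofReal (ind n E (p.2, p.1.2 + p.2 • mom n p.1.1))) := by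
    have h1 : Measurable (fun p : Pt n × ℝ => ((p.2, p.1.2 + p.2 • mom n p.1.1) : Pt n)) :=
      (meas_point n).comp (g := fun w : Inc n => ((w.1, w.2.2 + w.1 • mom n w.2.1) : Pt n))
        (f := fun p : Pt n × ℝ => ((p.2, p.1.1, p.1.2) : Inc n)) (by fun_prop)
    have h2 : Measurable (ind n E) := measurable_const.indicator hE
    exact (h2.comp h1).ennreal_ofReal
  exact h.lintegral_prod_right'

lemma pairing_eq (n : ℕ) {E F : Set (Pt n)} (hE : MeasurableSet E) (hF : MeasurableSet F) :
    pairing n (ind n E) (ind n F) = ∫⁻ z in E, volume (tSet n F z) := by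
  set W : Set (Inc n) := (fun w : Inc n => ((w.1, w.2.2 + w.1 • mom n w.2.1) : Pt n)) ⁻¹' E ∩
    (fun w : Inc n => ((w.2.1, w.2.2) : Pt n)) ⁻¹' F with hWd
  have hW : MeasurableSet W := (meas_point n hE).inter (meas_line n hF)
  have h1 := vol_line n hW
  have h2 := vol_point n hW
  rw [h1] at h2
  rw [← lintegral_indicator hE]
  unfold pairing
  convert h2 using 1
  · refine lintegral_congr fun z => ?_
    rw [ofReal_ind]
    by_cases hz : z ∈ F
    · have : fibL n W z = {s | (s, z.2 + s • mom n z.1) ∈ E} := by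
        ext s; simp [fibL, W, hz]
      rw [indicator_of_mem hz, mul_one, this]
      unfold Xray
      have hm : MeasurableSet {s : ℝ | (s, z.2 + s • mom n z.1) ∈ E} := by
        have h1 : Measurable (fun s : ℝ => ((s, z.2 + s • mom n z.1) : Pt n)) := by fun_prop
        exact h1 hE
      rw [← lintegral_indicator_one hm]
      refine lintegral_congr fun s => ?_
      rw [ofReal_ind]
      by_cases hs : (s, z.2 + s • mom n z.1) ∈ E
      · rw [indicator_of_mem hs, indicator_of_mem (show s ∈ {s : ℝ | (s, z.2 + s • mom n z.1) ∈ E} from hs)]; rfl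
      · rw [indicator_of_notMem hs, indicator_of_notMem (show s ∉ {s : ℝ | (s, z.2 + s • mom n z.1) ∈ E} from hs)]
    · have : fibL n W z = ∅ := by
        ext s; simp [fibL, W, hz]
      rw [indicator_of_notMem hz, this]; simp
  · refine lintegral_congr fun z => ?_
    by_cases hz : z ∈ E
    · rw [indicator_of_mem hz]
      congr 1
      ext t; simp [fibP, W, hz, tSet]
    · rw [indicator_of_notMem hz]
      have : fibP n W z = ∅ := by
        ext s; simp [fibP, W, hz]
      rw [this]; simp

lemma thmB (n : ℕ) {E F : Set (Pt n)} (T : Set ℝ) (hT : ∀ z ∈ F, z.1 ∈ T) :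
    ∫⁻ z in E, volume (tSet n F z) ≤ volume E * volume T := by
  calc _ ≤ ∫⁻ z in E, volume T := lintegral_mono fun z => measure_mono fun t ht => hT _ ht
    _ = _ := by rw [setLIntegral_const, mul_comm]

lemma meas_lev (n : ℕ) {g : Pt n → ℝ} (hg : Measurable g) (k : ℤ) : MeasurableSet (lev n g k) :=
  (measurableSet_le measurable_const hg).inter (measurableSet_lt hg measurable_const)

lemma meas_sliceVol (n : ℕ) {F : Set (Pt n)} (hF : MeasurableSet F) : Measurable (sliceVol n F) :=
  measurable_measure_prodMk_left hF

/-- the set of `t` belonging to the piece `(k,l)` -/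
def Tkl (n : ℕ) (g : Pt n → ℝ) (k l : ℤ) : Set ℝ :=
  {t | (2:ℝ≥0∞) ^ l ≤ sliceVol n (lev n g k) t ∧ sliceVol n (lev n g k) t < (2:ℝ≥0∞) ^ (l + 1)}

lemma meas_Tkl (n : ℕ) {g : Pt n → ℝ} (hg : Measurable g) (k l : ℤ) : MeasurableSet (Tkl n g k l) :=
  (measurableSet_le measurable_const (meas_sliceVol n (meas_lev n hg k))).inter
    (measurableSet_lt (meas_sliceVol n (meas_lev n hg k)) measurable_const)

lemma Fkl_eq (n : ℕ) (g : Pt n → ℝ) (k l : ℤ) :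
    Fkl n g k l = lev n g k ∩ Prod.fst ⁻¹' (Tkl n g k l) := rfl

lemma meas_Fkl (n : ℕ) {g : Pt n → ℝ} (hg : Measurable g) (k l : ℤ) : MeasurableSet (Fkl n g k l) := by
  rw [Fkl_eq]; exact (meas_lev n hg k).inter (measurable_fst (meas_Tkl n hg k l))

lemma slice_Fkl (n : ℕ) (g : Pt n → ℝ) (k l : ℤ) (t : ℝ) :
    sliceVol n (Fkl n g k l) t = (Tkl n g k l).indicator (sliceVol n (lev n g k)) t := by
  by_cases ht : t ∈ Tkl n g k l
  · rw [indicator_of_mem ht, Fkl_eq]; simp [sliceVol, ht]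
  · rw [indicator_of_notMem ht, Fkl_eq]; simp [sliceVol, ht]

lemma slice_Fkl_le (n : ℕ) (g : Pt n → ℝ) (k l : ℤ) (t : ℝ) :
    sliceVol n (Fkl n g k l) t ≤ (2:ℝ≥0∞) ^ (l+1) := by
  rw [slice_Fkl]
  refine indicator_le' (s := Tkl n g k l) (g := fun _ => (2:ℝ≥0∞)^(l+1)) ?_ ?_ t
  · exact fun t ht => ht.2.le
  · exact fun t _ => zero_le

lemma vol_Fkl_le (n : ℕ) {g : Pt n → ℝ} (hg : Measurable g) (k l : ℤ) :
    volume (Fkl n g k l) ≤ (2:ℝ≥0∞) ^ (l+1) * volume (Tkl n g k l) := by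
  rw [Measure.volume_eq_prod, Measure.prod_apply (meas_Fkl n hg k l)]
  calc _ = ∫⁻ t, sliceVol n (Fkl n g k l) t := rfl
    _ ≤ ∫⁻ t, (Tkl n g k l).indicator (fun _ => (2:ℝ≥0∞)^(l+1)) t := by
        refine lintegral_mono fun t => ?_
        rw [slice_Fkl]
        exact indicator_le_indicator' (fun ht => ht.2.le)
    _ = _ := by rw [lintegral_indicator_const (meas_Tkl n hg k l)]

lemma mixed_pow (n : ℕ) (Q R : ℝ) (hQ : 0 < Q) (g : Pt n → ℝ) (hg0 : 0 ≤ g) :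
    mixedNormR n Q R g ^ Q = ∫⁻ t, (∫⁻ y, ENNReal.ofReal (g (t,y)) ^ R) ^ (Q/R) := by
  unfold mixedNormR mixedNorm mixedNormG
  rw [← ENNReal.rpow_mul, one_div, inv_mul_cancel₀ hQ.ne', ENNReal.rpow_one]
  refine lintegral_congr fun t => ?_
  congr 1
  refine lintegral_congr fun y => ?_
  show ENNReal.ofReal |g (t,y)| ^ R = _
  rw [abs_of_nonneg (hg0 _)]

lemma ind_nonneg (n : ℕ) (E : Set (Pt n)) : 0 ≤ ind n E := by
  intro z; unfold ind; exact indicator_nonneg (fun _ _ => by norm_num) z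

lemma mixed_ind (n : ℕ) (Q R : ℝ) (hQ : 0 < Q) (hR : 0 < R) {F : Set (Pt n)} (hF : MeasurableSet F) :
    mixedNormR n Q R (ind n F) ^ Q = ∫⁻ t, (sliceVol n F t) ^ (Q/R) := by
  rw [mixed_pow n Q R hQ _ (ind_nonneg n F)]
  refine lintegral_congr fun t => ?_
  congr 1
  unfold sliceVol
  have hm : MeasurableSet {y : Fin n → ℝ | (t, y) ∈ F} := measurable_prodMk_left hF
  rw [← lintegral_indicator_one hm]
  refine lintegral_congr fun y => ?_
  rw [ofReal_ind]
  by_cases h : (t,y) ∈ F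
  · rw [indicator_of_mem h, indicator_of_mem (show y ∈ {y : Fin n → ℝ | (t, y) ∈ F} from h)]; simp
  · rw [indicator_of_notMem h, indicator_of_notMem (show y ∉ {y : Fin n → ℝ | (t, y) ∈ F} from h)]
    exact ENNReal.zero_rpow_of_pos hR

lemma norm_Fkl_upper (n : ℕ) (Q R : ℝ) (hQ : 0 < Q) (hR : 0 < R) {g : Pt n → ℝ} (hg : Measurable g) (k l : ℤ) :
    mixedNormR n Q R (ind n (Fkl n g k l)) ^ Q ≤ ((2:ℝ≥0∞)^(l+1))^(Q/R) * volume (Tkl n g k l) := by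
  rw [mixed_ind n Q R hQ hR (meas_Fkl n hg k l), ← lintegral_indicator_const (meas_Tkl n hg k l)]
  refine lintegral_mono fun t => ?_
  rw [slice_Fkl]
  by_cases ht : t ∈ Tkl n g k l
  · rw [indicator_of_mem ht, indicator_of_mem ht]
    exact ENNReal.rpow_le_rpow ht.2.le (by positivity)
  · rw [indicator_of_notMem ht, indicator_of_notMem ht, ENNReal.zero_rpow_of_pos (by positivity)]

lemma norm_Fkl_lower (n : ℕ) (Q R : ℝ) (hQ : 0 < Q) (hR : 0 < R) {g : Pt n → ℝ} (hg : Measurable g) (k l : ℤ) :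
    ((2:ℝ≥0∞)^l)^(Q/R) * volume (Tkl n g k l) ≤ mixedNormR n Q R (ind n (Fkl n g k l)) ^ Q := by
  rw [mixed_ind n Q R hQ hR (meas_Fkl n hg k l), ← lintegral_indicator_const (meas_Tkl n hg k l)]
  refine lintegral_mono fun t => ?_
  rw [slice_Fkl]
  by_cases ht : t ∈ Tkl n g k l
  · rw [indicator_of_mem ht, indicator_of_mem ht]
    exact ENNReal.rpow_le_rpow ht.1 (by positivity)
  · rw [indicator_of_notMem ht, indicator_of_notMem ht]; exact zero_le

lemma inner_lower (n : ℕ) (R : ℝ) (hR : 0 < R) {g : Pt n → ℝ} (hg : Measurable g) (k : ℤ) (t : ℝ) :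
    ((2:ℝ≥0∞)^k)^R * sliceVol n (lev n g k) t ≤ ∫⁻ y, ENNReal.ofReal (g (t,y)) ^ R := by
  have hm : MeasurableSet {y : Fin n → ℝ | (t, y) ∈ lev n g k} := measurable_prodMk_left (meas_lev n hg k)
  unfold sliceVol
  rw [← lintegral_indicator_const hm]
  refine lintegral_mono fun y => ?_
  refine indicator_le' (s := {y : Fin n → ℝ | (t, y) ∈ lev n g k}) (f := fun _ => ((2:ℝ≥0∞)^k)^R) (g := fun y => ENNReal.ofReal (g (t,y)) ^ R) ?_ ?_ y
  · intro y hy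
    refine ENNReal.rpow_le_rpow ?_ hR.le
    rw [two_zpow]
    exact ENNReal.ofReal_le_ofReal hy.1
  · exact fun t _ => zero_le


lemma sum1 (a : ℝ) (ha : 0 < a) : ∃ C : ℝ≥0∞, C ≠ ⊤ ∧ ∀ c : ℝ, ∑' k : ℤ, E2 (-|a * k - c|) ≤ C := by
  have hs : Summable (fun k : ℤ => (2:ℝ) ^ (-(a * |(k:ℝ)|))) := by
    have hnat : Summable (fun k : ℕ => (2:ℝ) ^ (-(a * (k:ℝ)))) := by
      have : (fun k : ℕ => (2:ℝ) ^ (-(a * (k:ℝ)))) = fun k : ℕ => ((2:ℝ)^(-a))^k := by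
        ext k; rw [← Real.rpow_natCast, ← Real.rpow_mul (by norm_num)]; ring_nf
      rw [this]
      refine summable_geometric_of_lt_one (by positivity) ?_
      exact Real.rpow_lt_one_of_one_lt_of_neg (by norm_num) (by linarith)
    refine Summable.of_nat_of_neg ?_ ?_
    · simpa using hnat
    · simpa using hnat
  refine ⟨E2 a * ∑' k : ℤ, E2 (-(a * |(k:ℝ)|)), ?_, fun c => ?_⟩
  · refine ENNReal.mul_ne_top (E2_ne_top _) ?_
    unfold E2
    exact hs.tsum_ofReal_ne_top
  · rw [← (Equiv.addRight ⌊c/a⌋).tsum_eq, ← ENNReal.tsum_mul_left]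
    refine ENNReal.tsum_le_tsum fun k => ?_
    rw [← E2_add, E2_le]
    simp only [Equiv.coe_addRight, Int.cast_add]
    have h1 := Int.floor_le (c/a)
    have h2 := Int.lt_floor_add_one (c/a)
    rw [le_div_iff₀ ha] at h1
    rw [div_lt_iff₀ ha] at h2
    have h3 : a * |(k:ℝ)| = |a * k| := by rw [abs_mul, abs_of_pos ha]
    rw [h3]
    have h4 : |a * k| ≤ |a * (k + ⌊c/a⌋) - c| + |c - a * ⌊c/a⌋| := by
      refine le_trans (le_of_eq ?_) (abs_add_le _ _); congr 1; ring
    have h5 : |c - a * ⌊c/a⌋| ≤ a := by rw [abs_le]; constructor <;> nlinarith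
    linarith

lemma sum2 (R u s ε ε0 : ℝ) (hR : 0 < R) (hu : 0 < u) (hε : 0 < ε) (hε0 : 0 < ε0) :
    ∃ C : ℝ≥0∞, C ≠ ⊤ ∧ ∀ β ν : ℝ, ∑' k : ℤ, ∑' l : ℤ,
      E2 (-(ε0 * |k * R + l + β|) - ε * |u * l + s * (k * R + l) + ν|) ≤ C := by
  obtain ⟨C1, hC1, h1⟩ := sum1 (ε * (u * R)) (by positivity)
  obtain ⟨C2, hC2, h2⟩ := sum1 ε0 hε0
  refine ⟨E2 (ε0 + ε * |u + s|) * (C2 * C1), ENNReal.mul_ne_top (E2_ne_top _) (ENNReal.mul_ne_top hC2 hC1), fun β ν => ?_⟩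
  have hsh : ∀ k : ℤ, ∑' l : ℤ, E2 (-(ε0 * |k * R + l + β|) - ε * |u * l + s * (k * R + l) + ν|)
      = ∑' m : ℤ, E2 (-(ε0 * |k * R + ((m - ⌊k*R⌋ : ℤ):ℝ) + β|) - ε * |u * ((m - ⌊k*R⌋ : ℤ):ℝ) + s * (k * R + ((m - ⌊k*R⌋ : ℤ):ℝ)) + ν|) := by
    intro k
    exact ((Equiv.subRight ⌊k*R⌋).tsum_eq (fun l : ℤ => E2 (-(ε0 * |k * R + l + β|) - ε * |u * l + s * (k * R + l) + ν|))).symm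
  simp_rw [hsh]
  rw [ENNReal.tsum_comm]
  calc _ ≤ ∑' m : ℤ, ∑' k : ℤ, E2 (ε0 + ε * |u + s|) * (E2 (-|ε0 * m - (-ε0 * β)|) * E2 (-|ε * (u * R) * k - (ε * ((u+s) * m + ν))|)) := by
        refine ENNReal.tsum_le_tsum fun m => ENNReal.tsum_le_tsum fun k => ?_
        rw [← E2_add, ← E2_add, E2_le]
        push_cast
        set f : ℝ := k * R - ⌊k*R⌋ with hf
        have f0 : 0 ≤ f := by have := Int.floor_le ((k:ℝ)*R); linarith
        have f1 : f ≤ 1 := by have := Int.lt_floor_add_one ((k:ℝ)*R); linarith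
        have e1 : |ε0 * m - (-ε0 * β)| = ε0 * |(m:ℝ) + β| := by
          rw [← abs_of_pos hε0, ← abs_mul, abs_of_pos hε0]; congr 1; ring
        have e2 : |ε * (u * R) * k - (ε * ((u+s) * m + ν))| = ε * |u * R * k - ((u+s) * m + ν)| := by
          rw [← abs_of_pos hε, ← abs_mul, abs_of_pos hε]; congr 1; ring
        have e3 : k * R + (m - ⌊k*R⌋) + β = ((m:ℝ) + β) + f := by rw [hf]; ring
        have e4 : u * (m - ⌊k*R⌋) + s * (k * R + (m - ⌊k*R⌋)) + ν = -(u * R * k - ((u+s) * m + ν)) + (u+s) * f := by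
          rw [hf]; ring
        rw [e1, e2, e3, e4]
        have i1 : |(m:ℝ) + β| ≤ |(m:ℝ) + β + f| + 1 := by
          have := abs_add_le ((m:ℝ) + β + f) (-f)
          rw [abs_neg, abs_of_nonneg f0] at this
          have h : (m:ℝ) + β + f + -f = m + β := by ring
          rw [h] at this; linarith
        have i2 : |u * R * k - ((u+s) * m + ν)| ≤ |-(u * R * k - ((u+s) * m + ν)) + (u+s) * f| + |u + s| := by
          have := abs_add_le (-(u * R * k - ((u+s) * m + ν)) + (u+s) * f) (-((u+s) * f))
          rw [abs_neg ((u+s)*f), abs_mul, abs_of_nonneg f0] at this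
          have h : -(u * R * k - ((u+s) * m + ν)) + (u+s) * f + -((u+s) * f) = -(u * R * k - ((u+s) * m + ν)) := by ring
          rw [h, abs_neg] at this
          have : |u+s| * f ≤ |u + s| := mul_le_of_le_one_right (abs_nonneg _) f1
          linarith
        have j1 := mul_le_mul_of_nonneg_left i1 hε0.le
        have j2 := mul_le_mul_of_nonneg_left i2 hε.le
        linarith
    _ = E2 (ε0 + ε * |u + s|) * ∑' m : ℤ, (E2 (-|ε0 * m - (-ε0 * β)|) * ∑' k : ℤ, E2 (-|ε * (u * R) * k - (ε * ((u+s) * m + ν))|)) := by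
        simp_rw [ENNReal.tsum_mul_left]
    _ ≤ E2 (ε0 + ε * |u + s|) * ∑' m : ℤ, (E2 (-|ε0 * m - (-ε0 * β)|) * C1) := by
        gcongr with m
        exact h1 _
    _ ≤ _ := by
        rw [ENNReal.tsum_mul_right]
        gcongr
        exact h2 _

/-- The per-piece estimate in logarithmic form. -/
lemma piece_log (θ u w Q R κ P c1 ε : ℝ) (hu : 0 < u) (hw0 : 0 < w) (hw1 : w < 1)
    (hQ : 0 < Q) (hR : 0 < R) (hκ : κ = Q / R) (hQe : 1 / Q = 1 - θ * (1 - w)) (hRe : 1 / R = θ * u)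
    (hP : P = 1 - θ * w) (hc1 : 0 ≤ c1) (hε : 0 < ε) (hε1 : ε ≤ θ) (hε2 : θ + ε ≤ 1) :
    ∃ c : ℝ, ∀ k l X e t H D G a : ℝ, D ≤ 0 → 
      X ≤ e + t → X ≤ c1 + u * (l+1) + w * t + (1 - w) * e →
      H + Q * G ≤ k * Q + (l+1) * κ + t → k * Q + l * κ + t ≤ 1 + H + Q * G →
      X ≤ 1 + D + e * P + ((l+1) * κ + t) * (1 / Q) →
      k * R + l ≤ 1 + a → (a - 1) * κ + t ≤ Q * G →
      k + X ≤ c + D * (1/2) + H * (1 / (2 * Q)) + e * P + G + 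
        (-((1 / (2 * R)) * |k * R + l + -a|) - 
          (ε/2) * |u * l + ((1-w)*κ) * (k * R + l) + (-(1-w) * (H + Q * G) - w * e)|) := by
  have hκ0 : 0 < κ := by rw [hκ]; positivity
  have hκQ : κ * (1/Q) = 1/R := by rw [hκ]; field_simp
  have hκR : κ * R = Q := by rw [hκ]; field_simp
  refine ⟨1 + 1/Q + 1/R + c1 + u + 2/R + (ε/2) * ((1-w)*(1+κ)) + 1, ?_⟩
  intro k l X e t H D G a hD h1 h2 h3 h4 h5 h6 h7
  set q := 1/Q with hq
  set ρ := 1/R with hρ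
  have hq0 : 0 < q := by positivity
  have hρ0 : 0 < ρ := by positivity
  have hqQ : q * Q = 1 := by rw [hq]; field_simp
  have e2Q : 1/(2*Q) = q/2 := by rw [hq]; field_simp
  have e2R : 1/(2*R) = ρ/2 := by rw [hρ]; field_simp
  rw [e2Q, e2R]
  -- scale of the norm of a piece
  have A1 : k + l * ρ + t * q ≤ q + H * q + G := by
    have := mul_le_mul_of_nonneg_right h4 hq0.le
    have e : (k * Q + l * κ + t) * q = k * (q*Q) + l * (κ*q) + t * q := by ring
    have e' : (1 + H + Q*G) * q = q + H*q + (q*Q)*G := by ring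
    rw [e, e', hqQ, hκQ] at this
    linarith
  have A2 : k + X ≤ 1 + D + e * P + ρ + q + H * q + G := by
    have : ((l+1)*κ + t)*q = l * (κ*q) + κ*q + t*q := by ring
    rw [this, hκQ] at h5
    linarith
  set V0 := u * l + (w-1)*t - w * e with hV0
  have hbase : e + t + θ * V0 = e * P + t * q + l * ρ := by
    rw [hP, hQe, hRe, hV0]; ring
  have B : ∀ φ : ℝ, 0 ≤ φ → φ ≤ 1 → X ≤ e + t + φ * V0 + c1 + u := by
    intro φ h0 h1'
    have i1 := mul_le_mul_of_nonneg_left h1 (sub_nonneg.2 h1')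
    have i2 := mul_le_mul_of_nonneg_left h2 h0
    have i3 : φ * (c1 + u) ≤ c1 + u := mul_le_of_le_one_left (by linarith) h1'
    have : (1-φ)*(e+t) + φ*(c1 + u*(l+1) + w*t + (1-w)*e) = e + t + φ*V0 + φ*(c1+u) := by
      rw [hV0]; ring
    linarith
  have B1 : X ≤ e * P + t * q + l * ρ - ε * |V0| + c1 + u := by
    rcases le_total 0 V0 with h | h
    · have := B (θ - ε) (by linarith) (by linarith)
      rw [abs_of_nonneg h]; linarith
    · have := B (θ + ε) (by linarith) (by linarith)
      rw [abs_of_nonpos h]; linarith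
  set V := u * l + ((1-w)*κ) * (k * R + l) + (-(1-w) * (H + Q * G) - w * e) with hV
  have hVV : |V| ≤ |V0| + (1-w)*(1+κ) := by
    have e1 : V = V0 + (1-w) * (t - (H + Q*G - k*Q - l*κ)) := by
      rw [hV, hV0, ← hκR]; ring
    rw [e1]
    refine (abs_add_le _ _).trans ?_
    rw [abs_mul, abs_of_pos (show 0 < 1 - w by linarith)]
    have : |t - (H + Q*G - k*Q - l*κ)| ≤ 1 + κ := by
      rw [abs_le]; constructor <;> linarith
    have := mul_le_mul_of_nonneg_left this (show 0 ≤ 1 - w by linarith)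
    linarith
  set Y := k * R + l + -a with hY
  have hHY : H ≤ κ * (Y + 2) := by
    have : κ * (Y+2) = k * (κ*R) + (l+1)*κ - (a-1)*κ := by rw [hY]; ring
    rw [this, hκR]; linarith
  have hHq : H * q ≤ ρ * (Y+2) := by
    have := mul_le_mul_of_nonneg_right hHY hq0.le
    rw [← hκQ]; linarith
  have hYa : Y ≤ 2 - |Y| := by
    have hY1 : Y ≤ 1 := by rw [hY]; linarith
    rcases le_total 0 Y with h | h
    · rw [abs_of_nonneg h]; linarith
    · rw [abs_of_nonpos h]; linarith
  have hYr := mul_le_mul_of_nonneg_left hYa hρ0.le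
  have hVr := mul_le_mul_of_nonneg_left hVV (show 0 ≤ ε/2 by linarith)
  have e2 : (2:ℝ)/R = 2 * ρ := by rw [hρ]; ring
  rw [e2]
  linarith


lemma pairing_null (n : ℕ) (E : Set (Pt n)) {F : Set (Pt n)} (hF : volume F = 0) :
    pairing n (ind n E) (ind n F) = 0 := by
  unfold pairing
  have h : ∀ᵐ z : Pt n, z ∉ F := measure_eq_zero_iff_ae_notMem.1 hF
  rw [lintegral_congr_ae (g := fun _ => 0)]
  · simp
  · filter_upwards [h] with z hz
    rw [ofReal_ind, indicator_of_notMem hz, mul_zero]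

lemma cover_ae (n : ℕ) (R : ℝ) (hR : 0 < R) {g : Pt n → ℝ} (hg : Measurable g)
    (hfin : ∀ᵐ t : ℝ, (∫⁻ y, ENNReal.ofReal (g (t,y)) ^ R) < ⊤) :
    ∀ᵐ z : Pt n, 0 < g z → ∃ k l : ℤ, z ∈ Fkl n g k l := by
  have hN : ∀ k : ℤ, ∀ᵐ z : Pt n, z ∉ lev n g k ∩ Prod.fst ⁻¹' {t | sliceVol n (lev n g k) t = 0 ∨ sliceVol n (lev n g k) t = ⊤} := by
    intro k
    have hs := meas_sliceVol n (meas_lev n hg k)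
    have hm : MeasurableSet {t | sliceVol n (lev n g k) t = 0 ∨ sliceVol n (lev n g k) t = ⊤} :=
      (measurableSet_eq_fun hs measurable_const).union (measurableSet_eq_fun hs measurable_const)
    rw [← measure_eq_zero_iff_ae_notMem, Measure.volume_eq_prod,
      Measure.measure_prod_null ((meas_lev n hg k).inter (measurable_fst hm))]
    filter_upwards [hfin] with t ht
    have hlt : sliceVol n (lev n g k) t ≠ ⊤ := by
      intro h
      have := inner_lower n R hR hg k t
      rw [h, ENNReal.mul_top] at this
      · exact absurd (this.trans_lt ht) (lt_irrefl _)
      · rw [E2_int, E2_rpow]; exact (E2_pos _).ne'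
    by_cases h : sliceVol n (lev n g k) t = 0
    · refine measure_mono_null ?_ h
      intro y hy; exact hy.1
    · refine measure_mono_null (t := ∅) ?_ measure_empty
      rintro y ⟨_, hy | hy⟩
      · exact absurd hy h
      · exact absurd hy hlt
  filter_upwards [ae_all_iff.2 hN] with z hz hgz
  obtain ⟨k, hk⟩ := exists_mem_Ico_zpow hgz (show (1:ℝ) < 2 by norm_num)
  have hzk : z ∈ lev n g k := hk
  have h := hz k
  have h' : ¬ (sliceVol n (lev n g k) z.1 = 0 ∨ sliceVol n (lev n g k) z.1 = ⊤) := fun hc => h ⟨hzk, hc⟩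
  push Not at h'
  obtain ⟨l, hl⟩ := ENNReal.exists_mem_Ico_zpow h'.1 h'.2 (show (1:ℝ≥0∞) < 2 by norm_num) (by norm_num)
  exact ⟨k, l, hzk, hl⟩

lemma pairing_le_sum (n : ℕ) (R : ℝ) (hR : 0 < R) {E : Set (Pt n)} (hE : MeasurableSet E) {g : Pt n → ℝ} (hg : Measurable g)
    (hfin : ∀ᵐ t : ℝ, (∫⁻ y, ENNReal.ofReal (g (t,y)) ^ R) < ⊤) :
    pairing n (ind n E) g ≤ ∑' k : ℤ, ∑' l : ℤ, (2:ℝ≥0∞)^(k+1) * pairing n (ind n E) (ind n (Fkl n g k l)) := by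
  have hX := meas_Xray_ind n hE
  have hmeas : ∀ k l : ℤ, Measurable (fun z => Xray n (ind n E) z * ENNReal.ofReal (ind n (Fkl n g k l) z)) := by
    intro k l
    exact hX.mul (measurable_const.indicator (meas_Fkl n hg k l)).ennreal_ofReal
  calc pairing n (ind n E) g ≤ ∫⁻ z, ∑' k : ℤ, ∑' l : ℤ, (2:ℝ≥0∞)^(k+1) * (Xray n (ind n E) z * ENNReal.ofReal (ind n (Fkl n g k l) z)) := by
        unfold pairing
        refine lintegral_mono_ae ?_
        filter_upwards [cover_ae n R hR hg hfin] with z hz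
        by_cases h0 : 0 < g z
        · obtain ⟨k, l, hkl⟩ := hz h0
          refine le_trans ?_ (ENNReal.le_tsum k)
          refine le_trans ?_ (ENNReal.le_tsum l)
          rw [ofReal_ind, indicator_of_mem hkl, mul_one, mul_comm, two_zpow]
          gcongr
          exact hkl.1.2.le
        · rw [ENNReal.ofReal_of_nonpos (not_lt.1 h0), mul_zero]; exact zero_le
    _ = _ := by
        rw [lintegral_tsum fun k => (Measurable.ennreal_tsum fun l => (hmeas k l).const_mul _).aemeasurable]
        refine tsum_congr fun k => ?_
        rw [lintegral_tsum fun l => ((hmeas k l).const_mul _).aemeasurable]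
        refine tsum_congr fun l => ?_
        rw [lintegral_const_mul _ (hmeas k l)]
        rfl


lemma exps (d : ℕ) (hd : 3 ≤ d) (θ : ℝ) (hθ0 : 0 < θ) (hθ2 : θ < 1) (u w : ℝ)
    (hu : u = 2 * d / ((d-1)*(d+2))) (hw : w = 2 / (d+2)) :
    0 < u ∧ 0 < w ∧ w < 1 ∧ 0 < dualExp (qExp d θ) ∧ 0 < dualExp (rExp d θ) ∧
    1 / dualExp (qExp d θ) = 1 - θ * (1 - w) ∧ 1 / dualExp (rExp d θ) = θ * u ∧
    1 / pExp d θ = 1 - θ * w := by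
  have hd' : (3:ℝ) ≤ d := by exact_mod_cast hd
  have hu0 : 0 < u := by rw [hu]; apply div_pos (by positivity); apply _root_.mul_pos <;> linarith
  have hw0 : 0 < w := by rw [hw]; positivity
  have hw1 : w < 1 := by rw [hw, div_lt_one (by positivity)]; linarith
  have h1w : (d:ℝ)/(d+2) = 1 - w := by rw [hw]; field_simp; ring
  have hdual : ∀ x : ℝ, 0 < x → x < 1 → 1 / dualExp (x⁻¹) = 1 - x := by
    intro x hx0 hx1
    unfold dualExp
    have : 1 - x ≠ 0 := by linarith
    have h2 : x⁻¹ - 1 ≠ 0 := by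
      have := (one_lt_inv₀ hx0).2 hx1
      linarith
    field_simp
  have hq0 : 0 < θ * (1-w) := _root_.mul_pos hθ0 (by linarith)
  have hq1 : θ * (1-w) < 1 := by nlinarith
  have hq : qExp d θ = (θ * (1-w))⁻¹ := by unfold qExp; rw [mul_div_assoc, h1w]
  have hden : (d:ℝ)^2 + d - 2 = (d-1)*(d+2) := by ring
  have hdpos : 0 < ((d:ℝ)-1)*(d+2) := by apply _root_.mul_pos <;> linarith
  have hr : rExp d θ = (1 - θ * u)⁻¹ := by
    unfold rExp
    rw [hden, mul_div_assoc]
    have : ((d:ℝ)^2 - d - 2)/((d-1)*(d+2)) = 1 - u := by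
      rw [hu, eq_sub_iff_add_eq, ← add_div, div_eq_one_iff_eq hdpos.ne']; ring
    rw [this]; congr 1; ring
  have hu1 : u < 1 := by
    rw [hu, div_lt_one hdpos]; nlinarith
  have hr0 : 0 < θ * u := _root_.mul_pos hθ0 hu0
  have hr1 : θ * u < 1 := by nlinarith
  have EQ : 1 / dualExp (qExp d θ) = 1 - θ * (1 - w) := by rw [hq]; exact hdual _ hq0 hq1
  have ER : 1 / dualExp (rExp d θ) = θ * u := by
    rw [hr, hdual _ (by linarith) (by linarith)]; ring
  refine ⟨hu0, hw0, hw1, ?_, ?_, EQ, ER, ?_⟩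
  · rw [← one_div_pos, EQ]; linarith
  · rw [← one_div_pos, ER]; exact hr0
  · unfold pExp
    rw [one_div, inv_inv, mul_div_assoc, h1w]; ring

set_option maxHeartbeats 1000000 in
theorem main_aux (d : ℕ) (hd : 3 ≤ d) (θ : ℝ)
    (hθ0 : 0 < θ) (hθ2 : θ < 1) :
    ∃ (C c : ℝ), 1 ≤ C ∧ 0 < c ∧ c ≤ 1 ∧
      ∀ η δ δ₁ : ℝ, η ∈ Set.Ioc (0:ℝ) 1 → δ ∈ Set.Ioc (0:ℝ) 1 →
        δ₁ ∈ Set.Ioc (0:ℝ) 1 →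
      ∀ E : Set (Pt (d-1)), MeasurableSet E → 0 < volume E → volume E < ⊤ →
      ∀ g : Pt (d-1) → ℝ, Measurable g → 0 ≤ g → dualNorm d θ g ≠ ⊤ →
      ∀ (A : ℝ) (T : Set ℝ), 0 < A →
        (∀ᵐ t : ℝ, t ∈ T →
          ENNReal.ofReal (A/2) ≤
              (∫⁻ y, ENNReal.ofReal (g (t, y)) ^ dualExp (rExp d θ)) ∧
            (∫⁻ y, ENNReal.ofReal (g (t, y)) ^ dualExp (rExp d θ)) ≤
              ENNReal.ofReal (2*A)) →
        (∀ᵐ t : ℝ, t ∉ T →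
          (∫⁻ y, ENNReal.ofReal (g (t, y)) ^ dualExp (rExp d θ)) = 0) →
      (∀ k l : ℤ, 0 < volume (Fkl (d-1) g k l) →
        (ENNReal.ofReal η * dualNorm d θ g ^ dualExp (qExp d θ) ≤
            ((2:ℝ≥0∞) ^ k) ^ dualExp (qExp d θ) *
              dualNorm d θ (ind (d-1) (Fkl (d-1) g k l)) ^ dualExp (qExp d θ) ∧
          ((2:ℝ≥0∞) ^ k) ^ dualExp (qExp d θ) *
              dualNorm d θ (ind (d-1) (Fkl (d-1) g k l)) ^ dualExp (qExp d θ) <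
            ENNReal.ofReal (2*η) * dualNorm d θ g ^ dualExp (qExp d θ)) ∧
        (ENNReal.ofReal δ₁ * volume E ^ (1 / pExp d θ) *
              dualNorm d θ (ind (d-1) (Fkl (d-1) g k l)) ≤
            pairing (d-1) (ind (d-1) E) (ind (d-1) (Fkl (d-1) g k l)) ∧
          pairing (d-1) (ind (d-1) E) (ind (d-1) (Fkl (d-1) g k l)) <
            ENNReal.ofReal (2*δ₁) * volume E ^ (1 / pExp d θ) *
              dualNorm d θ (ind (d-1) (Fkl (d-1) g k l)))) →
      pairing (d-1) (ind (d-1) E) g ≤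
        ENNReal.ofReal (C * (η * δ₁) ^ c * Real.log (1 + δ ^ (-C))) *
          volume E ^ (1 / pExp d θ) * dualNorm d θ g := by
  obtain ⟨u, hu⟩ : ∃ u : ℝ, u = 2 * d / ((d-1)*(d+2)) := ⟨_, rfl⟩
  obtain ⟨w, hw⟩ : ∃ w : ℝ, w = 2 / (d+2) := ⟨_, rfl⟩
  obtain ⟨hu0, hw0, hw1, hQ0, hR0, hQe, hRe, hPe⟩ := exps d hd θ hθ0 hθ2 u w hu hw
  unfold dualNorm
  have hd' : (3:ℝ) ≤ d := by exact_mod_cast hd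
  set n := d - 1 with hn
  have hnr : (n:ℝ) = d - 1 := by rw [hn, Nat.cast_sub (by omega)]; simp
  set Q := dualExp (qExp d θ) with hQ
  set R := dualExp (rExp d θ) with hR
  set P := 1 / pExp d θ with hP
  clear_value Q R P
  obtain ⟨CA, hCA, hA⟩ := thmA n (by omega)
  obtain ⟨cA, hcA, -⟩ := exists_E2_real hCA
  set N := bigN n with hN
  have hN2 : (N:ℝ) = n * (n+1) / 2 := by
    have := bigN_eq n
    have : (2:ℝ) * (bigN n : ℝ) = n * (n+1) := by exact_mod_cast this
    rw [hN]; linarith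
  have hnN : (0:ℝ) < n + N := by rw [hN2, hnr]; nlinarith
  have hnN1 : (1:ℝ) ≤ n + N := by rw [hN2, hnr]; nlinarith
  have hN2' : (n:ℝ) + N = (d-1)*(d+2)/2 := by rw [hN2, hnr]; ring
  have eu : ((n:ℝ) + N) * u = n + 1 := by
    rw [hN2', hu, hnr]; have : (d:ℝ) - 1 ≠ 0 := by linarith
    field_simp; ring
  have ew : ((n:ℝ) + N) * w = n := by
    rw [hN2', hw, hnr]; field_simp
  obtain ⟨ε, hε⟩ : ∃ ε : ℝ, ε = min θ (1 - θ) := ⟨_, rfl⟩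
  have hε0 : 0 < ε := by rw [hε]; exact lt_min hθ0 (by linarith)
  have hε1 : ε ≤ θ := by rw [hε]; exact min_le_left _ _
  have hε2 : θ + ε ≤ 1 := by have : ε ≤ 1 - θ := by { rw [hε]; exact min_le_right _ _ }
                             linarith
  obtain ⟨c0, hpiece⟩ := piece_log θ u w Q R (Q/R) P (max cA 0) ε hu0 hw0 hw1 hQ0 hR0 rfl hQe hRe hPe
    (le_max_right _ _) hε0 hε1 hε2
  obtain ⟨CS, hCS, hsum⟩ := sum2 R u ((1-w)*(Q/R)) (ε/2) (1/(2*R)) hR0 hu0 (by linarith) (by positivity)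
  obtain ⟨K, hK⟩ : ∃ K : ℝ, K = (E2 (1 + c0) * CS).toReal := ⟨_, rfl⟩
  have hKe : E2 (1+c0) * CS = ENNReal.ofReal K := by
    rw [hK, ENNReal.ofReal_toReal (ENNReal.mul_ne_top (E2_ne_top _) hCS)]
  have hK0 : 0 ≤ K := by rw [hK]; exact ENNReal.toReal_nonneg
  have hQ1 : 1 / Q ≤ 1 := by rw [hQe]; nlinarith
  have hc2 : 1 / (2*Q) = (1/Q)/2 := by field_simp
  have hQi : 0 < 1 / Q := by positivity
  refine ⟨max 1 (2*K), 1/(2*Q), le_max_left _ _, by positivity, by rw [hc2]; linarith, ?_⟩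
  intro η δ δ₁ hη hδ hδ₁ E hE hE0 hEt g hg hg0 hgt A T hA0 hT1 hT2 hyp
  -- elementary logarithms
  obtain ⟨H, hH, hH'⟩ := exists_E2_real hη.1
  obtain ⟨D, hD, hD'⟩ := exists_E2_real hδ₁.1
  obtain ⟨a, ha, -⟩ := exists_E2_real hA0
  obtain ⟨e, he⟩ := exists_E2 hE0.ne' hEt.ne
  have e2 : ENNReal.ofReal 2 = E2 1 := by unfold E2; rw [Real.rpow_one]
  have e1 : E2 0 = 1 := by unfold E2; simp
  have hD0 : D ≤ 0 := by
    rw [← E2_le, ← hD, e1, ← ENNReal.ofReal_one]; exact ENNReal.ofReal_le_ofReal hδ₁.2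
  have h2η : ENNReal.ofReal (2*η) = E2 (1 + H) := by
    rw [ENNReal.ofReal_mul (by norm_num), e2, hH, E2_add]
  have h2δ : ENNReal.ofReal (2*δ₁) = E2 (1 + D) := by
    rw [ENNReal.ofReal_mul (by norm_num), e2, hD, E2_add]
  have h2A : ENNReal.ofReal (2*A) = E2 (1 + a) := by
    rw [ENNReal.ofReal_mul (by norm_num), e2, ha, E2_add]
  have hA2 : ENNReal.ofReal (A/2) = E2 (a - 1) := by
    have : A/2 = A * (2:ℝ)^(-1:ℝ) := by rw [Real.rpow_neg_one]; ring
    rw [this, ENNReal.ofReal_mul hA0.le, ha, sub_eq_add_neg, E2_add]; rfl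
  have hinn : ∀ᵐ t : ℝ, (∫⁻ y, ENNReal.ofReal (g (t, y)) ^ R) ≤ E2 (1 + a) ∧
      ((∫⁻ y, ENNReal.ofReal (g (t, y)) ^ R) ≠ 0 → E2 (a - 1) ≤ ∫⁻ y, ENNReal.ofReal (g (t, y)) ^ R) := by
    filter_upwards [hT1, hT2] with t h1 h2
    by_cases ht : t ∈ T
    · rw [← h2A, ← hA2]; exact ⟨(h1 ht).2, fun _ => (h1 ht).1⟩
    · rw [h2 ht]; exact ⟨zero_le, fun h => absurd rfl h⟩
  have hdec := pairing_le_sum n R hR0 hE hg (by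
    filter_upwards [hinn] with t ht
    exact ht.1.trans_lt (E2_ne_top _).lt_top)
  by_cases hG0 : mixedNormR n Q R g = 0
  · have hz : ∀ k l, pairing n (ind n E) (ind n (Fkl n g k l)) = 0 := by
      intro k l
      refine pairing_null n E ?_
      by_contra h
      have := (hyp k l (pos_iff_ne_zero.2 h)).1.2
      rw [hG0, ENNReal.zero_rpow_of_pos hQ0, mul_zero] at this
      exact absurd this (not_lt.2 zero_le)
    refine hdec.trans ?_
    simp [hz]
  obtain ⟨G, hG⟩ := exists_E2 hG0 hgt
  rw [hG, he]
  set ν := (-(1-w) * (H + Q * G) - w * e) with hν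
  have hpc : ∀ k l : ℤ, (2:ℝ≥0∞)^(k+1) * pairing n (ind n E) (ind n (Fkl n g k l)) ≤
      E2 (1 + c0) * E2 ((D + H) * (1/(2*Q)) + e * P + G) *
        E2 (-((1/(2*R)) * |k * R + l + -a|) - (ε/2) * |u * l + ((1-w)*(Q/R)) * (k * R + l) + ν|) := by
    intro k l
    by_cases h0 : volume (Fkl n g k l) = 0
    · rw [pairing_null n E h0, mul_zero]; exact zero_le
    obtain ⟨⟨y1, y2⟩, y3, y4⟩ := hyp k l (pos_iff_ne_zero.2 h0)
    have z1 := norm_Fkl_upper n Q R hQ0 hR0 hg k l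
    have z2 := norm_Fkl_lower n Q R hQ0 hR0 hg k l
    have hτ0 : volume (Tkl n g k l) ≠ 0 := by
      intro h
      have := vol_Fkl_le n hg k l
      rw [h, mul_zero] at this
      exact h0 (le_antisymm this zero_le)
    rw [hH, hG, E2_rpow, ← E2_add, E2_int, E2_rpow] at y1
    rw [h2η, hG, E2_rpow, ← E2_add, E2_int, E2_rpow] at y2
    rw [E2_int, E2_rpow] at z1 z2
    have hτt : volume (Tkl n g k l) ≠ ⊤ := by
      intro h
      rw [h, ENNReal.mul_top (E2_pos _).ne', top_le_iff] at z2
      rw [z2, ENNReal.mul_top (E2_pos _).ne'] at y2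
      exact absurd y2 (not_lt.2 le_top)
    obtain ⟨t, ht⟩ := exists_E2 hτ0 hτt
    rw [ht, ← E2_add] at z1 z2
    have w3 : E2 (H + G * Q) ≤ E2 (k * Q + (((l+1:ℤ):ℝ) * (Q/R) + t)) := by
      rw [E2_add (k*Q)]; exact y1.trans (by gcongr)
    have w4 : E2 (k * Q + (l * (Q/R) + t)) ≤ E2 (1 + H + G * Q) := by
      rw [E2_add (k*Q)]; exact (by gcongr : _ ≤ _).trans y2.le
    rw [E2_le] at w3 w4
    have hnu : mixedNormR n Q R (ind n (Fkl n g k l)) ≤ E2 ((((l+1:ℤ):ℝ) * (Q/R) + t) * (1/Q)) := by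
      have := ENNReal.rpow_le_rpow z1 hQi.le
      rwa [← ENNReal.rpow_mul, mul_one_div_cancel hQ0.ne', ENNReal.rpow_one, E2_rpow] at this
    have hnl : mixedNormR n Q R (ind n (Fkl n g k l)) ≠ 0 := by
      intro h
      rw [h, ENNReal.zero_rpow_of_pos hQ0] at z2
      exact absurd z2 (not_le.2 (E2_pos _))
    rw [h2δ, he, E2_rpow, ← E2_add] at y4
    rw [hD, he, E2_rpow, ← E2_add] at y3
    have hx0 : pairing n (ind n E) (ind n (Fkl n g k l)) ≠ 0 := by
      intro h
      rw [h, le_zero_iff, mul_eq_zero] at y3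
      rcases y3 with h | h
      · exact (E2_pos _).ne' h
      · exact hnl h
    obtain ⟨X, hX⟩ := exists_E2 hx0 (ne_top_of_lt y4)
    have w5 : X ≤ 1 + D + e * P + ((((l+1:ℤ):ℝ) * (Q/R) + t) * (1/Q)) := by
      rw [← E2_le, ← hX, E2_add _ ((((l+1:ℤ):ℝ) * (Q/R) + t) * (1/Q))]
      exact y4.le.trans (by gcongr)
    have hXp := hX
    rw [pairing_eq n hE (meas_Fkl n hg k l)] at hXp
    have w1 : X ≤ e + t := by
      have := thmB n (E := E) (F := Fkl n g k l) (Tkl n g k l) (fun z hz => hz.2)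
      rwa [hXp, he, ht, ← E2_add, E2_le] at this
    have hvF : volume (Fkl n g k l) ≤ E2 (((l+1:ℤ):ℝ) + t) := by
      have := vol_Fkl_le n hg k l
      rwa [ht, E2_int, ← E2_add] at this
    have w2 : X ≤ max cA 0 + u * (l+1) + w * t + (1-w) * e := by
      have := hA E (Fkl n g k l) hE (meas_Fkl n hg k l) hEt (hvF.trans_lt (E2_ne_top _).lt_top)
        ((2:ℝ≥0∞)^(l+1)) (slice_Fkl_le n g k l) (by rw [hXp]; exact E2_ne_top _)
      have h2 : E2 (X * ((n + N : ℕ):ℝ)) ≤ E2 (cA + ((l+1:ℤ):ℝ) + (((l+1:ℤ):ℝ) + t) * n + e * N) := by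
        rw [← E2_pow, ← hXp, E2_add, E2_add, E2_add, ← E2_pow, ← E2_pow, ← he, ← hcA, ← E2_int]
        refine this.trans ?_
        gcongr
      rw [E2_le] at h2
      push_cast at h2
      have h3 : (max cA 0 + u * (l+1) + w * t + (1-w) * e) * ((n:ℝ)+N)
          = max cA 0 * (n+N) + (((n:ℝ)+N)*u) * (l+1) + (((n:ℝ)+N)*w) * t + ((n:ℝ)+N - ((n:ℝ)+N)*w) * e := by ring
      rw [eu, ew] at h3
      have h4 : cA ≤ max cA 0 * (n+N) := by
        have : max cA 0 * 1 ≤ max cA 0 * ((n:ℝ)+N) := mul_le_mul_of_nonneg_left hnN1 (le_max_right _ _)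
        have := le_max_left cA 0
        linarith
      refine le_of_mul_le_mul_right ?_ hnN
      rw [h3]; linarith
    have hex : ∃ s ∈ Tkl n g k l, (∫⁻ y, ENNReal.ofReal (g (s, y)) ^ R) ≤ E2 (1 + a) := by
      by_contra hno
      push Not at hno
      refine hτ0 (measure_mono_null ?_ (ae_iff.1 hinn))
      intro s hs hs2
      exact absurd hs2.1 (not_le.2 (hno s hs))
    have w6 : (k:ℝ) * R + l ≤ 1 + a := by
      obtain ⟨s, hs, hs2⟩ := hex
      have := inner_lower n R hR0 hg k s
      rw [← E2_le, E2_add]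
      refine le_trans ?_ (this.trans hs2)
      rw [E2_int, E2_rpow, ← E2_int l]
      gcongr
      exact hs.1
    have w7 : (a - 1) * (Q/R) + t ≤ Q * G := by
      have hgp := mixed_pow n Q R hQ0 g hg0
      rw [hG, E2_rpow] at hgp
      rw [← E2_le, mul_comm Q, hgp, E2_add, ← ht, ← lintegral_indicator_const (meas_Tkl n hg k l)]
      refine lintegral_mono_ae ?_
      filter_upwards [hinn] with s hs
      by_cases hsT : s ∈ Tkl n g k l
      · rw [indicator_of_mem hsT, ← E2_rpow]
        refine ENNReal.rpow_le_rpow (hs.2 ?_) (by positivity)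
        have := inner_lower n R hR0 hg k s
        refine (lt_of_lt_of_le ?_ this).ne'
        rw [E2_int, E2_rpow]
        refine ENNReal.mul_pos (E2_pos _).ne' ?_
        have h1 := hsT.1
        rw [E2_int] at h1
        exact ((E2_pos _).trans_le h1).ne'
      · rw [indicator_of_notMem hsT]; exact zero_le
    push_cast at w3 w5
    have hfin := hpiece k l X e t H D G a hD0 w1 w2 (by linarith) (by linarith) (by linarith) w6 w7
    rw [hX, E2_int, ← E2_add, ← E2_add, ← E2_add, E2_le]
    push_cast
    have hDD : D * (1/2) ≤ D * (1/(2*Q)) := by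
      exact mul_le_mul_of_nonpos_left (by rw [hc2]; linarith only [hQ1]) hD0
    have : (D + H) * (1/(2*Q)) = D * (1/(2*Q)) + H * (1/(2*Q)) := by ring
    rw [this]
    linarith only [hfin, hDD]
  have hlog : 1/2 ≤ Real.log (1 + δ ^ (-(max 1 (2*K)))) := by
    have h1 : (1:ℝ) ≤ δ ^ (-(max 1 (2*K))) :=
      Real.one_le_rpow_of_pos_of_le_one_of_nonpos hδ.1 hδ.2 (by have := le_max_left 1 (2*K); linarith)
    have h2 : Real.log 2 ≤ Real.log (1 + δ ^ (-(max 1 (2*K)))) :=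
      Real.log_le_log (by norm_num) (by linarith)
    have := Real.log_two_gt_d9
    linarith
  calc pairing n (ind n E) g ≤ _ := hdec
    _ ≤ ∑' k : ℤ, ∑' l : ℤ, E2 (1 + c0) * E2 ((D + H) * (1/(2*Q)) + e * P + G) *
        E2 (-((1/(2*R)) * |k * R + l + -a|) - (ε/2) * |u * l + ((1-w)*(Q/R)) * (k * R + l) + ν|) :=
        ENNReal.tsum_le_tsum fun k => ENNReal.tsum_le_tsum fun l => hpc k l
    _ = E2 (1 + c0) * E2 ((D + H) * (1/(2*Q)) + e * P + G) * ∑' k : ℤ, ∑' l : ℤ, 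
        E2 (-((1/(2*R)) * |k * R + l + -a|) - (ε/2) * |u * l + ((1-w)*(Q/R)) * (k * R + l) + ν|) := by
        simp_rw [ENNReal.tsum_mul_left]
    _ ≤ E2 (1 + c0) * E2 ((D + H) * (1/(2*Q)) + e * P + G) * CS := by
        gcongr; exact hsum _ _
    _ = ENNReal.ofReal K * E2 ((D + H) * (1/(2*Q))) * E2 e ^ P * E2 G := by
        rw [← hKe, E2_add _ G, E2_add _ (e * P), E2_rpow]; ring
    _ ≤ _ := by
        gcongr
        unfold E2
        rw [← ENNReal.ofReal_mul hK0]
        refine ENNReal.ofReal_le_ofReal ?_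
        have hh : (2:ℝ) ^ ((D+H) * (1/(2*Q))) = (η * δ₁) ^ (1/(2*Q)) := by
          rw [Real.rpow_mul (by norm_num), Real.rpow_add (by norm_num), ← hH', ← hD', mul_comm]
        rw [hh]
        have hp : 0 ≤ (η * δ₁) ^ (1/(2*Q)) := Real.rpow_nonneg (mul_nonneg hη.1.le hδ₁.1.le) _
        have hm := le_max_right 1 (2*K)
        calc K * (η * δ₁) ^ (1/(2*Q)) = (2*K) * (η * δ₁) ^ (1/(2*Q)) * (1/2) := by ring
          _ ≤ _ := by gcongr

/-- interaction of a set with a function whose dyadic pieces all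
have comparable small norm and act with comparable strength. -/
theorem set_weak_interaction (d : ℕ) (hd : 3 ≤ d) (θ : ℝ)
    (hθ1 : theta0 d < θ) (hθ2 : θ < 1) :
    ∃ (C c : ℝ), 1 ≤ C ∧ 0 < c ∧ c ≤ 1 ∧
      ∀ η δ δ₁ : ℝ, η ∈ Set.Ioc (0:ℝ) 1 → δ ∈ Set.Ioc (0:ℝ) 1 →
        δ₁ ∈ Set.Ioc (0:ℝ) 1 →
      ∀ E : Set (Pt (d-1)), MeasurableSet E → 0 < volume E → volume E < ⊤ →
      ∀ g : Pt (d-1) → ℝ, Measurable g → 0 ≤ g → dualNorm d θ g ≠ ⊤ →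
      ∀ (A : ℝ) (T : Set ℝ), 0 < A →
        (∀ᵐ t : ℝ, t ∈ T →
          ENNReal.ofReal (A/2) ≤
              (∫⁻ y, ENNReal.ofReal (g (t, y)) ^ dualExp (rExp d θ)) ∧
            (∫⁻ y, ENNReal.ofReal (g (t, y)) ^ dualExp (rExp d θ)) ≤
              ENNReal.ofReal (2*A)) →
        (∀ᵐ t : ℝ, t ∉ T →
          (∫⁻ y, ENNReal.ofReal (g (t, y)) ^ dualExp (rExp d θ)) = 0) →
      (∀ k l : ℤ, 0 < volume (Fkl (d-1) g k l) →
        (ENNReal.ofReal η * dualNorm d θ g ^ dualExp (qExp d θ) ≤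
            ((2:ℝ≥0∞) ^ k) ^ dualExp (qExp d θ) *
              dualNorm d θ (ind (d-1) (Fkl (d-1) g k l)) ^ dualExp (qExp d θ) ∧
          ((2:ℝ≥0∞) ^ k) ^ dualExp (qExp d θ) *
              dualNorm d θ (ind (d-1) (Fkl (d-1) g k l)) ^ dualExp (qExp d θ) <
            ENNReal.ofReal (2*η) * dualNorm d θ g ^ dualExp (qExp d θ)) ∧
        (ENNReal.ofReal δ₁ * volume E ^ (1 / pExp d θ) *
              dualNorm d θ (ind (d-1) (Fkl (d-1) g k l)) ≤
            pairing (d-1) (ind (d-1) E) (ind (d-1) (Fkl (d-1) g k l)) ∧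
          pairing (d-1) (ind (d-1) E) (ind (d-1) (Fkl (d-1) g k l)) <
            ENNReal.ofReal (2*δ₁) * volume E ^ (1 / pExp d θ) *
              dualNorm d θ (ind (d-1) (Fkl (d-1) g k l)))) →
      ENNReal.ofReal δ * volume E ^ (1 / pExp d θ) * dualNorm d θ g ≤
        pairing (d-1) (ind (d-1) E) g →
      pairing (d-1) (ind (d-1) E) g ≤
        ENNReal.ofReal (C * (η * δ₁) ^ c * Real.log (1 + δ ^ (-C))) *
          volume E ^ (1 / pExp d θ) * dualNorm d θ g := by
  have hd' : (3:ℝ) ≤ d := by exact_mod_cast hd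
  have hθ0 : 0 < θ := by
    refine lt_trans ?_ hθ1
    unfold theta0
    apply div_pos <;> nlinarith
  obtain ⟨C, c, h1, h2, h3, h⟩ := main_aux d hd θ hθ0 hθ2
  refine ⟨C, c, h1, h2, h3, ?_⟩
  intro η δ δ₁ hη hδ hδ₁ E hE hE0 hEt g hg hg0 hgt A T hA hT1 hT2 hyp _
  exact h η δ δ₁ hη hδ hδ₁ E hE hE0 hEt g hg hg0 hgt A T hA hT1 hT2 hyp

end
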